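/- arXiv:2212.05455 — 4 statements merged into one kernel-verified Lean document; each statement's English description precedes it below -/
import Mathlib

section
/- Let k ≥ 1 be an integer and let G be a connected graph of order n ≥ 2k + 12. If the spectral radius satisfies ρ(G) ≥ ρ(K₁ ∨ (K_{n−k−2} + (k+1)K₁)), then G has a spanning tree with leaf degree at most k, unless G is isomorphic to K₁ ∨ (K_{n−k−2} + (k+1)K₁). -/
open Finset
open scoped Classical

/-- The adjacency matrix of a simple graph over ℝ. -/
noncomputable def adjMat {V : Type*} [Fintype V] (G : SimpleGraph V) :
    Matrix V V ℝ := fun i j => if G.Adj i j then 1 else 0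

/-- The spectral radius of a graph: the largest (real) eigenvalue of its
adjacency matrix. -/
noncomputable def specRad {V : Type*} [Fintype V] (G : SimpleGraph V) : ℝ :=
  sSup {μ : ℝ | Module.End.HasEigenvalue (Matrix.mulVecLin (adjMat G)) μ}

/-- The signless Laplacian matrix `Q = D + A` of a simple graph. -/
noncomputable def qMat {V : Type*} [Fintype V] (G : SimpleGraph V) :
    Matrix V V ℝ := fun i j =>
  (if i = j then ((univ.filter fun u => G.Adj i u).card : ℝ) else 0) +
    (if G.Adj i j then 1 else 0)

/-- The signless Laplacian spectral radius of a graph: the largest (real)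
eigenvalue of `Q = D + A`. -/
noncomputable def qRad {V : Type*} [Fintype V] (G : SimpleGraph V) : ℝ :=
  sSup {μ : ℝ | Module.End.HasEigenvalue (Matrix.mulVecLin (qMat G)) μ}

/-- `G` has a spanning `k`-ended-tree: a spanning tree with at most `k`
leaves (vertices of degree 1 in the tree). -/
noncomputable def HasSpanningKEndedTree {V : Type*} [Fintype V]
    (G : SimpleGraph V) (k : ℕ) : Prop :=
  ∃ T : SimpleGraph V, T ≤ G ∧ T.IsTree ∧
    (univ.filter fun v => T.degree v = 1).card ≤ k

/-- `G` has a spanning tree with leaf degree at most `k`: every vertex of the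
tree is adjacent (in the tree) to at most `k` leaves of the tree. -/
noncomputable def HasSpanningTreeLeafDegLE {V : Type*} [Fintype V]
    (G : SimpleGraph V) (k : ℕ) : Prop :=
  ∃ T : SimpleGraph V, T ≤ G ∧ T.IsTree ∧
    ∀ v, (univ.filter fun u => T.Adj v u ∧ T.degree u = 1).card ≤ k

/-- The graph `K₁ ∨ (K_{n-k-1} + kK₁)` on `n` vertices: vertex `0` is joined to
everything, vertices `0, …, n-k-1` form a clique `K_{n-k}`, and the last `k`
vertices are only adjacent to vertex `0`. -/
def oneJoinCliquePlusIso (n k : ℕ) : SimpleGraph (Fin n) :=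
  SimpleGraph.fromRel fun i j => i.val = 0 ∨ (i.val < n - k ∧ j.val < n - k)

/-- The graph `K₁ ∨ (K_{n-k-2} + (k+1)K₁)` on `n` vertices: vertex `0` is joined
to everything, vertices `0, …, n-k-2` form a clique `K_{n-k-1}`, and the last
`k+1` vertices are only adjacent to vertex `0`. -/
def oneJoinCliquePlusIso' (n k : ℕ) : SimpleGraph (Fin n) :=
  SimpleGraph.fromRel fun i j =>
    i.val = 0 ∨ (i.val < n - (k + 1) ∧ j.val < n - (k + 1))

/-!
By a theorem of Kaneko, a connected graph `G` has a spanning tree of leaf degree at most `k` as soon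
as `G - S` has fewer than `(k + 1)|S|` isolated vertices for every nonempty `S`. Indeed, in a
connected spanning subgraph that is minimal with this property, the deletion of any edge of a cycle
is blocked by a set `S` close to violating the inequality; uncrossing these sets shows that there
are no cycles, and in a tree the sets `S = {v}` give the bound on the leaf degree.

If the condition fails for `S`, let `I` consist of `(k + 1)|S|` isolated vertices of `G - S`. When
`|S| = 1`, the graph `G` is a spanning subgraph of the extremal graph `H`, and deleting edges of a
connected graph strictly decreases the spectral radius. When `|S| ≥ 2`, a positive vector constant
on `S`, on `I` and on the rest shows `ρ(G) ≤ n - k - 2`, while `ρ(H) > n - k - 2` because `H`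
properly contains a clique on `n - k - 1` vertices.
-/

section Surplus

variable {V : Type*} {G : SimpleGraph V} {k : ℕ}

theorem forall_of_adj_closed (hG : G.Preconnected) {p : V → Prop} {a : V} (ha : p a)
    (hp : ∀ u v, p u → G.Adj u v → p v) (b : V) : p b := by
  obtain ⟨w⟩ := hG a b
  induction w with
  | nil => exact ha
  | cons hadj _ ih => exact ih (hp _ _ ha hadj)

variable [Fintype V] {S T : Finset V}

/-- The set of vertices all of whose neighbours lie in `S`. Vertices of `S` itself are allowed,
so the isolated vertices of `G - S` are those of `enclosed G S \ S`. -/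
noncomputable def enclosed (G : SimpleGraph V) (S : Finset V) : Finset V :=
  univ.filter fun v => ∀ u, G.Adj v u → u ∈ S

/-- The slack `(k + 1)|S| - 1 - |enclosed G S|` in the condition
`|enclosed G S| < (k + 1)|S|`. -/
noncomputable def surplus (G : SimpleGraph V) (k : ℕ) (S : Finset V) : ℤ :=
  (k + 1) * #S - 1 - #(enclosed G S)

/-- Kaneko's condition for a spanning tree of leaf degree at most `k`, with `enclosed G S` in
place of the set of isolated vertices of `G - S`. -/
def SurplusNonneg (G : SimpleGraph V) (k : ℕ) : Prop :=
  ∀ ⦃S : Finset V⦄, S.Nonempty → 0 ≤ surplus G k S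

theorem mem_enclosed {v : V} : v ∈ enclosed G S ↔ ∀ u, G.Adj v u → u ∈ S := by
  simp [enclosed]

theorem surplus_sdiff_le {B C : Finset V} (hB : B ⊆ S)
    (hC : ∀ u ∈ enclosed G S, ∀ b ∈ B, G.Adj u b → u ∈ C) :
    surplus G k (S \ B) ≤ surplus G k S - (k + 1) * #B + #C := by
  have hsub : enclosed G S ⊆ enclosed G (S \ B) ∪ C := fun u hu => by
    by_cases huC : u ∈ C
    · exact mem_union_right _ huC
    · exact mem_union_left _ <| mem_enclosed.2 fun v huv =>
        mem_sdiff.2 ⟨mem_enclosed.1 hu v huv, fun hv => huC (hC u hu v hv huv)⟩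
  have hcard : (#(enclosed G S) : ℤ) ≤ #(enclosed G (S \ B)) + #C := by
    exact_mod_cast (card_le_card hsub).trans (card_union_le _ _)
  have hS : (#S : ℤ) = #(S \ B) + #B := by exact_mod_cast (card_sdiff_add_card_eq_card hB).symm
  simp only [surplus, hS]
  linarith

theorem surplus_sdiff_enclosed_add_le (S T : Finset V) :
    surplus G k (T \ enclosed G S) + surplus G k (S \ enclosed G T) ≤
      surplus G k S + surplus G k T - k * (#(T ∩ enclosed G S) + #(S ∩ enclosed G T)) := by
  have key (S T : Finset V) : surplus G k (T \ enclosed G S) ≤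
      surplus G k T - (k + 1) * #(T ∩ enclosed G S) + #(S ∩ enclosed G T) := by
    rw [← sdiff_inter_self_left]
    exact surplus_sdiff_le inter_subset_left fun u hu b hb hub =>
      mem_inter.2 ⟨mem_enclosed.1 (mem_inter.1 hb).2 u hub.symm, hu⟩
  linarith [key S T, key T S]

theorem surplus_union_add_surplus_inter_le (S T : Finset V) :
    surplus G k (S ∪ T) + surplus G k (S ∩ T) +
        #(enclosed G (S ∪ T) \ (enclosed G S ∪ enclosed G T)) ≤
      surplus G k S + surplus G k T := by
  have hunion : enclosed G S ∪ enclosed G T ⊆ enclosed G (S ∪ T) := fun v hv =>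
    mem_enclosed.2 fun u hvu => (mem_union.1 hv).elim
      (fun h => mem_union_left _ (mem_enclosed.1 h u hvu))
      (fun h => mem_union_right _ (mem_enclosed.1 h u hvu))
  have hinter : enclosed G S ∩ enclosed G T ⊆ enclosed G (S ∩ T) := fun v hv =>
    mem_enclosed.2 fun u hvu => mem_inter.2
      ⟨mem_enclosed.1 (mem_inter.1 hv).1 u hvu, mem_enclosed.1 (mem_inter.1 hv).2 u hvu⟩
  have hcard := card_union_add_card_inter S T
  have hcard_enclosed := card_union_add_card_inter (enclosed G S) (enclosed G T)
  have hcard_inter := card_le_card hinter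
  have hcard_sdiff := card_sdiff_add_card_eq_card hunion
  zify at hcard hcard_enclosed hcard_inter hcard_sdiff
  simp only [surplus]
  linear_combination hcard_inter + (k + 1 : ℤ) * hcard - hcard_enclosed + hcard_sdiff

theorem exists_disjoint_enclosed_of_surplus_neg (hG : G.Connected) (hk : 1 ≤ k)
    (hS : S.Nonempty) (hneg : surplus G k S < 0) :
    ∃ T : Finset V, T.Nonempty ∧ surplus G k T < 0 ∧ Disjoint T (enclosed G T) := by
  obtain ⟨T, hTmem, hmin⟩ := exists_min_image
    (univ.filter fun T : Finset V => T.Nonempty ∧ surplus G k T < 0) card ⟨S, by simp [hS, hneg]⟩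
  obtain ⟨-, hT, hTneg⟩ := mem_filter.1 hTmem
  refine ⟨T, hT, hTneg, ?_⟩
  by_contra hdis
  have hpos : 0 < #(T ∩ enclosed G T) :=
    card_pos.2 <| nonempty_iff_ne_empty.2 fun h => hdis (disjoint_iff_inter_eq_empty.2 h)
  have hcross := surplus_sdiff_enclosed_add_le (G := G) (k := k) T T
  rcases (T \ enclosed G T).eq_empty_or_nonempty with hempty | hne
  · have hclosed : T ⊆ enclosed G T := sdiff_eq_empty_iff_subset.1 hempty
    obtain ⟨a, ha⟩ := hT
    have hTuniv : ∀ v, v ∈ T := forall_of_adj_closed hG.preconnected ha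
      fun u v hu huv => mem_enclosed.1 (hclosed hu) v huv
    have hle : (#(enclosed G T) : ℤ) ≤ #T := by exact_mod_cast card_le_card fun v _ => hTuniv v
    have : (1 : ℤ) ≤ #T := by exact_mod_cast card_pos.2 ⟨a, ha⟩
    have : (1 : ℤ) ≤ k := by exact_mod_cast hk
    unfold surplus at hTneg
    nlinarith
  · have hlt : #(T \ enclosed G T) < #T := by
      have := card_sdiff_add_card_inter T (enclosed G T)
      omega
    refine hlt.not_ge (hmin _ (mem_filter.2 ⟨mem_univ _, hne, ?_⟩))
    nlinarith [Int.natCast_nonneg k, Int.natCast_nonneg #(T ∩ enclosed G T)]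

theorem surplusNonneg_of_card_isolated_lt (hG : G.Connected) (hk : 1 ≤ k)
    (h : ∀ S : Finset V, S.Nonempty → #(enclosed G S \ S) < (k + 1) * #S) :
    SurplusNonneg G k := by
  intro S hS
  by_contra! hneg
  obtain ⟨T, hT, hTneg, hdis⟩ := exists_disjoint_enclosed_of_surplus_neg hG hk hS hneg
  have hlt : (#(enclosed G T \ T) : ℤ) < (k + 1) * #T := by exact_mod_cast h T hT
  rw [sdiff_eq_self_of_disjoint hdis.symm] at hlt
  unfold surplus at hTneg
  linarith

namespace SurplusNonneg

theorem eq_singleton_or_le (hP : SurplusNonneg G k) {C : Finset V} {s : V} (hs : s ∈ S)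
    (hC : ∀ u ∈ enclosed G S, G.Adj u s → u ∈ C) :
    S = {s} ∨ (k + 1 : ℤ) ≤ surplus G k S + #C := by
  rcases (S \ {s}).eq_empty_or_nonempty with hempty | hne
  · exact Or.inl ((sdiff_eq_empty_iff_subset.1 hempty).antisymm (singleton_subset_iff.2 hs))
  · have hle := (hP hne).trans <| surplus_sdiff_le (singleton_subset_iff.2 hs) (C := C)
      fun u hu b hb hub => hC u hu (mem_singleton.1 hb ▸ hub)
    rw [card_singleton, Nat.cast_one] at hle
    right
    linarith

theorem exists_enclosed_adj (hP : SurplusNonneg G k) (hk : 1 ≤ k) (hiso : ∀ v, ∃ u, G.Adj v u)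
    (htight : surplus G k S = 0) {s : V} (hs : s ∈ S) : ∃ u ∈ enclosed G S, G.Adj u s := by
  by_contra! h
  rcases hP.eq_singleton_or_le hs (C := ∅) (fun u hu hus => absurd hus (h u hu)) with rfl | hle
  · have hcard : #(enclosed G {s}) = k := by
      simp only [surplus, card_singleton] at htight
      omega
    obtain ⟨u, hu⟩ := card_pos.1 (hcard ▸ hk)
    obtain ⟨v, huv⟩ := hiso u
    obtain rfl := mem_singleton.1 (mem_enclosed.1 hu v huv)
    exact h u hu huv
  · rw [htight, card_empty] at hle
    omega

theorem disjoint_enclosed_of_surplus_add_le_one (hP : SurplusNonneg G k) (hk : 1 ≤ k)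
    (hle : surplus G k S + surplus G k T ≤ 1) (hST : (S \ enclosed G T).Nonempty)
    (hTS : (T \ enclosed G S).Nonempty) : Disjoint T (enclosed G S) := by
  rw [disjoint_left]
  intro u huT huS
  have hcross := surplus_sdiff_enclosed_add_le (G := G) (k := k) S T
  have hdiff₁ := hP hTS
  have hdiff₂ := hP hST
  have hS := hP (hST.mono sdiff_subset)
  have ha : (1 : ℤ) ≤ #(T ∩ enclosed G S) := by
    exact_mod_cast card_pos.2 ⟨u, mem_inter.2 ⟨huT, huS⟩⟩
  rcases hP.eq_singleton_or_le huT (C := S ∩ enclosed G T)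
    (fun w hw hwu => mem_inter.2 ⟨mem_enclosed.1 huS w hwu.symm, hw⟩) with rfl | hb
  · obtain ⟨w, hw⟩ := hTS
    rw [mem_sdiff, mem_singleton] at hw
    exact hw.2 (hw.1 ▸ huS)
  · have : (1 : ℤ) ≤ k := by exact_mod_cast hk
    nlinarith

theorem disjoint_enclosed_of_tight (hP : SurplusNonneg G k) (hk : 1 ≤ k)
    (hiso : ∀ v, ∃ u, G.Adj v u) (hS : surplus G k S = 0) (hT : surplus G k T = 0)
    (hST : (S \ enclosed G T).Nonempty) : Disjoint T (enclosed G S) := by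
  rcases (T \ enclosed G S).eq_empty_or_nonempty with hempty | hTS
  · rw [sdiff_eq_empty_iff_subset] at hempty
    rcases T.eq_empty_or_nonempty with rfl | hTne
    · exact disjoint_empty_left _
    have hsub : enclosed G T ⊆ S := fun v hv => by
      obtain ⟨w, hvw⟩ := hiso v
      exact mem_enclosed.1 (hempty (mem_enclosed.1 hv w hvw)) v hvw.symm
    have hle := (hP hST).trans <| surplus_sdiff_le hsub (C := T)
      fun u _ b hb hub => mem_enclosed.1 hb u hub.symm
    have hTcard : (1 : ℤ) ≤ #T := by exact_mod_cast hTne.card_pos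
    have : (1 : ℤ) ≤ k := by exact_mod_cast hk
    unfold surplus at hT
    nlinarith
  · exact hP.disjoint_enclosed_of_surplus_add_le_one hk (by omega) hST hTS

end SurplusNonneg
/-- The vertices `x`, `y` lie outside `S`, and all neighbours of `x` other than `y` lie in `S`;
so `x` becomes an isolated vertex of `G - S` when the edge `xy` is deleted. -/
structure EnclosedWithout (G : SimpleGraph V) (x y : V) (S : Finset V) : Prop where
  left_notMem : x ∉ S
  right_notMem : y ∉ S
  mem_of_adj : ∀ ⦃z⦄, G.Adj x z → z ≠ y → z ∈ S

/-- A tight set that blocks the deletion of the edge `xy`, because the deletion encloses `x`. -/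
structure StrongBlock (G : SimpleGraph V) (k : ℕ) (x y : V) (S : Finset V) : Prop
    extends EnclosedWithout G x y S where
  tight : surplus G k S = 0

/-- A set of surplus `1` that blocks the deletion of the edge `xy`, because the deletion encloses
both ends. -/
structure WeakBlock (G : SimpleGraph V) (k : ℕ) (x y : V) (S : Finset V) : Prop where
  left : EnclosedWithout G x y S
  right : EnclosedWithout G y x S
  surplus_eq_one : surplus G k S = 1

variable {s t u w x y : V}

namespace EnclosedWithout

theorem left_notMem_enclosed (h : EnclosedWithout G x y S) (hxy : G.Adj x y) :
    x ∉ enclosed G S := fun hx => h.right_notMem (mem_enclosed.1 hx y hxy)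

theorem mem_sdiff_enclosed (h : EnclosedWithout G x y S) (hxw : G.Adj x w) (hwy : w ≠ y)
    (hxT : x ∉ T) : w ∈ S \ enclosed G T :=
  mem_sdiff.2 ⟨h.mem_of_adj hxw hwy, fun hw => hxT (mem_enclosed.1 hw x hxw.symm)⟩

theorem mem_of_mem_enclosed (h : EnclosedWithout G w x T) (hx : x ∉ enclosed G S)
    (hu : u ∈ enclosed G S) (huw : G.Adj u w) : u ∈ T :=
  h.mem_of_adj huw.symm fun hux => hx (hux ▸ hu)

theorem of_mem_enclosed_deleteEdges (hx : x ∈ enclosed (G.deleteEdges {s(x, y)}) S)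
    (hxS : x ∉ S) (hyS : y ∉ S) : EnclosedWithout G x y S where
  left_notMem := hxS
  right_notMem := hyS
  mem_of_adj z hxz hzy := mem_enclosed.1 hx z <| SimpleGraph.deleteEdges_adj.2
    ⟨hxz, by simpa [hxz.ne, hxz.ne'] using hzy⟩

end EnclosedWithout

theorem WeakBlock.symm (h : WeakBlock G k x y S) : WeakBlock G k y x S :=
  ⟨h.right, h.left, h.surplus_eq_one⟩

theorem enclosedWithout_of_mem_enclosed_deleteEdges
    (hdis : Disjoint S (enclosed (G.deleteEdges {s(x, y)}) S))
    (hu : u ∈ enclosed (G.deleteEdges {s(x, y)}) S) (hnot : u ∉ enclosed G S) :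
    u = x ∧ EnclosedWithout G x y S ∨ u = y ∧ EnclosedWithout G y x S := by
  have huS := disjoint_right.1 hdis hu
  obtain ⟨v, huv, hvS⟩ : ∃ v, G.Adj u v ∧ v ∉ S := by simpa [mem_enclosed] using hnot
  have hedge : s(u, v) = s(x, y) := by
    by_contra hne
    exact hvS (mem_enclosed.1 hu v (SimpleGraph.deleteEdges_adj.2 ⟨huv, hne⟩))
  rw [← hedge] at hu
  rcases Sym2.eq_iff.1 hedge with ⟨rfl, rfl⟩ | ⟨rfl, rfl⟩
  · exact Or.inl ⟨rfl, .of_mem_enclosed_deleteEdges hu huS hvS⟩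
  · exact Or.inr ⟨rfl, .of_mem_enclosed_deleteEdges hu huS hvS⟩

namespace SurplusNonneg

theorem exists_block_of_not_deleteEdges (hP : SurplusNonneg G k) (hk : 1 ≤ k) (hxy : x ≠ y)
    (hconn : (G.deleteEdges {s(x, y)}).Connected)
    (hnot : ¬ SurplusNonneg (G.deleteEdges {s(x, y)}) k) :
    (∃ S, StrongBlock G k x y S) ∨ (∃ S, StrongBlock G k y x S) ∨
      ∃ S, WeakBlock G k x y S := by
  obtain ⟨S₀, hS₀, hneg₀⟩ : ∃ S : Finset V, S.Nonempty ∧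
      surplus (G.deleteEdges {s(x, y)}) k S < 0 := by
    simpa [SurplusNonneg] using hnot
  obtain ⟨S, hS, hneg, hdis⟩ := exists_disjoint_enclosed_of_surplus_neg hconn hk hS₀ hneg₀
  have hnonneg := hP hS
  have hlt (C : Finset V) (hC : ∀ u, u = x ∧ EnclosedWithout G x y S ∨
      u = y ∧ EnclosedWithout G y x S → u ∈ C) : surplus G k S < #C := by
    have hsub : enclosed (G.deleteEdges {s(x, y)}) S ⊆ enclosed G S ∪ C := fun u hu => by
      by_cases hu' : u ∈ enclosed G S
      · exact mem_union_left _ hu'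
      · exact mem_union_right _ (hC u (enclosedWithout_of_mem_enclosed_deleteEdges hdis hu hu'))
    have hcard := (card_le_card hsub).trans (card_union_le _ _)
    zify at hcard
    unfold surplus at hneg ⊢
    linarith
  by_cases hx : EnclosedWithout G x y S <;> by_cases hy : EnclosedWithout G y x S
  · have hlt_two := hlt {x, y} (by simp +contextual [or_imp])
    rw [card_pair hxy] at hlt_two
    rcases (by omega : surplus G k S = 0 ∨ surplus G k S = 1) with h | h
    · exact Or.inl ⟨S, hx, h⟩
    · exact Or.inr (Or.inr ⟨S, hx, hy, h⟩)
  · have hlt_one := hlt {x} (by simp [hy])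
    exact Or.inl ⟨S, hx, by rw [card_singleton] at hlt_one; omega⟩
  · have hlt_one := hlt {y} (by simp [hx])
    exact Or.inr (Or.inl ⟨S, hy, by rw [card_singleton] at hlt_one; omega⟩)
  · have hlt_zero := hlt ∅ (by simp [hx, hy])
    rw [card_empty] at hlt_zero
    omega

theorem eq_of_strongBlock_of_strongBlock (hP : SurplusNonneg G k) (hk : 1 ≤ k)
    (hiso : ∀ v, ∃ u, G.Adj v u) (hxy : G.Adj x y) (hxw : G.Adj x w)
    (hS : StrongBlock G k x y S) (hT : StrongBlock G k w x T) : w = y := by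
  by_contra hwy
  have hwS := hS.mem_sdiff_enclosed hxw hwy hT.right_notMem
  obtain ⟨u, hu, huw⟩ := hP.exists_enclosed_adj hk hiso hS.tight (mem_sdiff.1 hwS).1
  exact disjoint_left.1 (hP.disjoint_enclosed_of_tight hk hiso hS.tight hT.tight ⟨w, hwS⟩)
    (hT.mem_of_mem_enclosed (hS.left_notMem_enclosed hxy) hu huw) hu

theorem eq_of_strongBlock_of_weakBlock (hP : SurplusNonneg G k) (hk : 1 ≤ k)
    (hiso : ∀ v, ∃ u, G.Adj v u) (hxy : G.Adj x y) (hxw : G.Adj x w)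
    (hS : StrongBlock G k x y S) (hT : WeakBlock G k x w T) : w = y := by
  by_contra hwy
  have hwS := hS.mem_sdiff_enclosed hxw hwy hT.left.left_notMem
  have hyT := hT.left.mem_sdiff_enclosed hxy (Ne.symm hwy) hS.left_notMem
  obtain ⟨u, hu, huw⟩ := hP.exists_enclosed_adj hk hiso hS.tight (mem_sdiff.1 hwS).1
  refine disjoint_left.1 (hP.disjoint_enclosed_of_surplus_add_le_one hk ?_ ⟨w, hwS⟩ ⟨y, hyT⟩)
    (hT.right.mem_of_mem_enclosed (hS.left_notMem_enclosed hxy) hu huw) hu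
  rw [hS.tight, hT.surplus_eq_one, zero_add]

theorem not_strongBlock_of_weakBlock (hP : SurplusNonneg G k) (hk : 1 ≤ k)
    (hiso : ∀ v, ∃ u, G.Adj v u) (hxy : G.Adj x y) (hyt : G.Adj y t) (htx : t ≠ x)
    (hxs : G.Adj x s) (hsy : s ≠ y) (hsw : G.Adj s w) (hwx : w ≠ x)
    (hS : WeakBlock G k x y S) : ¬ StrongBlock G k s w T := by
  intro hT
  have hsS : s ∈ S \ enclosed G T :=
    mem_sdiff.2 ⟨hS.left.mem_of_adj hxs hsy, hT.left_notMem_enclosed hsw⟩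
  have hxT : x ∈ T \ enclosed G S :=
    mem_sdiff.2 ⟨hT.mem_of_adj hxs.symm hwx.symm, hS.left.left_notMem_enclosed hxy⟩
  have hdis : Disjoint S (enclosed G T) :=
    hP.disjoint_enclosed_of_surplus_add_le_one hk (by simp [hS.surplus_eq_one, hT.tight])
      ⟨x, hxT⟩ ⟨s, hsS⟩
  have heq_y : ∀ u ∈ enclosed G T, G.Adj u x → u = y := fun u hu hux => by
    by_contra huy
    exact disjoint_left.1 hdis (hS.left.mem_of_adj hux.symm huy) hu
  obtain ⟨u, hu, hux⟩ := hP.exists_enclosed_adj hk hiso hT.tight (mem_sdiff.1 hxT).1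
  obtain rfl := heq_y u hu hux
  rcases hP.eq_singleton_or_le (mem_sdiff.1 hxT).1 (C := {u})
    (fun v hv hvx => mem_singleton.2 (heq_y v hv hvx)) with rfl | hle
  · exact htx (mem_singleton.1 (mem_enclosed.1 hu t hyt))
  · rw [hT.tight, card_singleton] at hle
    omega

theorem le_card_inter_enclosed (hP : SurplusNonneg G k) (hS : surplus G k S = 1)
    (hST : (S \ enclosed G T).Nonempty) (hne : (S ∩ enclosed G T).Nonempty) :
    k ≤ #(T ∩ enclosed G S) := by
  obtain ⟨u, hu⟩ := hne
  obtain ⟨huS, huT⟩ := mem_inter.1 hu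
  rcases hP.eq_singleton_or_le huS (C := T ∩ enclosed G S)
    (fun w hw hwu => mem_inter.2 ⟨mem_enclosed.1 huT w hwu.symm, hw⟩) with rfl | hle
  · obtain ⟨w, hw⟩ := hST
    rw [mem_sdiff, mem_singleton] at hw
    exact absurd (hw.1 ▸ huT) hw.2
  · omega

theorem eq_singleton_or_le_card_inter (hP : SurplusNonneg G k) (hxy : G.Adj x y)
    (hxs : G.Adj x s) (hsy : s ≠ y) (hS : WeakBlock G k x y S) (hT : EnclosedWithout G s x T) :
    S = {s} ∨ k ≤ #(T ∩ enclosed G S) := by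
  refine (hP.eq_singleton_or_le (hS.left.mem_of_adj hxs hsy) (C := T ∩ enclosed G S)
    fun u hu hus => mem_inter.2
      ⟨hT.mem_of_mem_enclosed (hS.left.left_notMem_enclosed hxy) hu hus, hu⟩).imp_right ?_
  have := hS.surplus_eq_one
  omega

theorem disjoint_enclosed_of_weakBlock (hP : SurplusNonneg G k) (hk : 1 ≤ k)
    (hiso : ∀ v, ∃ u, G.Adj v u) (hxy : G.Adj x y) (hxs : G.Adj x s) (hsy : s ≠ y)
    (hS : WeakBlock G k x y S) (hT : WeakBlock G k x s T) : Disjoint T (enclosed G S) := by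
  by_contra hdis
  have hne : (T ∩ enclosed G S).Nonempty := not_disjoint_iff_nonempty_inter.1 hdis
  have hsS := hS.left.mem_sdiff_enclosed hxs hsy hT.left.left_notMem
  have hyT := hT.left.mem_sdiff_enclosed hxy hsy.symm hS.left.left_notMem
  have hS₁ := hS.surplus_eq_one
  have hT₁ := hT.surplus_eq_one
  have hb := hP.le_card_inter_enclosed hT₁ ⟨y, hyT⟩ hne
  have ha := hP.le_card_inter_enclosed hS₁ ⟨s, hsS⟩ (card_pos.1 (hk.trans hb))
  have hcross := surplus_sdiff_enclosed_add_le (G := G) (k := k) S T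
  have hTnonneg := hP ⟨y, hyT⟩
  have hSnonneg := hP ⟨s, hsS⟩
  rw [hS₁, hT₁] at hcross
  -- The uncrossing inequality leaves room only for `k = 1` and intersections of size `1`.
  have hsum : k * (#(T ∩ enclosed G S) + #(S ∩ enclosed G T)) ≤ 2 := by zify; linarith
  obtain rfl : k = 1 := by nlinarith
  have hcard : #(T ∩ enclosed G S) = 1 := by omega
  have htight : surplus G 1 (S \ enclosed G T) = 0 := by omega
  have hmono : enclosed G (S \ enclosed G T) ⊆ enclosed G S := fun u hu =>
    mem_enclosed.2 fun v huv => (mem_sdiff.1 (mem_enclosed.1 hu v huv)).1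
  have hmem : ∀ u ∈ enclosed G (S \ enclosed G T), G.Adj u s → u ∈ T ∩ enclosed G S :=
    fun u hu hus => mem_inter.2 ⟨hT.right.mem_of_mem_enclosed
      (hS.left.left_notMem_enclosed hxy) (hmono hu) hus, hmono hu⟩
  obtain ⟨u, hu, hus⟩ := hP.exists_enclosed_adj hk hiso htight hsS
  have huTS := mem_inter.1 (hmem u hu hus)
  rcases hP.eq_singleton_or_le hsS hmem with hsingle | hle
  · rcases hP.eq_singleton_or_le huTS.1 (C := ∅) (fun w hw hwu => by
      obtain rfl := mem_singleton.1 (hsingle ▸ mem_enclosed.1 hu w hwu.symm)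
      exact absurd hw (mem_sdiff.1 hsS).2) with rfl | hle
    · exact (mem_sdiff.1 hyT).2 (mem_singleton.1 (mem_sdiff.1 hyT).1 ▸ huTS.2)
    · simp [hT₁] at hle
  · simp [htight, hcard] at hle

end SurplusNonneg

theorem WeakBlock.card_univ_le_three (hG : G.Preconnected) (hS : WeakBlock G k x y {s})
    (hT : EnclosedWithout G s x {y}) : Fintype.card V ≤ 3 := by
  have hmem : ∀ v, v ∈ ({x, y, s} : Finset V) :=
    forall_of_adj_closed hG (a := x) (by simp) fun u v hu huv => by
      have hx := @hS.left.mem_of_adj v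
      have hy := @hS.right.mem_of_adj v
      have hs := @hT.mem_of_adj v
      simp only [mem_insert, mem_singleton] at hu hx hy hs ⊢
      rcases hu with rfl | rfl | rfl <;> tauto
  rw [← card_univ]
  exact (card_le_card fun v _ => hmem v).trans card_le_three

theorem SurplusNonneg.eq_of_weakBlock_of_weakBlock (hP : SurplusNonneg G k) (hk : 1 ≤ k)
    (hiso : ∀ v, ∃ u, G.Adj v u) (hG : G.Preconnected) (hV : 4 ≤ Fintype.card V)
    (hxy : G.Adj x y) (hxs : G.Adj x s) (hS : WeakBlock G k x y S) (hT : WeakBlock G k x s T) :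
    s = y := by
  by_contra hsy
  have hTS := hP.disjoint_enclosed_of_weakBlock hk hiso hxy hxs hsy hS hT
  have hST := hP.disjoint_enclosed_of_weakBlock hk hiso hxs hxy (Ne.symm hsy) hT hS
  have hS' := hP.eq_singleton_or_le_card_inter hxy hxs hsy hS hT.right
  have hT' := hP.eq_singleton_or_le_card_inter hxs hxy (Ne.symm hsy) hT hS.right
  rw [disjoint_iff_inter_eq_empty.1 hTS, card_empty, or_iff_left (by omega)] at hS'
  rw [disjoint_iff_inter_eq_empty.1 hST, card_empty, or_iff_left (by omega)] at hT'
  subst hS' hT'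
  have := hS.card_univ_le_three hG hT.right
  omega

theorem surplus_empty (hiso : ∀ v, ∃ u, G.Adj v u) : surplus G k ∅ = -1 := by
  have hempty : enclosed G ∅ = ∅ := eq_empty_of_forall_notMem fun v hv => by
    obtain ⟨u, hvu⟩ := hiso v
    exact notMem_empty u (mem_enclosed.1 hv u hvu)
  simp [surplus, hempty]

theorem SurplusNonneg.union_of_mem_enclosed_sdiff (hP : SurplusNonneg G k)
    (hiso : ∀ v, ∃ u, G.Adj v u) (hS : surplus G k S = 0) (hT : surplus G k T = 0)
    (hx : x ∈ enclosed G (S ∪ T) \ (enclosed G S ∪ enclosed G T)) :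
    Disjoint S T ∧ surplus G k (S ∪ T) = 0 ∧
      ∀ v ∈ enclosed G (S ∪ T) \ (enclosed G S ∪ enclosed G T), v = x := by
  have huncross := surplus_union_add_surplus_inter_le (G := G) (k := k) S T
  have hpos := card_pos.2 ⟨x, hx⟩
  obtain ⟨u, hxu⟩ := hiso x
  have hunion := hP ⟨u, mem_enclosed.1 (mem_sdiff.1 hx).1 u hxu⟩
  rcases (S ∩ T).eq_empty_or_nonempty with hempty | hne
  · rw [hempty, surplus_empty hiso] at huncross
    exact ⟨disjoint_iff_inter_eq_empty.2 hempty, by omega,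
      fun v hv => card_le_one.1 (by omega) v hv x hx⟩
  · have := hP hne
    omega

theorem mem_enclosed_union_sdiff {a b : V} (hx : x ∈ enclosed G (S ∪ T)) (hxa : G.Adj x a)
    (haT : a ∉ T) (hxb : G.Adj x b) (hbS : b ∉ S) :
    x ∈ enclosed G (S ∪ T) \ (enclosed G S ∪ enclosed G T) :=
  mem_sdiff.2 ⟨hx, fun h => (mem_union.1 h).elim (fun h => hbS (mem_enclosed.1 h b hxb))
    fun h => haT (mem_enclosed.1 h a hxa)⟩

theorem EnclosedWithout.mem_enclosed_union (h : EnclosedWithout G x y T) (hy : y ∈ S) :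
    x ∈ enclosed G (S ∪ T) := mem_enclosed.2 fun z hxz => by
  by_cases hzy : z = y
  · exact mem_union_left _ (hzy ▸ hy)
  · exact mem_union_right _ (h.mem_of_adj hxz hzy)

end Surplus

section Nonbridge

variable {V : Type*} {G : SimpleGraph V} {x y a : V}

/-- The pair `xy` is an edge of `G` but not a bridge, that is, it lies on a cycle. -/
def IsNonbridge (G : SimpleGraph V) (x y : V) : Prop :=
  G.Adj x y ∧ ¬ G.IsBridge s(x, y)

namespace IsNonbridge

theorem symm (h : IsNonbridge G x y) : IsNonbridge G y x :=
  ⟨h.1.symm, by rw [Sym2.eq_swap]; exact h.2⟩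

theorem exists_boundary (h : IsNonbridge G x a) {W : Set V} (ha : a ∈ W) (hx : x ∉ W) :
    ∃ u v, IsNonbridge G u v ∧ u ∈ W ∧ v ∉ W ∧ s(u, v) ≠ s(x, a) := by
  obtain ⟨hadj, hnb⟩ := h
  rw [SimpleGraph.isBridge_iff, not_not, SimpleGraph.reachable_deleteEdges_iff_exists_walk] at hnb
  obtain ⟨q, hq⟩ := hnb
  let p : G.Path a x := q.reverse.toPath
  have hp : s(x, a) ∉ (p : G.Walk a x).edges := fun h => hq <| by
    simpa using SimpleGraph.Walk.edges_toPath_subset_edges _ h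
  obtain ⟨d, hd, hfst, hsnd⟩ := (p : G.Walk a x).exists_boundary_dart W ha hx
  have hedge : s(d.fst, d.snd) ∈ (p : G.Walk a x).edges := List.mem_map.2 ⟨d, hd, rfl⟩
  refine ⟨d.fst, d.snd, ⟨d.adj, fun hbridge => ?_⟩, hfst, hsnd, fun h => hp (h ▸ hedge)⟩
  exact hbridge.notMem_edges_of_isCycle (p.cons_isCycle hadj hp) (by simp [hedge])

theorem exists_ne (h : IsNonbridge G x y) : ∃ w, w ≠ y ∧ IsNonbridge G x w := by
  obtain ⟨w, v, hwv, -, hv, hne⟩ := h.exists_boundary (W := {z | z ≠ x}) h.1.ne' (by simp)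
  obtain rfl : v = x := by simpa using hv
  exact ⟨w, fun hwy => hne (by rw [hwy, Sym2.eq_swap]), hwv.symm⟩

end IsNonbridge

end Nonbridge

section Critical

variable {V : Type*} [Fintype V] {G : SimpleGraph V} {k : ℕ} {S : Finset V} {x y z a b w : V}

/-- A connected graph, with at least four vertices and Kaneko's condition, in which the deletion
of each nonbridge is blocked; minimal connected spanning subgraphs with Kaneko's condition are of
this kind. -/
structure IsCritical (G : SimpleGraph V) (k : ℕ) : Prop where
  connected : G.Connected
  four_le_card : 4 ≤ Fintype.card V
  one_le : 1 ≤ k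
  surplus_nonneg : SurplusNonneg G k
  exists_block : ∀ ⦃x y⦄, IsNonbridge G x y →
    (∃ S, StrongBlock G k x y S) ∨ (∃ S, StrongBlock G k y x S) ∨ ∃ S, WeakBlock G k x y S

/-- A vertex `x` some nonbridge at which has a strong block that encloses `x` on deletion. In a
critical graph such a vertex has exactly two neighbours. -/
def IsConnector (G : SimpleGraph V) (k : ℕ) (x : V) : Prop :=
  ∃ y S, IsNonbridge G x y ∧ StrongBlock G k x y S

/-- Some connector has a neighbour in `S` and a neighbour outside `S`. -/
def SplitsConnector (G : SimpleGraph V) (k : ℕ) (S : Finset V) : Prop :=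
  ∃ x a b, IsConnector G k x ∧ G.Adj x a ∧ a ∈ S ∧ G.Adj x b ∧ b ∉ S

namespace IsCritical

theorem exists_adj (hG : IsCritical G k) (v : V) : ∃ u, G.Adj v u := by
  have : Nontrivial V := Fintype.one_lt_card_iff_nontrivial.1 (by linarith [hG.four_le_card])
  exact hG.connected.preconnected.exists_adj_of_nontrivial v

theorem exists_strongBlock (hG : IsCritical G k) (hx : IsConnector G k x)
    (hxw : IsNonbridge G x w) : ∃ S, StrongBlock G k x w S := by
  obtain ⟨y, S, hxy, hS⟩ := hx
  rcases hG.exists_block hxw with hT | ⟨T, hT⟩ | ⟨T, hT⟩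
  · exact hT
  · obtain rfl := hG.surplus_nonneg.eq_of_strongBlock_of_strongBlock hG.one_le hG.exists_adj
      hxy.1 hxw.1 hS hT
    exact ⟨S, hS⟩
  · obtain rfl := hG.surplus_nonneg.eq_of_strongBlock_of_weakBlock hG.one_le hG.exists_adj
      hxy.1 hxw.1 hS hT
    exact ⟨S, hS⟩

theorem isConnector_or_isConnector (hG : IsCritical G k) (hxy : IsNonbridge G x y) :
    IsConnector G k x ∨ IsConnector G k y := by
  rcases hG.exists_block hxy with ⟨S, hS⟩ | ⟨S, hS⟩ | ⟨S, hS⟩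
  · exact Or.inl ⟨y, S, hxy, hS⟩
  · exact Or.inr ⟨x, S, hxy.symm, hS⟩
  obtain ⟨s, hsy, hxs⟩ := hxy.exists_ne
  rcases hG.exists_block hxs with ⟨T, hT⟩ | ⟨T, hT⟩ | ⟨T, hT⟩
  · exact Or.inl ⟨s, T, hxs, hT⟩
  · obtain ⟨w, hwx, hsw⟩ := hxs.symm.exists_ne
    obtain ⟨t, htx, hyt⟩ := hxy.symm.exists_ne
    obtain ⟨T', hT'⟩ := hG.exists_strongBlock ⟨x, T, hxs.symm, hT⟩ hsw
    exact absurd hT' <| hG.surplus_nonneg.not_strongBlock_of_weakBlock hG.one_le hG.exists_adj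
      hxy.1 hyt.1 htx hxs.1 hsy hsw.1 hwx hS
  · exact absurd (hG.surplus_nonneg.eq_of_weakBlock_of_weakBlock hG.one_le hG.exists_adj
      hG.connected.preconnected hG.four_le_card hxy.1 hxs.1 hS hT) hsy

theorem exists_neighbors (hG : IsCritical G k) (hx : IsConnector G k x) :
    ∃ a b, a ≠ b ∧ IsNonbridge G x a ∧ IsNonbridge G x b ∧ ∀ z, G.Adj x z → z = a ∨ z = b := by
  obtain ⟨a, S, hxa, hS⟩ := id hx
  obtain ⟨b, hba, hxb⟩ := hxa.exists_ne
  obtain ⟨T, hT⟩ := hG.exists_strongBlock hx hxb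
  refine ⟨a, b, hba.symm, hxa, hxb, fun z hxz => ?_⟩
  by_contra! hz
  have hmem := mem_enclosed_union_sdiff (hT.mem_enclosed_union (hS.mem_of_adj hxb.1 hba))
    hxb.1 hT.right_notMem hxa.1 hS.right_notMem
  have hdis := (hG.surplus_nonneg.union_of_mem_enclosed_sdiff hG.exists_adj hS.tight hT.tight
    hmem).1
  exact disjoint_left.1 hdis (hS.mem_of_adj hxz hz.1) (hT.mem_of_adj hxz hz.2)

theorem isNonbridge_of_adj (hG : IsCritical G k) (hx : IsConnector G k x) (hxa : G.Adj x a) :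
    IsNonbridge G x a := by
  obtain ⟨b, c, -, hxb, hxc, hN⟩ := hG.exists_neighbors hx
  rcases hN a hxa with rfl | rfl
  exacts [hxb, hxc]

theorem eq_or_eq_of_adj (hG : IsCritical G k) (hx : IsConnector G k x) (hxa : G.Adj x a)
    (hxb : G.Adj x b) (hab : a ≠ b) (hxz : G.Adj x z) : z = a ∨ z = b := by
  obtain ⟨c, d, -, -, -, hN⟩ := hG.exists_neighbors hx
  have := hN a hxa
  have := hN b hxb
  have := hN z hxz
  grind

theorem notMem_of_isConnector (hG : IsCritical G k) (hx : IsConnector G k x)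
    (hS : surplus G k S = 0) : x ∉ S := by
  intro hxS
  obtain ⟨u, hu, hux⟩ :=
    hG.surplus_nonneg.exists_enclosed_adj hG.one_le hG.exists_adj hS hxS
  obtain ⟨b, hbu, hxb⟩ := (hG.isNonbridge_of_adj hx hux.symm).exists_ne
  obtain ⟨T, hT⟩ := hG.exists_strongBlock hx hxb
  have hxST : x ∈ S \ enclosed G T := mem_sdiff.2 ⟨hxS, hT.left_notMem_enclosed hxb.1⟩
  exact disjoint_left.1 (hG.surplus_nonneg.disjoint_enclosed_of_tight hG.one_le hG.exists_adj
    hS hT.tight ⟨x, hxST⟩) (hT.mem_of_adj hux.symm hbu.symm) hu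

theorem exists_connector_ne (hG : IsCritical G k) (hS : surplus G k S = 0)
    (hx : IsConnector G k x) (hxa : G.Adj x a) (ha : a ∈ S) (hxb : G.Adj x b) (hb : b ∉ S) :
    ∃ v u z, v ≠ x ∧ IsConnector G k v ∧ G.Adj v u ∧ u ∈ S ∧ G.Adj v z ∧ z ∉ S := by
  have hab : a ≠ b := fun h => hb (h ▸ ha)
  let W : Set V := {v | v ∈ S ∨ IsConnector G k v ∧ ∀ z, G.Adj v z → z ∈ S}
  have hxW : x ∉ W := fun h =>
    h.elim (hG.notMem_of_isConnector hx hS) fun h => hb (h.2 b hxb)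
  obtain ⟨u, v, huv, hu, hv, hne⟩ :=
    (hG.isNonbridge_of_adj hx hxa).exists_boundary (W := W) (Or.inl ha) hxW
  have huS : u ∈ S := hu.resolve_right fun h => hv (Or.inl (h.2 v huv.1))
  have hvcon : IsConnector G k v :=
    (hG.isConnector_or_isConnector huv).resolve_left fun h => hG.notMem_of_isConnector h hS huS
  obtain ⟨z, hvz, hz⟩ : ∃ z, G.Adj v z ∧ z ∉ S := by
    by_contra! h
    exact hv (Or.inr ⟨hvcon, h⟩)
  refine ⟨v, u, z, ?_, hvcon, huv.1.symm, huS, hvz, hz⟩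
  rintro rfl
  rcases hG.eq_or_eq_of_adj hx hxa hxb hab huv.1.symm with rfl | rfl
  · exact hne Sym2.eq_swap
  · exact hb huS

theorem exists_ssubset_of_splitsConnector (hG : IsCritical G k) (hS : surplus G k S = 0)
    (hsplit : SplitsConnector G k S) :
    ∃ T, S ⊂ T ∧ surplus G k T = 0 ∧ SplitsConnector G k T := by
  obtain ⟨x, a, b, hx, hxa, ha, hxb, hb⟩ := hsplit
  obtain ⟨S', hS'⟩ := hG.exists_strongBlock hx (hG.isNonbridge_of_adj hx hxa)
  have hbS' : b ∈ S' := hS'.mem_of_adj hxb fun h => hb (h ▸ ha)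
  obtain ⟨hdis, htight, hunique⟩ := hG.surplus_nonneg.union_of_mem_enclosed_sdiff hG.exists_adj
    hS hS'.tight
    (mem_enclosed_union_sdiff (hS'.mem_enclosed_union ha) hxa hS'.right_notMem hxb hb)
  obtain ⟨v, u, z, hvx, hv, hvu, hu, hvz, hz⟩ := hG.exists_connector_ne hS hx hxa ha hxb hb
  have hzS' : z ∉ S' := fun hzS' => hvx <| hunique v <| by
    refine mem_enclosed_union_sdiff (mem_enclosed.2 fun w hvw => ?_) hvu
      (disjoint_left.1 hdis hu) hvz hz
    rcases hG.eq_or_eq_of_adj hv hvu hvz (fun h => hz (h ▸ hu)) hvw with rfl | rfl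
    · exact mem_union_left _ hu
    · exact mem_union_right _ hzS'
  refine ⟨S ∪ S', ⟨subset_union_left, fun h => hb (h (mem_union_right _ hbS'))⟩, htight,
    v, u, z, hv, hvu, mem_union_left _ hu, hvz, ?_⟩
  simp [hz, hzS']

theorem not_isNonbridge (hG : IsCritical G k) : ¬ IsNonbridge G x y := by
  intro hxy
  obtain ⟨v, hv⟩ : ∃ v, IsConnector G k v :=
    (hG.isConnector_or_isConnector hxy).elim (⟨x, ·⟩) (⟨y, ·⟩)
  obtain ⟨a, b, hab, hva, hvb, -⟩ := hG.exists_neighbors hv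
  obtain ⟨S₀, hS₀⟩ := hG.exists_strongBlock hv hvb
  obtain ⟨S, ⟨htight, hsplit⟩, hmax⟩ :=
    (Set.toFinite {S | surplus G k S = 0 ∧ SplitsConnector G k S}).exists_maximal
      ⟨S₀, hS₀.tight, v, a, b, hv, hva.1, hS₀.mem_of_adj hva.1 hab, hvb.1, hS₀.right_notMem⟩
  obtain ⟨T, hST, hT⟩ := hG.exists_ssubset_of_splitsConnector htight hsplit
  exact hST.2 (hmax hT hST.1)

theorem isTree (hG : IsCritical G k) : G.IsTree :=
  ⟨hG.connected, SimpleGraph.isAcyclic_iff_forall_adj_isBridge.2 fun _ _ hxy =>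
    not_not.1 fun hbridge => hG.not_isNonbridge ⟨hxy, hbridge⟩⟩

end IsCritical

theorem exists_isCritical_le (hG : G.Connected) (hV : 4 ≤ Fintype.card V) (hk : 1 ≤ k)
    (hP : SurplusNonneg G k) : ∃ T ≤ G, IsCritical T k := by
  obtain ⟨T, ⟨hTG, hT, hTP⟩, hmin⟩ :=
    (Set.toFinite {T | T ≤ G ∧ T.Connected ∧ SurplusNonneg T k}).exists_minimal ⟨G, le_rfl, hG, hP⟩
  refine ⟨T, hTG, hT, hV, hk, hTP, fun x y hxy => ?_⟩
  have hconn := hT.connected_delete_edge_of_not_isBridge hxy.2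
  refine hTP.exists_block_of_not_deleteEdges hk hxy.1.ne hconn fun hP' => ?_
  have hle := T.deleteEdges_le {s(x, y)}
  simpa using hmin ⟨hle.trans hTG, hconn, hP'⟩ hle hxy.1

theorem SurplusNonneg.card_leaf_neighbors_le (hP : SurplusNonneg G k) (v : V) :
    #(univ.filter fun u => G.Adj v u ∧ G.degree u = 1) ≤ k := by
  have hsub : (univ.filter fun u => G.Adj v u ∧ G.degree u = 1) ⊆ enclosed G {v} := fun u hu => by
    obtain ⟨hvu, hdeg⟩ := (mem_filter.1 hu).2
    obtain ⟨w, -, hw⟩ := SimpleGraph.degree_eq_one_iff_existsUnique_adj.1 hdeg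
    exact mem_enclosed.2 fun z huz => mem_singleton.2 ((hw z huz).trans (hw v hvu.symm).symm)
  have hnonneg := hP (singleton_nonempty v)
  have hcard := card_le_card hsub
  simp only [surplus, card_singleton] at hnonneg
  omega

theorem hasSpanningTreeLeafDegLE_of_card_isolated_lt (hG : G.Connected)
    (hV : 4 ≤ Fintype.card V) (hk : 1 ≤ k)
    (h : ∀ S : Finset V, S.Nonempty → #(enclosed G S \ S) < (k + 1) * #S) :
    HasSpanningTreeLeafDegLE G k := by
  obtain ⟨T, hTG, hT⟩ :=
    exists_isCritical_le hG hV hk (surplusNonneg_of_card_isolated_lt hG hk h)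
  exact ⟨T, hTG, hT.isTree, hT.surplus_nonneg.card_leaf_neighbors_le⟩

end Critical

section SpectralRadius

open Matrix

variable {V W : Type*} [Fintype V] [Fintype W] {G H : SimpleGraph V} {y : V → ℝ} {r : ℝ}

theorem posSemidef_sSup_spectrum_smul_one_sub {A : Matrix V V ℝ} (hA : A.IsHermitian) :
    (sSup (spectrum ℝ A) • 1 - A).PosSemidef := by
  rw [Matrix.posSemidef_iff_isHermitian_and_spectrum_nonneg]
  refine ⟨(isHermitian_one.smul (.all _)).sub hA, ?_⟩
  rw [← Algebra.algebraMap_eq_smul_one, ← spectrum.singleton_sub_eq]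
  rintro _ ⟨_, rfl, μ, hμ, rfl⟩
  exact sub_nonneg.2 (le_csSup A.finite_real_spectrum.bddAbove hμ)

theorem adjMat_eq_adjMatrix (G : SimpleGraph V) : adjMat G = G.adjMatrix ℝ := rfl

theorem adjMat_mulVec_apply (G : SimpleGraph V) (x : V → ℝ) (v : V) :
    (adjMat G *ᵥ x) v = ∑ u ∈ G.neighborFinset v, x u := by
  rw [adjMat_eq_adjMatrix, SimpleGraph.adjMatrix_mulVec_apply]

theorem isHermitian_adjMat (G : SimpleGraph V) : (adjMat G).IsHermitian :=
  G.isSymm_adjMatrix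

theorem specRad_eq_sSup_spectrum (G : SimpleGraph V) :
    specRad G = sSup (spectrum ℝ (adjMat G)) := by
  simp only [specRad, Module.End.hasEigenvalue_iff_mem_spectrum, ← Matrix.toLin'_apply',
    Matrix.spectrum_toLin', Set.ofPred_mem_eq]

theorem specRad_eq_of_iso {H : SimpleGraph W} (e : G ≃g H) : specRad G = specRad H := by
  have hreindex : adjMat H = Matrix.reindexAlgEquiv ℝ ℝ e.toEquiv (adjMat G) :=
    (e.reindex_adjMatrix (α := ℝ)).symm
  rw [specRad_eq_sSup_spectrum, specRad_eq_sSup_spectrum, hreindex, AlgEquiv.spectrum_eq]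

theorem posSemidef_specRad_smul_one_sub_adjMat (G : SimpleGraph V) :
    (specRad G • 1 - adjMat G).PosSemidef :=
  specRad_eq_sSup_spectrum G ▸ posSemidef_sSup_spectrum_smul_one_sub (isHermitian_adjMat G)

theorem dotProduct_adjMat_mulVec_le (G : SimpleGraph V) (x : V → ℝ) :
    x ⬝ᵥ adjMat G *ᵥ x ≤ specRad G * (x ⬝ᵥ x) := by
  simpa [sub_mulVec, smul_mulVec] using
    (posSemidef_specRad_smul_one_sub_adjMat G).dotProduct_mulVec_nonneg x

theorem adjMat_mulVec_eq_of_le_dotProduct {x : V → ℝ}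
    (h : specRad G * (x ⬝ᵥ x) ≤ x ⬝ᵥ adjMat G *ᵥ x) : adjMat G *ᵥ x = specRad G • x := by
  have hzero := ((posSemidef_specRad_smul_one_sub_adjMat G).dotProduct_mulVec_zero_iff x).1 <| by
    simpa [sub_mulVec, smul_mulVec, sub_eq_zero] using
      h.antisymm (dotProduct_adjMat_mulVec_le G x)
  simpa [sub_mulVec, smul_mulVec, sub_eq_zero, eq_comm] using hzero

theorem exists_adjMat_mulVec_eq [Nonempty V] (G : SimpleGraph V) :
    ∃ x : V → ℝ, x ≠ 0 ∧ adjMat G *ᵥ x = specRad G • x := by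
  have hmem : specRad G ∈ spectrum ℝ (adjMat G) := by
    rw [specRad_eq_sSup_spectrum]
    refine Set.Nonempty.csSup_mem ?_ (adjMat G).finite_real_spectrum
    rw [(isHermitian_adjMat G).spectrum_real_eq_range_eigenvalues]
    exact Set.range_nonempty _
  rw [← Matrix.spectrum_toLin', ← Module.End.hasEigenvalue_iff_mem_spectrum] at hmem
  obtain ⟨x, hx⟩ := hmem.exists_hasEigenvector
  exact ⟨x, hx.2, hx.apply_eq_smul⟩

theorem dotProduct_adjMat_mulVec_le_abs (G : SimpleGraph V) (x : V → ℝ) :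
    x ⬝ᵥ adjMat G *ᵥ x ≤ |x| ⬝ᵥ adjMat G *ᵥ |x| := by
  simp only [dotProduct, adjMat_mulVec_apply, mul_sum]
  exact sum_le_sum fun v _ => sum_le_sum fun u _ => (le_abs_self _).trans_eq (abs_mul _ _)

theorem exists_nonneg_adjMat_mulVec_eq [Nonempty V] (G : SimpleGraph V) :
    ∃ y : V → ℝ, 0 ≤ y ∧ y ≠ 0 ∧ adjMat G *ᵥ y = specRad G • y := by
  obtain ⟨x, hx₀, hx⟩ := exists_adjMat_mulVec_eq G
  refine ⟨|x|, abs_nonneg x, by simpa using hx₀, adjMat_mulVec_eq_of_le_dotProduct ?_⟩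
  calc specRad G * (|x| ⬝ᵥ |x|) = x ⬝ᵥ adjMat G *ᵥ x := by
        simp [hx, dotProduct, abs_mul_abs_self, mul_sum, mul_left_comm]
    _ ≤ |x| ⬝ᵥ adjMat G *ᵥ |x| := dotProduct_adjMat_mulVec_le_abs G x

theorem pos_of_adjMat_mulVec_eq (hG : G.Preconnected) (hy : 0 ≤ y) (hy₀ : y ≠ 0)
    (h : adjMat G *ᵥ y = r • y) (v : V) : 0 < y v := by
  refine (hy v).lt_of_ne' fun hv => hy₀ <| funext <|
    forall_of_adj_closed (p := fun u => y u = 0) hG hv fun u w hu huw => ?_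
  have hsum : ∑ w ∈ G.neighborFinset u, y w = 0 := by
    rw [← adjMat_mulVec_apply, h, Pi.smul_apply, hu, smul_zero]
  exact (sum_eq_zero_iff_of_nonneg fun w _ => hy w).1 hsum w (by simpa using huw)

theorem specRad_lt_specRad_of_lt (hH : H.Connected) (hlt : G < H) : specRad G < specRad H := by
  have := hH.nonempty
  obtain ⟨y, hy, hy₀, hGy⟩ := exists_nonneg_adjMat_mulVec_eq G
  have hsub (v : V) : G.neighborFinset v ⊆ H.neighborFinset v := fun u hu => by
    simpa using hlt.le (by simpa using hu)
  have hle : specRad G * (y ⬝ᵥ y) ≤ y ⬝ᵥ adjMat H *ᵥ y := by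
    rw [← smul_eq_mul, ← dotProduct_smul, ← hGy]
    refine dotProduct_le_dotProduct_of_nonneg_left (fun v => ?_) hy
    rw [adjMat_mulVec_apply, adjMat_mulVec_apply]
    exact sum_le_sum_of_subset_of_nonneg (hsub v) fun u _ _ => hy u
  by_contra! hge
  have hyy : 0 ≤ y ⬝ᵥ y := sum_nonneg fun v _ => mul_self_nonneg (y v)
  have hHy := adjMat_mulVec_eq_of_le_dotProduct ((mul_le_mul_of_nonneg_right hge hyy).trans hle)
  have hpos := pos_of_adjMat_mulVec_eq hH.preconnected hy hy₀ hHy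
  obtain ⟨u, v, huv, hGuv⟩ : ∃ u v, H.Adj u v ∧ ¬ G.Adj u v := by
    by_contra! h
    exact hlt.not_ge fun u v => h u v
  have hstrict : (adjMat G *ᵥ y) u < (adjMat H *ᵥ y) u := by
    rw [adjMat_mulVec_apply, adjMat_mulVec_apply]
    exact sum_lt_sum_of_subset (hsub u) (i := v) (by simpa using huv) (by simpa using hGuv)
      (hpos v) fun w _ _ => hy w
  rw [hGy, hHy] at hstrict
  exact hstrict.not_ge (mul_le_mul_of_nonneg_right hge (hy u))

theorem specRad_le_of_adjMat_mulVec_le [Nonempty V] {w : V → ℝ} (hw : ∀ v, 0 < w v)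
    (h : adjMat G *ᵥ w ≤ r • w) : specRad G ≤ r := by
  obtain ⟨y, hy, hy₀, hGy⟩ := exists_nonneg_adjMat_mulVec_eq G
  have hwy : 0 < w ⬝ᵥ y := by
    obtain ⟨v, hv⟩ := Function.ne_iff.1 hy₀
    exact sum_pos' (fun u _ => mul_nonneg (hw u).le (hy u))
      ⟨v, mem_univ v, mul_pos (hw v) ((hy v).lt_of_ne' hv)⟩
  refine le_of_mul_le_mul_right ?_ hwy
  calc specRad G * (w ⬝ᵥ y) = w ⬝ᵥ adjMat G *ᵥ y := by rw [hGy, dotProduct_smul, smul_eq_mul]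
    _ = (adjMat G *ᵥ w) ⬝ᵥ y := by
        rw [dotProduct_mulVec, ← mulVec_transpose, ← conjTranspose_eq_transpose_of_trivial,
          (isHermitian_adjMat G).eq]
    _ ≤ (r • w) ⬝ᵥ y := dotProduct_le_dotProduct_of_nonneg_right h hy
    _ = r * (w ⬝ᵥ y) := by rw [smul_dotProduct, smul_eq_mul]

theorem card_sub_one_lt_specRad_of_isClique (hG : G.Connected) {s : Finset V}
    (hs : G.IsClique s) (hne : s.Nonempty) (huniv : s ≠ univ) : (#s - 1 : ℝ) < specRad G := by
  let x : V → ℝ := fun v => if v ∈ s then 1 else 0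
  have hxx : x ⬝ᵥ x = #s := by simp [x, dotProduct]
  have hxGx : x ⬝ᵥ adjMat G *ᵥ x = #s * (#s - 1) := by
    have hinter (v) (hv : v ∈ s) : (G.neighborFinset v ∩ s) = s.erase v := by
      ext u
      simp only [mem_inter, SimpleGraph.mem_neighborFinset, mem_erase]
      exact ⟨fun h => ⟨h.1.ne', h.2⟩, fun h => ⟨hs hv h.2 h.1.symm, h.2⟩⟩
    have hrow (v) (hv : v ∈ s) : (adjMat G *ᵥ x) v = #s - 1 := by
      simp [adjMat_mulVec_apply, x, hinter v hv, card_erase_of_mem hv, Nat.cast_pred hne.card_pos]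
    simp [dotProduct, x, sum_congr rfl hrow, mul_sub]
  by_contra! hle
  have heigen := adjMat_mulVec_eq_of_le_dotProduct (G := G) (x := x) <| by
    rw [hxx, hxGx, mul_comm]
    gcongr
  obtain ⟨v, hv⟩ := hne
  obtain ⟨u, hu⟩ : ∃ u, u ∉ s := by simpa [eq_univ_iff_forall] using huniv
  have hpos := pos_of_adjMat_mulVec_eq hG.preconnected
    (fun w => by by_cases hw : w ∈ s <;> simp [x, hw])
    (fun h => by simpa [x, hv] using congrFun h v)
    heigen u
  simp [x, hu] at hpos

end SpectralRadius

section EnclosedSets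

open Matrix

variable {V : Type*} [Fintype V] {G : SimpleGraph V} {S I : Finset V} {n k : ℕ}

theorem adjMat_mulVec_apply_le_sum {w : V → ℝ} (hw : 0 ≤ w) {v : V} {T : Finset V}
    (hT : ∀ u, G.Adj v u → u ∈ T) : (adjMat G *ᵥ w) v ≤ ∑ u ∈ T, w u := by
  rw [adjMat_mulVec_apply]
  exact sum_le_sum_of_subset_of_nonneg (fun u hu => hT u (by simpa using hu)) fun u _ _ => hw u

/-- The hypotheses say that the weight equal to `1` on `S`, `b` on `I` and `c` elsewhere satisfies
`A w ≤ r w` when `G` has all the edges that `hI` allows. -/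
theorem specRad_le_of_subset_enclosed_sdiff [Nonempty V] {b c r : ℝ}
    (hI : I ⊆ enclosed G S \ S) (hb : 0 < b) (hc : 0 < c)
    (hSr : #S + #I * b + #(S ∪ I)ᶜ * c ≤ r + 1) (hIr : #S ≤ r * b)
    (hRr : #S + #(S ∪ I)ᶜ * c ≤ (r + 1) * c) : specRad G ≤ r := by
  let w : V → ℝ := fun v => if v ∈ S then 1 else if v ∈ I then b else c
  have hw : ∀ v, 0 < w v := fun v => by
    dsimp only [w]
    split_ifs <;> positivity
  have hw₀ : 0 ≤ w := fun v => (hw v).le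
  have hdisj : Disjoint S I := (disjoint_of_subset_left hI sdiff_disjoint).symm
  have hIS {v} (hv : v ∈ I) : ∀ u, G.Adj v u → u ∈ S := mem_enclosed.1 (mem_sdiff.1 (hI hv)).1
  have hwS {v} (hv : v ∈ S) : w v = 1 := if_pos hv
  have hwI {v} (hv : v ∈ I) : w v = b := by simp [w, hv, disjoint_right.1 hdisj hv]
  have hwR {v} (hv : v ∈ (S ∪ I)ᶜ) : w v = c := by
    simp only [mem_compl, mem_union, not_or] at hv
    simp [w, hv]
  have hsumS : ∑ v ∈ S, w v = #S := by simp [sum_congr rfl fun _ => hwS]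
  have hsumI : ∑ v ∈ I, w v = #I * b := by simp [sum_congr rfl fun _ => hwI]
  have hsumR : ∑ v ∈ (S ∪ I)ᶜ, w v = #(S ∪ I)ᶜ * c := by
    rw [sum_congr rfl fun _ => hwR, sum_const, nsmul_eq_mul]
  refine specRad_le_of_adjMat_mulVec_le hw fun v => ?_
  rw [Pi.smul_apply, smul_eq_mul]
  by_cases hvS : v ∈ S
  · have hrow := adjMat_mulVec_apply_le_sum (G := G) hw₀ (v := v) (T := univ.erase v)
      fun u huv => by simp [huv.ne']
    rw [sum_erase_eq_sub (mem_univ v), ← sum_add_sum_compl (S ∪ I), sum_union hdisj, hsumS,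
      hsumI, hsumR] at hrow
    rw [hwS hvS] at hrow ⊢
    linarith
  by_cases hvI : v ∈ I
  · rw [hwI hvI]
    exact ((adjMat_mulVec_apply_le_sum hw₀ (hIS hvI)).trans_eq hsumS).trans hIr
  have hvR : v ∈ (S ∪ I)ᶜ := by simp [hvS, hvI]
  have hrow := adjMat_mulVec_apply_le_sum (G := G) hw₀ (v := v)
    (T := (S ∪ (S ∪ I)ᶜ).erase v) fun u huv => by
      have huI : u ∉ I := fun hu => hvS (hIS hu v huv.symm)
      simpa [huv.ne', huI] using em _
  rw [sum_erase_eq_sub (mem_union_right _ hvR), sum_union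
    (disjoint_compl_right.mono_left subset_union_left), hsumS, hsumR] at hrow
  rw [hwR hvR] at hrow ⊢
  linarith

theorem sq_mul_le_sub_one_mul {s : ℕ} (hk : 1 ≤ k) (hn : 7 ≤ n) (hs : 2 ≤ s)
    (hsn : (k + 2) * s ≤ n) :
    (s ^ 2 * ((k + 2) * s - (k + 1)) : ℝ) ≤ (s - 1) * (n - k - 2) * (n - k - 1) := by
  obtain rfl | hs := hs.eq_or_lt
  · obtain ⟨m, rfl⟩ : ∃ m, n = m + k + 2 := ⟨n - k - 2, by omega⟩
    have hm : 4 * (k + 3) ≤ m * (m + 1) := by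
      obtain rfl | _ := hk.eq_or_lt
      · nlinarith
      · exact Nat.mul_le_mul (by omega) (by omega)
    rify at hm
    push_cast
    linarith
  · have hs₃ : (3 : ℝ) ≤ s := by exact_mod_cast hs
    rify at hk hsn
    have hsn' : 3 * (s - 1 : ℝ) ≤ n - k - 2 := by nlinarith
    exact mul_le_mul (by nlinarith) (by linarith) (by nlinarith) (by nlinarith)

theorem card_compl_union_add_mul (hSI : Disjoint S I) (hcard : #I = (k + 1) * #S) :
    #(S ∪ I)ᶜ + (k + 2) * #S = Fintype.card V := by
  rw [← card_compl_add_card (S ∪ I), card_union_of_disjoint hSI, hcard]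
  ring

theorem specRad_le_of_card_eq_mul (hk : 1 ≤ k) (hV : 7 ≤ Fintype.card V) (hS : 2 ≤ #S)
    (hI : I ⊆ enclosed G S \ S) (hcard : #I = (k + 1) * #S) :
    specRad G ≤ Fintype.card V - k - 2 := by
  have hR := card_compl_union_add_mul (disjoint_of_subset_left hI sdiff_disjoint).symm hcard
  have harith := sq_mul_le_sub_one_mul hk hV hS (by omega)
  have : Nonempty V := Fintype.card_pos_iff.1 (by omega)
  rify at hk hV hS hR hcard
  set s : ℝ := (#S : ℝ)
  set r : ℝ := Fintype.card V - k - 2 with hr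
  set d : ℝ := (k + 2) * s - (k + 1) with hd
  have hRd : (#(S ∪ I)ᶜ : ℝ) = r + 1 - d := by linarith
  have hd₀ : 0 < d := by nlinarith
  have hr₀ : 0 < r := by nlinarith
  refine specRad_le_of_subset_enclosed_sdiff (b := s / r) (c := s / d) hI (by positivity)
    (by positivity) ?_ (mul_div_cancel₀ _ hr₀.ne').ge ?_
  · rw [hRd, hcard]
    have hfrac : s * (s / r) ≤ (r + 1) * (s - 1) / d := by
      rw [← mul_div_assoc, div_le_div_iff₀ hr₀ hd₀]
      linarith
    calc s + (k + 1) * s * (s / r) + (r + 1 - d) * (s / d)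
        ≤ s + (k + 1) * ((r + 1) * (s - 1) / d) + (r + 1 - d) * (s / d) := by
          rw [mul_assoc]
          gcongr
      _ = r + 1 := by
          field_simp
          rw [hd]
          ring
  · rw [hRd]
    field_simp
    linarith

end EnclosedSets

section Extremal

variable {V : Type*} [Fintype V] {G : SimpleGraph V} {S I : Finset V} {n k : ℕ}

theorem oneJoinCliquePlusIso'_adj {i j : Fin n} :
    (oneJoinCliquePlusIso' n k).Adj i j ↔
      i ≠ j ∧ (i.val = 0 ∨ j.val = 0 ∨ (i.val < n - (k + 1) ∧ j.val < n - (k + 1))) := by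
  simp only [oneJoinCliquePlusIso', SimpleGraph.fromRel_adj]
  tauto

theorem connected_oneJoinCliquePlusIso' [NeZero n] : (oneJoinCliquePlusIso' n k).Connected :=
  SimpleGraph.connected_iff_exists_forall_reachable _ |>.2 ⟨0, fun i => by
    obtain rfl | hi := eq_or_ne 0 i
    · rfl
    · exact (oneJoinCliquePlusIso'_adj.2 ⟨hi, .inl rfl⟩).reachable⟩

theorem sub_lt_specRad_oneJoinCliquePlusIso' (hn : k + 2 ≤ n) :
    (n - k - 2 : ℝ) < specRad (oneJoinCliquePlusIso' n k) := by
  have : NeZero n := ⟨by omega⟩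
  let s : Finset (Fin n) := {i | i.val < n - (k + 1)}
  have hs : (oneJoinCliquePlusIso' n k).IsClique s := fun i hi j hj hij =>
    oneJoinCliquePlusIso'_adj.2 ⟨hij, .inr <| .inr ⟨by simpa [s] using hi, by simpa [s] using hj⟩⟩
  have hcard : #s = n - (k + 1) := by rw [Fin.card_filter_val_lt, min_eq_right (by omega)]
  have hne : s.Nonempty := card_pos.1 (by omega)
  have huniv : s ≠ univ := fun h => by
    rw [h, card_univ, Fintype.card_fin] at hcard
    omega
  convert card_sub_one_lt_specRad_of_isClique connected_oneJoinCliquePlusIso' hs hne huniv using 1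
  rw [hcard, Nat.cast_sub (by omega)]
  push_cast
  ring

theorem specRad_lt_specRad_oneJoinCliquePlusIso' (hk : 1 ≤ k) (hV : 7 ≤ Fintype.card V)
    (hS : 2 ≤ #S) (hI : I ⊆ enclosed G S \ S) (hcard : #I = (k + 1) * #S) :
    specRad G < specRad (oneJoinCliquePlusIso' (Fintype.card V) k) := by
  have hR := card_compl_union_add_mul (disjoint_of_subset_left hI sdiff_disjoint).symm hcard
  exact (specRad_le_of_card_eq_mul hk hV hS hI hcard).trans_lt
    (sub_lt_specRad_oneJoinCliquePlusIso' (by nlinarith))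

theorem exists_equiv_fin_of_notMem (hV : Fintype.card V = n) (hI : #I = k + 1) {v : V}
    (hv : v ∉ I) : ∃ σ : V ≃ Fin n, (σ v).val = 0 ∧ ∀ i ∉ I, (σ i).val < n - (k + 1) := by
  have hn : k + 1 < n := by
    rw [← hI, ← hV]
    exact card_lt_univ_of_notMem hv
  have : NeZero n := ⟨by omega⟩
  let f : V ≃ Fin n := Fintype.equivFinOfCardEq hV
  have hcard : Fintype.card {j // f.symm j ∈ I} =
      Fintype.card {j : Fin n // ¬ j.val < n - (k + 1)} := by
    rw [Fintype.card_congr (f.symm.subtypeEquiv (q := (· ∈ I)) fun _ => Iff.rfl),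
      Fintype.card_coe, hI, Fintype.card_subtype_compl, Fintype.card_fin, Fintype.card_subtype,
      Fin.card_filter_val_lt]
    omega
  let τ : V ≃ Fin n := f.trans (Fintype.equivOfCardEq hcard).extendSubtype
  have hτ (i) (hi : i ∉ I) : (τ i).val < n - (k + 1) :=
    not_not.1 <| (Fintype.equivOfCardEq hcard).extendSubtype_not_mem (f i) (by simpa using hi)
  refine ⟨τ.trans (Equiv.swap (τ v) 0), by simp, fun i hi => ?_⟩
  rw [Equiv.trans_apply, Equiv.swap_apply_def]
  split_ifs
  · exact Nat.sub_pos_of_lt hn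
  · exact hτ v hv
  · exact hτ i hi

theorem nonempty_iso_oneJoinCliquePlusIso' (hV : Fintype.card V = n) {v : V}
    (hI : I ⊆ enclosed G {v} \ {v}) (hcard : #I = k + 1)
    (hρ : specRad (oneJoinCliquePlusIso' n k) ≤ specRad G) :
    Nonempty (G ≃g oneJoinCliquePlusIso' n k) := by
  have hnbr : ∀ i ∈ I, ∀ u, G.Adj i u → u = v := fun i hi u hiu =>
    mem_singleton.1 (mem_enclosed.1 (mem_sdiff.1 (hI hi)).1 u hiu)
  obtain ⟨σ, hσv, hσ⟩ := exists_equiv_fin_of_notMem hV hcard fun hv =>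
    (mem_sdiff.1 (hI hv)).2 (mem_singleton_self v)
  have : NeZero n := ⟨fun h => (h ▸ σ v).elim0⟩
  let H := (oneJoinCliquePlusIso' n k).comap σ
  let e : H ≃g oneJoinCliquePlusIso' n k := SimpleGraph.Iso.comap σ _
  have hle : G ≤ H := fun i j hij => by
    refine oneJoinCliquePlusIso'_adj.2 ⟨σ.injective.ne hij.ne, ?_⟩
    by_cases hi : i ∈ I
    · exact .inr <| .inl <| hnbr i hi j hij ▸ hσv
    by_cases hj : j ∈ I
    · exact .inl <| hnbr j hj i hij.symm ▸ hσv
    · exact .inr <| .inr ⟨hσ i hi, hσ j hj⟩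
  obtain hG | hlt := hle.eq_or_lt
  · exact ⟨hG ▸ e⟩
  · have hspec := specRad_lt_specRad_of_lt
      (e.connected_iff.2 connected_oneJoinCliquePlusIso') hlt
    exact absurd hρ (specRad_eq_of_iso e ▸ hspec).not_ge

end Extremal

theorem spectral_spanning_tree_leaf_degree_general {V : Type*} [Fintype V] {n k : ℕ} (hk : 1 ≤ k)
    (hV : Fintype.card V = n) (hn : 7 ≤ n) (G : SimpleGraph V) (hG : G.Connected)
    (hρ : specRad (oneJoinCliquePlusIso' n k) ≤ specRad G) :
    HasSpanningTreeLeafDegLE G k ∨ Nonempty (G ≃g oneJoinCliquePlusIso' n k) := by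
  rw [or_iff_not_imp_left]
  intro hT
  obtain ⟨S, hS, hcard⟩ :
      ∃ S : Finset V, S.Nonempty ∧ (k + 1) * #S ≤ #(enclosed G S \ S) := by
    by_contra! h
    exact hT (hasSpanningTreeLeafDegLE_of_card_isolated_lt hG (by omega) hk h)
  obtain ⟨I, hI, hIcard⟩ := exists_subset_card_eq hcard
  obtain hS₁ | hS₂ : #S = 1 ∨ 2 ≤ #S := by
    have := hS.card_pos
    omega
  · obtain ⟨v, rfl⟩ := card_eq_one.1 hS₁
    exact nonempty_iso_oneJoinCliquePlusIso' hV hI (by simpa using hIcard) hρ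
  · subst hV
    exact absurd hρ (specRad_lt_specRad_oneJoinCliquePlusIso' hk hn hS₂ hI hIcard).not_ge

/-- **Theorem (spectral radius and spanning trees with bounded leaf degree).**
Let `k ≥ 1` and let `G` be a connected graph of order `n ≥ 2k + 12`.
If `ρ(G) ≥ ρ(K₁ ∨ (K_{n-k-2} + (k+1)K₁))`, then `G` has a spanning tree with
leaf degree at most `k` unless `G ≅ K₁ ∨ (K_{n-k-2} + (k+1)K₁)`. -/
theorem spectral_spanning_tree_leaf_degree {n k : ℕ} (hk : 1 ≤ k)
    (hn : 2 * k + 12 ≤ n) (G : SimpleGraph (Fin n)) (hG : G.Connected)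
    (hρ : specRad (oneJoinCliquePlusIso' n k) ≤ specRad G) :
    HasSpanningTreeLeafDegLE G k ∨ Nonempty (G ≃g oneJoinCliquePlusIso' n k) :=
  spectral_spanning_tree_leaf_degree_general hk (Fintype.card_fin n) (by omega) G hG hρ
end

section
/- Let k ≥ 1 be an integer and let G be a connected graph of order n ≥ 2k + 12. If the signless Laplacian spectral radius satisfies q(G) ≥ q(K₁ ∨ (K_{n−k−2} + (k+1)K₁)), then G has a spanning tree with leaf degree at most k, unless G is isomorphic to K₁ ∨ (K_{n−k−2} + (k+1)K₁). -/
open Finset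
open scoped Classical

/-! Call `G` expanding if `|Y| < (k + 1)|N(Y)|` for every nonempty set `Y` of vertices. Applied to
the leaves adjacent to a vertex, this bounds the leaf degree of an expanding tree by `k`. A
connected spanning subgraph that is minimal among the expanding ones is a tree: each edge of a cycle
would be blocked by a set on which the inequality holds by a margin of one or two, and submodularity
lets blocking sets be merged around the cycle until they contradict each other.

If `G` is not expanding, it has a nonempty set `S` and a set `I` of `(k + 1)|S|` vertices, disjoint
from `S`, with `N(I) ⊆ S`. When `|S| ≥ 2`, this costs so many edges that the bound
`q (n - 1) ≤ 2m + (n - 1)(n - 2)` of Feng and Yu gives `q < 2(n - k - 2)`, whereas the clique on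
`n - k - 1` vertices forces `q ≥ 2(n - k - 2)` in the extremal graph. When `|S| = 1`, `G` is a
spanning subgraph of the extremal graph, and since `q` strictly decreases on removing edges from a
connected graph, the two are isomorphic.
-/

namespace LeafDegree

section Connectivity

variable {V : Type*} {G : SimpleGraph V}

lemma exists_adj_notMem (hG : G.Connected) {s : Set V}
    (hs : s.Nonempty) (hs' : s ≠ Set.univ) : ∃ u ∈ s, ∃ v ∉ s, G.Adj u v := by
  obtain ⟨a, ha⟩ := hs
  obtain ⟨b, hb⟩ := (Set.ne_univ_iff_exists_notMem s).1 hs'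
  obtain ⟨p⟩ := hG.preconnected a b
  obtain ⟨d, -, hd, hd'⟩ := p.exists_boundary_dart s ha hb
  exact ⟨d.fst, hd, d.snd, hd', d.adj⟩

/-- `s(x, y)` is an edge of some cycle, that is, an edge that is not a bridge. -/
def OnCycle (G : SimpleGraph V) (x y : V) : Prop :=
  ∃ (v : V) (c : G.Walk v v), c.IsCycle ∧ s(x, y) ∈ c.edges

namespace OnCycle

variable {x y : V}

lemma symm (h : OnCycle G x y) : OnCycle G y x :=
  let ⟨v, c, hc, he⟩ := h
  ⟨v, c, hc, Sym2.eq_swap ▸ he⟩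

lemma adj (h : OnCycle G x y) : G.Adj x y :=
  let ⟨_, c, _, he⟩ := h
  c.adj_of_mem_edges he

lemma exists_isCycle (h : OnCycle G x y) : ∃ c : G.Walk x x, c.IsCycle :=
  let ⟨_, c, hc, he⟩ := h
  ⟨c.rotate x (c.fst_mem_support_of_mem_edges he), (SimpleGraph.Walk.isCycle_rotate _).2 hc⟩

lemma snd {c : G.Walk x x} (hc : c.IsCycle) : OnCycle G x c.snd :=
  ⟨x, c, hc, SimpleGraph.Walk.mk_start_snd_mem_edges hc.not_nil⟩

lemma penultimate {c : G.Walk x x} (hc : c.IsCycle) : OnCycle G x c.penultimate :=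
  symm ⟨x, c, hc, SimpleGraph.Walk.mk_penultimate_end_mem_edges hc.not_nil⟩

lemma exists_ne (h : OnCycle G x y) : ∃ z ≠ y, OnCycle G x z := by
  obtain ⟨c, hc⟩ := h.exists_isCycle
  by_cases hy : c.snd = y
  · exact ⟨c.penultimate, hy ▸ hc.snd_ne_penultimate.symm, penultimate hc⟩
  · exact ⟨c.snd, hy, snd hc⟩

end OnCycle

end Connectivity

variable {V : Type*} [Fintype V] {G : SimpleGraph V} {k : ℕ}

/-- The open neighbourhood `N(Y)` of a set of vertices; it may meet `Y`. -/
noncomputable def nbhd (G : SimpleGraph V) (Y : Finset V) : Finset V :=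
  {v | ∃ x ∈ Y, G.Adj x v}

/-- The surplus `(k + 1)|N(Y)| - |Y|` of a set in Hall's condition, integer valued so that it can
be negative. -/
noncomputable def surplus (G : SimpleGraph V) (k : ℕ) (Y : Finset V) : ℤ :=
  (k + 1) * #(nbhd G Y) - #Y

/-- The strong Hall condition `|Y| < (k + 1)|N(Y)|` for nonempty `Y`; it plays the role of Kaneko's
condition on the number of isolated vertices of `G - S`. -/
def IsExpanding (G : SimpleGraph V) (k : ℕ) : Prop :=
  ∀ Y : Finset V, Y.Nonempty → 1 ≤ surplus G k Y

/-- A tight set is one whose surplus is at most `1`, the least value allowed by `IsExpanding` for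
nonempty sets. -/
abbrev IsTight (G : SimpleGraph V) (k : ℕ) (Y : Finset V) : Prop :=
  surplus G k Y ≤ 1

section Surplus

variable {x y v : V} {U Y Z : Finset V}

lemma mem_nbhd : v ∈ nbhd G Y ↔ ∃ x ∈ Y, G.Adj x v := by simp [nbhd]

lemma mem_nbhd_of_adj (hx : x ∈ Y) (h : G.Adj x v) : v ∈ nbhd G Y := mem_nbhd.2 ⟨x, hx, h⟩

lemma nbhd_mono (h : Y ⊆ Z) : nbhd G Y ⊆ nbhd G Z := fun _ hv ↦
  let ⟨_, hx, hxv⟩ := mem_nbhd.1 hv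
  mem_nbhd_of_adj (h hx) hxv

lemma nbhd_union : nbhd G (Y ∪ Z) = nbhd G Y ∪ nbhd G Z := by
  ext v
  simp only [mem_nbhd, mem_union, or_and_right, exists_or]

lemma nbhd_insert_of_subset (h : ∀ v, G.Adj x v → v ∈ nbhd G Y) :
    nbhd G (insert x Y) = nbhd G Y := by
  refine (nbhd_mono (subset_insert x Y)).antisymm' fun v hv ↦ ?_
  obtain ⟨t, ht, htv⟩ := mem_nbhd.1 hv
  rcases mem_insert.1 ht with rfl | ht
  · exact h v htv
  · exact mem_nbhd_of_adj ht htv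

lemma nbhd_empty : nbhd G ∅ = ∅ := by simp [nbhd]

lemma surplus_empty : surplus G k ∅ = 0 := by simp [surplus, nbhd_empty]

lemma surplus_insert (hx : x ∉ Y) (h : ∀ v, G.Adj x v → v ∈ nbhd G Y) :
    surplus G k (insert x Y) = surplus G k Y - 1 := by
  rw [surplus, surplus, nbhd_insert_of_subset h, card_insert_of_notMem hx]
  push_cast
  ring

lemma surplus_union_add_surplus_inter (G : SimpleGraph V) (k : ℕ) (Y Z : Finset V) :
    surplus G k (Y ∪ Z) + surplus G k (Y ∩ Z) =
      surplus G k Y + surplus G k Z -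
        (k + 1) * (#(nbhd G Y ∩ nbhd G Z) - #(nbhd G (Y ∩ Z))) := by
  have hsets := card_union_add_card_inter Y Z
  have hnbhd := card_union_add_card_inter (nbhd G Y) (nbhd G Z)
  rw [← nbhd_union] at hnbhd
  zify at hsets hnbhd
  unfold surplus
  linear_combination ((k : ℤ) + 1) * hnbhd - hsets

lemma surplus_union_add_surplus_inter_le (G : SimpleGraph V) (k : ℕ) (Y Z : Finset V) :
    surplus G k (Y ∪ Z) + surplus G k (Y ∩ Z) ≤ surplus G k Y + surplus G k Z := by
  rw [surplus_union_add_surplus_inter, sub_le_self_iff]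
  have := card_le_card (subset_inter (nbhd_mono (G := G) (inter_subset_left (s₁ := Y) (s₂ := Z)))
    (nbhd_mono inter_subset_right))
  have : (0 : ℤ) ≤ #(nbhd G Y ∩ nbhd G Z) - #(nbhd G (Y ∩ Z)) := by lia
  positivity

lemma nbhd_sdiff_nbhd_subset : nbhd G (U \ nbhd G U) ⊆ nbhd G U \ U := fun v hv ↦ by
  obtain ⟨x, hx, hxv⟩ := mem_nbhd.1 hv
  obtain ⟨hxU, hx⟩ := mem_sdiff.1 hx
  exact mem_sdiff.2 ⟨mem_nbhd_of_adj hxU hxv, fun hv ↦ hx (mem_nbhd_of_adj hv hxv.symm)⟩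

lemma surplus_sdiff_nbhd_le (G : SimpleGraph V) (k : ℕ) (U : Finset V) :
    surplus G k (U \ nbhd G U) + k * #(U ∩ nbhd G U) ≤ surplus G k U := by
  have hsplit := card_sdiff_add_card_inter U (nbhd G U)
  have hnbhd := card_sdiff_add_card_inter (nbhd G U) U
  have hle := card_le_card (nbhd_sdiff_nbhd_subset (G := G) (U := U))
  rw [inter_comm] at hnbhd
  zify at hsplit hnbhd hle
  have := mul_le_mul_of_nonneg_left hle (by positivity : (0 : ℤ) ≤ k + 1)
  unfold surplus
  linear_combination this + ((k : ℤ) + 1) * hnbhd - hsplit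

lemma two_le_card_inter_nbhd (h : (U ∩ nbhd G U).Nonempty) : 2 ≤ #(U ∩ nbhd G U) := by
  obtain ⟨v, hv⟩ := h
  obtain ⟨hvU, hv'⟩ := mem_inter.1 hv
  obtain ⟨x, hxU, hxv⟩ := mem_nbhd.1 hv'
  exact one_lt_card.2 ⟨v, hv, x, mem_inter.2 ⟨hxU, mem_nbhd_of_adj hvU hxv.symm⟩, hxv.ne'⟩

lemma IsExpanding.surplus_nonneg (h : IsExpanding G k) (Y : Finset V) : 0 ≤ surplus G k Y := by
  rcases Y.eq_empty_or_nonempty with rfl | hY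
  · exact surplus_empty.ge
  · exact zero_le_one.trans (h Y hY)

lemma IsExpanding.surplus_union_le (h : IsExpanding G k) (Y Z : Finset V) :
    surplus G k (Y ∪ Z) ≤ surplus G k Y + surplus G k Z := by
  linarith [surplus_union_add_surplus_inter_le G k Y Z, h.surplus_nonneg (Y ∩ Z)]

lemma IsExpanding.isTight_union (h : IsExpanding G k) (hY : IsTight G k Y) (hZ : IsTight G k Z)
    (hYZ : (nbhd G Y ∩ nbhd G Z).Nonempty) : IsTight G k (Y ∪ Z) := by
  rcases (Y ∩ Z).eq_empty_or_nonempty with hinter | hinter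
  · have hsum := surplus_union_add_surplus_inter G k Y Z
    have hcard : (1 : ℤ) ≤ (k + 1) * #(nbhd G Y ∩ nbhd G Z) := by
      have := Nat.mul_pos k.succ_pos hYZ.card_pos
      exact_mod_cast this
    rw [hinter, surplus_empty, nbhd_empty, card_empty, Nat.cast_zero] at hsum
    linarith
  · linarith [surplus_union_add_surplus_inter_le G k Y Z, h _ hinter]

lemma IsExpanding.mem_of_isTight (h : IsExpanding G k) (hY : IsTight G k Y)
    (hx : ∀ v, G.Adj x v → v ∈ nbhd G Y) : x ∈ Y := by
  by_contra hxY
  have := h _ (insert_nonempty x Y)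
  rw [surplus_insert hxY hx] at this
  linarith

end Surplus

/-- The standing assumptions on a graph in Kaneko's theorem: `k ≥ 1`, connected, at least four
vertices, and strong Hall condition. -/
structure IsKaneko (G : SimpleGraph V) (k : ℕ) : Prop where
  one_le : 1 ≤ k
  connected : G.Connected
  four_le_card : 4 ≤ Fintype.card V
  isExpanding : IsExpanding G k

namespace IsKaneko

variable {x y z : V} {U Y Z Z' : Finset V}

lemma mul_card_inter_nbhd_lt_surplus (hG : IsKaneko G k) (hU : U.Nonempty)
    (hcard : surplus G k U < Fintype.card V) : k * #(U ∩ nbhd G U) < surplus G k U := by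
  rcases (U \ nbhd G U).eq_empty_or_nonempty with hsub | hne
  · rw [sdiff_eq_empty_iff_subset] at hsub
    rw [inter_eq_left.2 hsub]
    obtain ⟨u, hu, v, hv, huv⟩ : ∃ u ∈ (U : Set V), ∃ v ∉ (U : Set V), G.Adj u v := by
      refine exists_adj_notMem hG.connected (coe_nonempty.2 hU) fun huniv ↦ hcard.not_ge ?_
      rw [coe_eq_univ] at huniv
      rw [surplus, (univ_subset_iff.1 (huniv ▸ hsub) : nbhd G U = univ), huniv, card_univ]
      nlinarith [hG.one_le]
    have hlt : #U < #(nbhd G U) :=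
      card_lt_card ⟨hsub, fun h ↦ hv (h (mem_nbhd_of_adj hu huv))⟩
    rw [surplus]
    zify at hlt
    nlinarith
  · linarith [surplus_sdiff_nbhd_le G k U, hG.isExpanding _ hne]

lemma not_adj_of_surplus_le_two (hG : IsKaneko G k) (hU : surplus G k U ≤ 2) (hx : x ∈ U)
    (hy : y ∈ U) : ¬ G.Adj x y := fun hxy ↦ by
  have hcard := two_le_card_inter_nbhd ⟨y, mem_inter.2 ⟨hy, mem_nbhd_of_adj hx hxy⟩⟩
  have hlt := hG.mul_card_inter_nbhd_lt_surplus ⟨x, hx⟩ (by linarith [hG.four_le_card])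
  have := hG.one_le
  zify at *
  nlinarith

lemma card_inter_nbhd_le_two (hG : IsKaneko G k) (hU : surplus G k U ≤ 3) :
    #(U ∩ nbhd G U) ≤ 2 := by
  rcases U.eq_empty_or_nonempty with rfl | hne
  · simp
  have hlt := hG.mul_card_inter_nbhd_lt_surplus hne (by linarith [hG.four_le_card])
  have := hG.one_le
  by_contra!
  zify at *
  nlinarith

lemma notMem_nbhd_of_isTight (hG : IsKaneko G k) (hY : IsTight G k Y) (hZ : IsTight G k Z)
    (hx : x ∈ Y) : x ∉ nbhd G Z := fun hx' ↦ by
  obtain ⟨t, ht, htx⟩ := mem_nbhd.1 hx'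
  refine hG.not_adj_of_surplus_le_two ?_ (mem_union_right Y ht) (mem_union_left Z hx) htx
  linarith [hG.isExpanding.surplus_union_le Y Z]

end IsKaneko

/-- A tight set `Z` witnessing that `s(x, y)` cannot be deleted: `insert x Z` has neighbourhood
`N(Z)` after the deletion and then violates the strong Hall condition. -/
structure IsEndBlocker (G : SimpleGraph V) (k : ℕ) (x y : V) (Z : Finset V) : Prop where
  isTight : IsTight G k Z
  notMem_nbhd : y ∉ nbhd G Z
  mem_nbhd ⦃u : V⦄ : G.Adj x u → u ≠ y → u ∈ nbhd G Z

/-- A set `Z` of surplus at most `2` witnessing that `s(x, y)` cannot be deleted, through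
`insert x (insert y Z)`. -/
structure IsBothBlocker (G : SimpleGraph V) (k : ℕ) (x y : V) (Z : Finset V) : Prop where
  surplus_le : surplus G k Z ≤ 2
  left_notMem_nbhd : x ∉ nbhd G Z
  right_notMem_nbhd : y ∉ nbhd G Z
  mem_nbhd_left ⦃u : V⦄ : G.Adj x u → u ≠ y → u ∈ nbhd G Z
  mem_nbhd_right ⦃u : V⦄ : G.Adj y u → u ≠ x → u ∈ nbhd G Z

/-- The exceptional obstruction to deleting `s(x, y)`, occurring for `k = 1` only: apart from each
other, `x` and `y` have at most the common neighbour `z`, at which they would become two leaves. -/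
structure IsPendantTriangle (G : SimpleGraph V) (k : ℕ) (x y z : V) : Prop where
  eq_one : k = 1
  eq_or_eq_left ⦃u : V⦄ : G.Adj x u → u = y ∨ u = z
  eq_or_eq_right ⦃u : V⦄ : G.Adj y u → u = x ∨ u = z

/-- One of the obstructions to deleting the edge `s(x, y)` while keeping the strong Hall
condition. -/
def IsBlocked (G : SimpleGraph V) (k : ℕ) (x y : V) : Prop :=
  (∃ Z, IsEndBlocker G k x y Z) ∨ (∃ Z, IsEndBlocker G k y x Z) ∨
    (∃ Z, IsBothBlocker G k x y Z) ∨ ∃ z, IsPendantTriangle G k x y z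

section Classification

variable {x y z : V} {Y Z : Finset V}

lemma IsEndBlocker.notMem (h : IsEndBlocker G k x y Z) (hxy : G.Adj x y) : x ∉ Z :=
  fun hx ↦ h.notMem_nbhd (mem_nbhd_of_adj hx hxy)

lemma IsBothBlocker.left_notMem (h : IsBothBlocker G k x y Z) (hxy : G.Adj x y) : x ∉ Z :=
  fun hx ↦ h.right_notMem_nbhd (mem_nbhd_of_adj hx hxy)

lemma mem_nbhd_deleteEdges {t v : V} (ht : t ∈ Y) (htv : G.Adj t v) (hne : s(t, v) ≠ s(x, y)) :
    v ∈ nbhd (G.deleteEdges {s(x, y)}) Y :=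
  mem_nbhd_of_adj ht (by simpa [SimpleGraph.deleteEdges_adj, htv] using hne)

lemma isEndBlocker_erase (hk : 1 ≤ k) (hE : IsExpanding G k) (hx : x ∈ Y)
    (hy : y ∉ nbhd (G.deleteEdges {s(x, y)}) Y)
    (hxy : y ∈ Y → x ∈ nbhd (G.deleteEdges {s(x, y)}) Y)
    (hY : surplus (G.deleteEdges {s(x, y)}) k Y ≤ 0) :
    IsEndBlocker G k x y (Y.erase x) := by
  set N' := nbhd (G.deleteEdges {s(x, y)}) Y with hN'
  have hsub : nbhd G (Y.erase x) ⊆ N' := fun v hv ↦ by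
    obtain ⟨t, ht, htv⟩ := mem_nbhd.1 hv
    obtain ⟨htx, htY⟩ := mem_erase.1 ht
    by_cases he : s(t, v) = s(x, y)
    · obtain ⟨rfl, rfl⟩ : t = y ∧ v = x := by simpa [htx] using he
      exact hxy htY
    · exact mem_nbhd_deleteEdges htY htv he
  have hcount : (k + 1) * ((#N' : ℤ) - #(nbhd G (Y.erase x))) ≤ 1 - surplus G k (Y.erase x) := by
    have hcard := card_erase_add_one hx
    zify at hcard
    rw [surplus, ← hN'] at hY
    rw [surplus]
    linarith
  have heq : nbhd G (Y.erase x) = N' := eq_of_subset_of_card_le hsub <| by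
    by_contra!
    have := hE.surplus_nonneg (Y.erase x)
    zify at *
    nlinarith
  refine ⟨?_, heq ▸ hy, fun u hu huy ↦ heq ▸ mem_nbhd_deleteEdges hx hu (by simp [huy, hu.ne'])⟩
  rw [heq, sub_self, mul_zero] at hcount
  exact sub_nonneg.1 hcount

lemma isBothBlocker_or_isPendantTriangle (hk : 1 ≤ k) (hE : IsExpanding G k) (hne : x ≠ y)
    (hx : x ∈ Y) (hy : y ∈ Y) (hx' : x ∉ nbhd (G.deleteEdges {s(x, y)}) Y)
    (hy' : y ∉ nbhd (G.deleteEdges {s(x, y)}) Y)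
    (hY : surplus (G.deleteEdges {s(x, y)}) k Y ≤ 0) :
    IsBothBlocker G k x y ((Y.erase x).erase y) ∨ ∃ z, IsPendantTriangle G k x y z := by
  set N' := nbhd (G.deleteEdges {s(x, y)}) Y with hN'
  set Z := (Y.erase x).erase y with hZ
  have hsub : nbhd G Z ⊆ N' := fun v hv ↦ by
    obtain ⟨t, ht, htv⟩ := mem_nbhd.1 hv
    simp only [hZ, mem_erase] at ht
    exact mem_nbhd_deleteEdges ht.2.2 htv (by simp [ht.1, ht.2.1])
  have hxN' ⦃u⦄ (hu : G.Adj x u) (huy : u ≠ y) : u ∈ N' :=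
    mem_nbhd_deleteEdges hx hu (by simp [huy, hu.ne'])
  have hyN' ⦃u⦄ (hu : G.Adj y u) (hux : u ≠ x) : u ∈ N' :=
    mem_nbhd_deleteEdges hy hu (by simp [hux, hu.ne'])
  have hcount : (k + 1) * ((#N' : ℤ) - #(nbhd G Z)) ≤ 2 - surplus G k Z := by
    have hcard := card_erase_add_one hx
    have hcard' := card_erase_add_one (mem_erase.2 ⟨hne.symm, hy⟩)
    zify at hcard hcard'
    rw [surplus, ← hN'] at hY
    rw [surplus]
    linarith
  rcases hsub.eq_or_ssubset with heq | hss
  · left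
    rw [heq, sub_self, mul_zero] at hcount
    exact ⟨sub_nonneg.1 hcount, heq ▸ hx', heq ▸ hy', heq ▸ hxN', heq ▸ hyN'⟩
  · right
    have hlt : (#(nbhd G Z) : ℤ) + 1 ≤ #N' := mod_cast card_lt_card hss
    have hZ0 : Z = ∅ := not_nonempty_iff_eq_empty.1 fun hne ↦ by
      have := hE Z hne
      zify at hk
      nlinarith
    rw [hZ0, nbhd_empty, card_empty] at hcount hlt
    rw [surplus_empty] at hcount
    have hone : #N' = 1 := by zify at *; nlinarith
    obtain ⟨z, hz⟩ := card_eq_one.1 hone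
    simp only [hz, mem_singleton] at hxN' hyN'
    exact ⟨z, by rw [hone] at hcount; zify at *; linarith,
      fun u hu ↦ or_iff_not_imp_left.2 (hxN' hu), fun u hu ↦ or_iff_not_imp_left.2 (hyN' hu)⟩

lemma isBlocked_of_not_isExpanding_deleteEdges (hk : 1 ≤ k) (hE : IsExpanding G k)
    (hxy : G.Adj x y) (hdel : ¬ IsExpanding (G.deleteEdges {s(x, y)}) k) : IsBlocked G k x y := by
  unfold IsExpanding at hdel
  push Not at hdel
  obtain ⟨Y, hYne, hY⟩ := hdel
  replace hY : surplus (G.deleteEdges {s(x, y)}) k Y ≤ 0 := by lia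
  by_cases hylost : y ∉ nbhd (G.deleteEdges {s(x, y)}) Y ∧ x ∈ Y
  · by_cases hxlost : x ∉ nbhd (G.deleteEdges {s(x, y)}) Y ∧ y ∈ Y
    · have := isBothBlocker_or_isPendantTriangle hk hE hxy.ne hylost.2 hxlost.2 hxlost.1 hylost.1 hY
      exact .inr (.inr (this.imp_left fun h ↦ ⟨_, h⟩))
    · exact .inl ⟨_, isEndBlocker_erase hk hE hylost.2 hylost.1 (by tauto) hY⟩
  by_cases hxlost : x ∉ nbhd (G.deleteEdges {s(x, y)}) Y ∧ y ∈ Y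
  · rw [Sym2.eq_swap] at hxlost hylost hY
    exact .inr (.inl ⟨_, isEndBlocker_erase hk hE hxlost.2 hxlost.1 (by tauto) hY⟩)
  have hsub : nbhd G Y ⊆ nbhd (G.deleteEdges {s(x, y)}) Y := fun v hv ↦ by
    obtain ⟨t, ht, htv⟩ := mem_nbhd.1 hv
    by_cases he : s(t, v) = s(x, y)
    · rcases Sym2.eq_iff.1 he with ⟨rfl, rfl⟩ | ⟨rfl, rfl⟩ <;> tauto
    · exact mem_nbhd_deleteEdges ht htv he
  have hcard : (#(nbhd G Y) : ℤ) ≤ #(nbhd (G.deleteEdges {s(x, y)}) Y) := mod_cast card_le_card hsub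
  have := hE Y hYne
  unfold surplus at *
  nlinarith

end Classification

namespace IsKaneko

variable {b u x y z : V} {B U Y Z Z' : Finset V}

lemma false_of_subset_of_surplus_le (hG : IsKaneko G k) (hZ : surplus G k Z ≤ 2)
    (hU : surplus G k U ≤ 3) (hZU : Z ⊆ U) (hZ'U : Z' ⊆ U) (hz : z ∈ nbhd G Z) (hzZ' : z ∉ Z')
    (hnbr : ∀ t ∈ Z, G.Adj z t → t ∈ nbhd G Z') : False := by
  obtain ⟨t, ht, htz⟩ := mem_nbhd.1 hz
  obtain ⟨t', ht', htt'⟩ := mem_nbhd.1 (hnbr t ht htz.symm)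
  have ht'Z : t' ∉ Z := fun h ↦ hG.not_adj_of_surplus_le_two hZ h ht htt'
  have hinter (s : V) (hs : s ∈ Z) (hs' : s ∈ nbhd G Z') : s = t := by
    have hsub : {s, t, t'} ⊆ U ∩ nbhd G U := by
      simp only [insert_subset_iff, singleton_subset_iff, mem_inter]
      exact ⟨⟨hZU hs, nbhd_mono hZ'U hs'⟩, ⟨hZU ht, mem_nbhd_of_adj (hZ'U ht') htt'⟩,
        hZ'U ht', mem_nbhd_of_adj (hZU ht) htt'.symm⟩
    by_contra hst
    have := (card_le_card hsub).trans (hG.card_inter_nbhd_le_two hU)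
    rw [card_eq_three.2 ⟨s, t, t', hst, ne_of_mem_of_not_mem hs ht'Z, htt'.ne', rfl⟩] at this
    lia
  have hsub : nbhd G (Z.erase t) ⊆ ((nbhd G Z).erase z).erase t' := fun v hv ↦ by
    obtain ⟨s, hs, hsv⟩ := mem_nbhd.1 hv
    obtain ⟨hst, hsZ⟩ := mem_erase.1 hs
    refine mem_erase.2 ⟨?_, mem_erase.2 ⟨?_, mem_nbhd_of_adj hsZ hsv⟩⟩ <;> rintro rfl
    · exact hst (hinter s hsZ (mem_nbhd_of_adj ht' hsv.symm))
    · exact hst (hinter s hsZ (hnbr s hsZ hsv.symm))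
  have hcard := card_le_card hsub
  have hcardz := card_erase_add_one hz
  have hcardt' := card_erase_add_one <| mem_erase.2
    ⟨(ne_of_mem_of_not_mem ht' hzZ' : t' ≠ z), mem_nbhd_of_adj ht htt'.symm⟩
  have hcardt := card_erase_add_one ht
  have hnonneg := hG.isExpanding.surplus_nonneg (Z.erase t)
  have := hG.one_le
  unfold surplus at hnonneg hZ
  zify at *
  nlinarith

lemma false_of_isBothBlocker_of_isEndBlocker_left (hG : IsKaneko G k) (hxy : G.Adj x y)
    (hxz : G.Adj x z) (hzy : z ≠ y) (h : IsBothBlocker G k x y Z)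
    (h' : IsEndBlocker G k x z Z') : False := by
  obtain ⟨t, ht, hty⟩ := mem_nbhd.1 (h'.mem_nbhd hxy hzy.symm)
  have htx : t ≠ x := ne_of_mem_of_not_mem ht (h'.notMem hxz)
  have hU : surplus G k (insert x (Z ∪ Z')) ≤ 2 := by
    rw [surplus_insert]
    · linarith [hG.isExpanding.surplus_union_le Z Z', h.surplus_le, h'.isTight]
    · simp [h.left_notMem hxy, h'.notMem hxz]
    · intro u hu
      rw [nbhd_union, mem_union]
      by_cases huy : u = y
      · exact .inr (huy ▸ mem_nbhd_of_adj ht hty)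
      · exact .inl (h.mem_nbhd_left hu huy)
  obtain ⟨s, hs, hst⟩ := mem_nbhd.1 (h.mem_nbhd_right hty.symm htx)
  exact hG.not_adj_of_surplus_le_two hU (by simp [hs]) (by simp [ht]) hst

lemma false_of_isBothBlocker_of_isEndBlocker_right (hG : IsKaneko G k) (hxy : G.Adj x y)
    (hxz : G.Adj x z) (hzy : z ≠ y) (h : IsBothBlocker G k x y Z)
    (h' : IsEndBlocker G k z x Z') : False := by
  have hU : surplus G k (Z ∪ Z') ≤ 3 := by
    linarith [hG.isExpanding.surplus_union_le Z Z', h.surplus_le, h'.isTight]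
  exact hG.false_of_subset_of_surplus_le h.surplus_le hU subset_union_left subset_union_right
    (h.mem_nbhd_left hxz hzy) (h'.notMem hxz.symm) fun t ht hzt ↦
      h'.mem_nbhd hzt (ne_of_mem_of_not_mem ht (h.left_notMem hxy))

lemma false_of_isBothBlocker_of_isBothBlocker (hG : IsKaneko G k) (hxy : G.Adj x y)
    (hxz : G.Adj x z) (hzy : z ≠ y) (h : IsBothBlocker G k x y Z)
    (h' : IsBothBlocker G k x z Z') : False := by
  have hU : surplus G k (insert x (Z ∪ Z')) ≤ 3 := by
    rw [surplus_insert]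
    · linarith [hG.isExpanding.surplus_union_le Z Z', h.surplus_le, h'.surplus_le]
    · simp [h.left_notMem hxy, h'.left_notMem hxz]
    · intro u hu
      rw [nbhd_union, mem_union]
      by_cases huy : u = y
      · exact .inr (h'.mem_nbhd_left hu (huy ▸ hzy.symm))
      · exact .inl (h.mem_nbhd_left hu huy)
  have hzZ' : z ∉ Z' := fun hz ↦ h'.left_notMem_nbhd (mem_nbhd_of_adj hz hxz.symm)
  exact hG.false_of_subset_of_surplus_le h.surplus_le hU
    (subset_union_left.trans (subset_insert x _)) (subset_union_right.trans (subset_insert x _))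
    (h.mem_nbhd_left hxz hzy) hzZ' fun t ht hzt ↦
      h'.mem_nbhd_right hzt (ne_of_mem_of_not_mem ht (h.left_notMem hxy))

lemma false_of_isBothBlocker_of_isBlocked (hG : IsKaneko G k) (hxy : G.Adj x y)
    (hxz : G.Adj x z) (hzy : z ≠ y) (h : IsBothBlocker G k x y Z) (h' : IsBlocked G k x z) :
    False := by
  rcases h' with ⟨Z', h'⟩ | ⟨Z', h'⟩ | ⟨Z', h'⟩ | ⟨w, h'⟩
  · exact hG.false_of_isBothBlocker_of_isEndBlocker_left hxy hxz hzy h h'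
  · exact hG.false_of_isBothBlocker_of_isEndBlocker_right hxy hxz hzy h h'
  · exact hG.false_of_isBothBlocker_of_isBothBlocker hxy hxz hzy h h'
  · obtain ⟨t, ht, htz⟩ := mem_nbhd.1 (h.mem_nbhd_left hxz hzy)
    obtain rfl : y = w := (h'.eq_or_eq_left hxy).resolve_left hzy.symm
    rcases h'.eq_or_eq_right htz.symm with rfl | rfl
    · exact h.left_notMem hxy ht
    · exact h.left_notMem_nbhd (mem_nbhd_of_adj ht hxy.symm)

lemma false_of_isEndBlocker_of_triangle (hG : IsKaneko G k) (hk : k = 1) (hxz : G.Adj x z)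
    (hxy : G.Adj x y) (hyz : G.Adj y z) (hy : ∀ u, G.Adj y u → u = x ∨ u = z)
    (h : IsEndBlocker G k x z Z) : False := by
  have hyZ : y ∉ Z := fun hy ↦ h.notMem_nbhd (mem_nbhd_of_adj hy hyz)
  have hzZ : z ∈ Z := by
    obtain ⟨t, ht, hty⟩ := mem_nbhd.1 (h.mem_nbhd hxy hyz.ne)
    rcases hy t hty.symm with rfl | rfl
    · exact absurd ht (h.notMem hxz)
    · exact ht
  have hsub : nbhd G (insert y Z) ⊆ insert z (nbhd G Z) := fun v hv ↦ by
    obtain ⟨t, ht, htv⟩ := mem_nbhd.1 hv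
    rcases mem_insert.1 ht with rfl | ht
    · rcases hy v htv with rfl | rfl
      · exact mem_insert_of_mem (mem_nbhd_of_adj hzZ hxz.symm)
      · exact mem_insert_self ..
    · exact mem_insert_of_mem (mem_nbhd_of_adj ht htv)
  refine hG.not_adj_of_surplus_le_two ?_ (mem_insert_self y Z) (mem_insert_of_mem hzZ) hyz
  have hcard := (card_le_card hsub).trans (card_insert_le z (nbhd G Z))
  have htight : surplus G k Z ≤ 1 := h.isTight
  subst hk
  unfold surplus at *
  rw [card_insert_of_notMem hyZ]
  push_cast at *
  zify at hcard
  linarith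

lemma false_of_isPendantTriangle_of_isBlocked (hG : IsKaneko G k) (hxy : G.Adj x y)
    (hxz : G.Adj x z) (hyz : G.Adj y z) (h : IsPendantTriangle G k x y z)
    (h' : IsBlocked G k x z) : False := by
  rcases h' with ⟨Z, h'⟩ | ⟨Z, h'⟩ | ⟨Z, h'⟩ | ⟨w, h'⟩
  · exact hG.false_of_isEndBlocker_of_triangle h.eq_one hxz hxy hyz h.eq_or_eq_right h'
  · exact hG.false_of_isEndBlocker_of_triangle h.eq_one hxz.symm hyz.symm hxy.symm
      (fun u hu ↦ (h.eq_or_eq_right hu).symm) h'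
  · obtain ⟨t, ht, hty⟩ := mem_nbhd.1 (h'.mem_nbhd_left hxy hyz.ne)
    rcases h.eq_or_eq_right hty.symm with rfl | rfl
    · exact h'.left_notMem hxz ht
    · exact h'.left_notMem_nbhd (mem_nbhd_of_adj ht hxz.symm)
  · obtain rfl : y = w := (h'.eq_or_eq_left hxy).resolve_left hyz.ne
    have huniv : ({x, y, z} : Set V) = Set.univ := by
      by_contra hne
      obtain ⟨u, hu, v, hv, huv⟩ := exists_adj_notMem hG.connected ⟨x, by simp⟩ hne
      simp only [Set.mem_insert_iff, Set.mem_singleton_iff] at hu hv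
      rcases hu with rfl | rfl | rfl
      · have := h.eq_or_eq_left huv; tauto
      · have := h.eq_or_eq_right huv; tauto
      · have := h'.eq_or_eq_right huv; tauto
    have hcard : #({x, y, z} : Finset V) = Fintype.card V := by
      rw [← card_univ]
      exact congrArg _ (coe_injective (by simpa using huniv))
    linarith [hG.four_le_card, card_le_three (a := x) (b := y) (c := z)]

lemma isEndBlocker_or_of_isBlocked {w : V} (hG : IsKaneko G k) (hxy : G.Adj x y)
    (hxz : G.Adj x z) (hzy : z ≠ y) (hyw : G.Adj y w) (hwx : w ≠ x) (h : IsBlocked G k x y)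
    (h' : IsBlocked G k x z) : (∃ Z, IsEndBlocker G k x y Z) ∨ ∃ Z, IsEndBlocker G k y x Z := by
  rcases h with h | h | ⟨Z, h⟩ | ⟨t, h⟩
  · exact .inl h
  · exact .inr h
  · exact (hG.false_of_isBothBlocker_of_isBlocked hxy hxz hzy h h').elim
  · obtain rfl := (h.eq_or_eq_left hxz).resolve_left hzy
    obtain rfl := (h.eq_or_eq_right hyw).resolve_left hwx
    exact (hG.false_of_isPendantTriangle_of_isBlocked hxy hxz hyw h h').elim

lemma false_of_isEndBlocker_of_isEndBlocker (hG : IsKaneko G k) (hxy : G.Adj x y)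
    (hzx : G.Adj z x) (hzy : z ≠ y) (h : IsEndBlocker G k x y Z) (h' : IsEndBlocker G k z x Z') :
    False := by
  obtain ⟨t, ht, htz⟩ := mem_nbhd.1 (h.mem_nbhd hzx.symm hzy)
  have htx : t ≠ x := ne_of_mem_of_not_mem ht (h.notMem hxy)
  exact hG.notMem_nbhd_of_isTight h.isTight h'.isTight ht (h'.mem_nbhd htz.symm htx)

lemma notMem_nbhd_of_isEndBlocker (hG : IsKaneko G k) (hyz : y ≠ z)
    (hy : IsEndBlocker G k x y Y) (hz : IsEndBlocker G k x z Z) (hB : IsTight G k B) :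
    x ∉ nbhd G B := fun hx ↦ by
  obtain ⟨b, hb, hbx⟩ := mem_nbhd.1 hx
  by_cases hby : b = y
  · exact hG.notMem_nbhd_of_isTight hB hz.isTight hb (hz.mem_nbhd hbx.symm (hby ▸ hyz))
  · exact hG.notMem_nbhd_of_isTight hB hy.isTight hb (hy.mem_nbhd hbx.symm hby)

lemma mem_nbhd_union_of_isEndBlocker (hb : b ∈ nbhd G B) (hZ : IsEndBlocker G k u b Z) ⦃v : V⦄
    (huv : G.Adj u v) : v ∈ nbhd G (B ∪ Z) := by
  rw [nbhd_union, mem_union]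
  by_cases hvb : v = b
  · exact .inl (hvb ▸ hb)
  · exact .inr (hZ.mem_nbhd huv hvb)

lemma disjoint_nbhd_of_isEndBlocker (hG : IsKaneko G k) (hub : G.Adj u b) (hB : IsTight G k B)
    (hb : b ∈ nbhd G B) (hu : u ∉ B) (hZ : IsEndBlocker G k u b Z) :
    Disjoint (nbhd G B) (nbhd G Z) := by
  by_contra hdisj
  have htight := hG.isExpanding.isTight_union hB hZ.isTight
    (nonempty_iff_ne_empty.2 (mt disjoint_iff_inter_eq_empty.2 hdisj))
  have := hG.isExpanding.mem_of_isTight htight (mem_nbhd_union_of_isEndBlocker hb hZ)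
  exact (mem_union.1 this).elim hu (hZ.notMem hub)

lemma isTight_insert_of_isEndBlocker (hG : IsKaneko G k) (hub : G.Adj u b) (hB : IsTight G k B)
    (hb : b ∈ nbhd G B) (hu : u ∉ B) (hZ : IsEndBlocker G k u b Z) :
    IsTight G k (insert u (B ∪ Z)) := by
  rw [IsTight, surplus_insert _ (mem_nbhd_union_of_isEndBlocker hb hZ)]
  · linarith [hG.isExpanding.surplus_union_le B Z, hZ.isTight]
  · simp [hu, hZ.notMem hub]

lemma exists_mem_edges_leaving (c : G.Walk z x) (hz : z ∈ nbhd G B) (hxB : x ∉ B)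
    (hxN : x ∉ nbhd G B) : ∃ b ∈ nbhd G B, ∃ u ∉ B, s(b, u) ∈ c.edges := by
  obtain ⟨d, hd, hb, hu⟩ := c.exists_boundary_dart (↑(B ∪ nbhd G B)) (by simp [hz]) (by simp [*])
  simp only [coe_union, Set.mem_union, mem_coe, not_or] at hb hu
  have hb : d.fst ∈ nbhd G B := hb.resolve_left fun h ↦ hu.2 (mem_nbhd_of_adj h d.adj)
  exact ⟨d.fst, hb, d.snd, hu.1, List.mem_map.2 ⟨d, hd, rfl⟩⟩

lemma exists_isEndBlocker_of_onCycle (hG : IsKaneko G k)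
    (hend : ∀ x y, OnCycle G x y → (∃ Z, IsEndBlocker G k x y Z) ∨ ∃ Z, IsEndBlocker G k y x Z)
    (hy : OnCycle G x y) (hz : OnCycle G x z) (h : IsEndBlocker G k x y Y) :
    ∃ Z, IsEndBlocker G k x z Z := by
  by_cases hzy : z = y
  · exact ⟨Y, hzy ▸ h⟩
  · refine (hend x z hz).resolve_right fun ⟨Z, hZ⟩ ↦ ?_
    exact hG.false_of_isEndBlocker_of_isEndBlocker hy.adj hz.symm.adj hzy h hZ

lemma false_of_isCycle (hG : IsKaneko G k)
    (hend : ∀ x y, OnCycle G x y → (∃ Z, IsEndBlocker G k x y Z) ∨ ∃ Z, IsEndBlocker G k y x Z)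
    {c : G.Walk x x} (hc : c.IsCycle) (hz : IsEndBlocker G k x c.snd Z) : False := by
  have hxz := OnCycle.snd hc
  have hxy := OnCycle.penultimate hc
  have hzy := hc.snd_ne_penultimate
  obtain ⟨Y, hY⟩ := hG.exists_isEndBlocker_of_onCycle hend hxz hxy hz
  obtain ⟨B, ⟨hB, hxB, hzB⟩, hmax⟩ := exists_maximal_of_wellFoundedGT
    (fun B ↦ IsTight G k B ∧ x ∉ B ∧ c.snd ∈ nbhd G B)
    ⟨Y, hY.isTight, hY.notMem hxy.adj, hY.mem_nbhd hxz.adj hzy⟩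
  have hxN : x ∉ nbhd G B := hG.notMem_nbhd_of_isEndBlocker hzy hz hY hB
  obtain ⟨b, hb, u, huB, hbu⟩ := exists_mem_edges_leaving c.tail hzB hxB hxN
  have hedges : c.edges = s(x, c.snd) :: c.tail.edges := by
    conv_lhs => rw [← SimpleGraph.Walk.cons_tail_eq c hc.not_nil]
    rfl
  have hnotMem : s(x, c.snd) ∉ c.tail.edges :=
    (List.nodup_cons.1 (hedges ▸ hc.isTrail.edges_nodup)).1
  have hcyc : OnCycle G b u := ⟨x, c, hc, hedges ▸ List.mem_cons_of_mem _ hbu⟩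
  obtain ⟨W, hW⟩ : ∃ W, IsEndBlocker G k u b W := by
    refine (hend b u hcyc).resolve_left fun ⟨W, hW⟩ ↦ ?_
    obtain ⟨w, hwu, hbw⟩ := hcyc.exists_ne
    obtain ⟨W', hW'⟩ := hG.exists_isEndBlocker_of_onCycle hend hcyc hbw hW
    exact hG.notMem_nbhd_of_isEndBlocker hwu hW' hW hB hb
  have hdisj := hG.disjoint_nbhd_of_isEndBlocker hcyc.symm.adj hB hb huB hW
  have hzW : c.snd ∉ nbhd G W := disjoint_left.1 hdisj hzB
  have hxu : x ≠ u := by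
    rintro rfl
    refine hzW (hW.mem_nbhd hxz.adj fun hzb ↦ hnotMem ?_)
    rwa [show s(x, c.snd) = s(b, x) by rw [hzb, Sym2.eq_swap]]
  have hxW : x ∉ W := fun h ↦ hzW (mem_nbhd_of_adj h hxz.adj)
  refine huB (hmax (y := insert u (B ∪ W)) ⟨?_, by simp [hxu, hxB, hxW], ?_⟩
    (subset_union_left.trans (subset_insert _ _)) (mem_insert_self _ _))
  · exact hG.isTight_insert_of_isEndBlocker hcyc.symm.adj hB hb huB hW
  · exact nbhd_mono (subset_union_left.trans (subset_insert _ _)) hzB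

lemma isAcyclic (hG : IsKaneko G k)
    (hcrit : ∀ x y, OnCycle G x y → ¬ IsExpanding (G.deleteEdges {s(x, y)}) k) :
    G.IsAcyclic := by
  have hblocked (x y) (h : OnCycle G x y) : IsBlocked G k x y :=
    isBlocked_of_not_isExpanding_deleteEdges hG.one_le hG.isExpanding h.adj (hcrit x y h)
  have hend (x y) (h : OnCycle G x y) :
      (∃ Z, IsEndBlocker G k x y Z) ∨ ∃ Z, IsEndBlocker G k y x Z := by
    obtain ⟨z, hzy, hz⟩ := h.exists_ne
    obtain ⟨w, hwx, hw⟩ := h.symm.exists_ne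
    exact hG.isEndBlocker_or_of_isBlocked h.adj hz.adj hzy hw.adj hwx (hblocked x y h)
      (hblocked x z hz)
  intro x c hc
  rcases hend x c.snd (OnCycle.snd hc) with ⟨Z, hZ⟩ | ⟨Z, hZ⟩
  · exact hG.false_of_isCycle hend hc hZ
  · have hcyc := (OnCycle.snd hc).symm
    obtain ⟨d, hd⟩ := hcyc.exists_isCycle
    obtain ⟨W, hW⟩ := hG.exists_isEndBlocker_of_onCycle hend hcyc (OnCycle.snd hd) hZ
    exact hG.false_of_isCycle hend hd hW

end IsKaneko

lemma IsExpanding.card_leaves_le (h : IsExpanding G k) (v : V) :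
    #{u | G.Adj v u ∧ G.degree u = 1} ≤ k := by
  set L : Finset V := {u | G.Adj v u ∧ G.degree u = 1}
  have hsub : nbhd G L ⊆ {v} := fun w hw ↦ by
    obtain ⟨u, hu, huw⟩ := mem_nbhd.1 hw
    obtain ⟨hvu, hdeg⟩ : G.Adj v u ∧ G.degree u = 1 := by simpa [L] using hu
    obtain ⟨a, -, ha⟩ := SimpleGraph.degree_eq_one_iff_existsUnique_adj.1 hdeg
    rw [mem_singleton, ha w huw, ha v hvu.symm]
  have hcard := card_le_card hsub
  rcases L.eq_empty_or_nonempty with hL | hL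
  · simp [hL]
  · have := h L hL
    rw [surplus] at this
    rw [card_singleton] at hcard
    zify at *
    nlinarith

/-- **Kaneko's theorem**: a graph minimal among the connected spanning subgraphs of `G` with the
strong Hall condition is a tree. -/
theorem IsKaneko.hasSpanningTreeLeafDegLE (hG : IsKaneko G k) : HasSpanningTreeLeafDegLE G k := by
  obtain ⟨T, hTG, ⟨hconn, hexp⟩, hmin⟩ := exists_minimal_le_of_wellFoundedLT
    (fun T ↦ T.Connected ∧ IsExpanding T k) G ⟨hG.connected, hG.isExpanding⟩
  have hT : IsKaneko T k := ⟨hG.one_le, hconn, hG.four_le_card, hexp⟩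
  refine ⟨T, hTG, ⟨hconn, hT.isAcyclic fun x y hxy hdel ↦ ?_⟩, hexp.card_leaves_le⟩
  have hbridge : ¬ T.IsBridge s(x, y) := fun hbridge ↦ by
    obtain ⟨v, c, hc, he⟩ := hxy
    exact (SimpleGraph.isBridge_iff_forall_cycle_notMem
      (c.edges_subset_edgeSet he)).1 hbridge c hc he
  have hle := hmin ⟨hconn.connected_delete_edge_of_not_isBridge hbridge, hdel⟩
    (SimpleGraph.deleteEdges_le _)
  simpa using hle hxy.adj

lemma exists_card_eq_mul_card_of_not_isExpanding [Nontrivial V] (hk : 1 ≤ k) (hG : G.Connected)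
    (hE : ¬ IsExpanding G k) :
    ∃ I S : Finset V, S.Nonempty ∧ #I = (k + 1) * #S ∧ Disjoint I S ∧ nbhd G I ⊆ S := by
  unfold IsExpanding at hE
  push Not at hE
  obtain ⟨Y, hYne, hY⟩ := hE
  set J := Y \ nbhd G Y with hJ
  have hsurplus : surplus G k J + k * #(Y ∩ nbhd G Y) ≤ 0 := by
    linarith [surplus_sdiff_nbhd_le G k Y]
  have hJne : J.Nonempty := by
    by_contra hJ0
    rw [not_nonempty_iff_eq_empty] at hJ0
    rw [hJ0, surplus_empty, inter_eq_left.2 (sdiff_eq_empty_iff_subset.1 hJ0)] at hsurplus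
    have := Nat.mul_pos hk hYne.card_pos
    zify at this
    linarith
  have hcard : (k + 1) * #(nbhd G J) ≤ #J := by
    have : (0 : ℤ) ≤ k * #(Y ∩ nbhd G Y) := by positivity
    unfold surplus at hsurplus
    zify
    linarith
  obtain ⟨I, hIJ, hI⟩ := exists_subset_card_eq hcard
  obtain ⟨j, hj⟩ := hJne
  obtain ⟨v, hjv⟩ := hG.preconnected.exists_adj_of_nontrivial j
  refine ⟨I, nbhd G J, ⟨v, mem_nbhd_of_adj hj hjv⟩, hI, ?_, nbhd_mono hIJ⟩
  refine disjoint_of_subset_left (hIJ.trans sdiff_subset) (disjoint_right.2 fun v hv ↦ ?_)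
  exact (mem_sdiff.1 (nbhd_sdiff_nbhd_subset hv)).2

end LeafDegree

namespace SignlessLaplacian

open Matrix

section LargestEigenvalue

variable {ι : Type*} [Fintype ι] {M : Matrix ι ι ℝ}

/-- The largest real eigenvalue of a square matrix, so that `qRad G` is the largest eigenvalue
of `qMat G`; only meaningful for matrices with at least one real eigenvalue. -/
noncomputable def largestEigenvalue (M : Matrix ι ι ℝ) : ℝ :=
  sSup {μ : ℝ | Module.End.HasEigenvalue M.mulVecLin μ}

lemma hasEigenvalue_mulVecLin_iff {μ : ℝ} :
    Module.End.HasEigenvalue M.mulVecLin μ ↔ ∃ x ≠ 0, M *ᵥ x = μ • x := by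
  constructor
  · intro h
    obtain ⟨x, hx⟩ := h.exists_hasEigenvector
    exact ⟨x, hx.2, hx.apply_eq_smul⟩
  · rintro ⟨x, hx, h⟩
    exact Module.End.hasEigenvalue_of_hasEigenvector ⟨Module.End.mem_eigenspace_iff.2 h, hx⟩

lemma hasEigenvalue_eigenvalues (hM : M.IsHermitian) (i : ι) :
    Module.End.HasEigenvalue M.mulVecLin (hM.eigenvalues i) := by
  rw [← toLin'_apply', Module.End.hasEigenvalue_iff_mem_spectrum, spectrum_toLin']
  exact hM.eigenvalues_mem_spectrum_real i

lemma le_largestEigenvalue {μ : ℝ} (hμ : Module.End.HasEigenvalue M.mulVecLin μ) :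
    μ ≤ largestEigenvalue M :=
  le_csSup (Set.Finite.bddAbove (Module.End.finite_hasEigenvalue _)) hμ

lemma exists_mulVec_eq_largestEigenvalue_smul [Nonempty ι] (hM : M.IsHermitian) :
    ∃ x ≠ 0, M *ᵥ x = largestEigenvalue M • x :=
  hasEigenvalue_mulVecLin_iff.1 <|
    Set.Nonempty.csSup_mem ⟨_, hasEigenvalue_eigenvalues hM (Classical.arbitrary ι)⟩
      (Module.End.finite_hasEigenvalue _)

lemma posSemidef_largestEigenvalue_smul_one_sub (hM : M.IsHermitian) :
    (largestEigenvalue M • (1 : Matrix ι ι ℝ) - M).PosSemidef := by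
  have hH : (largestEigenvalue M • (1 : Matrix ι ι ℝ) - M).IsHermitian :=
    (isHermitian_one.smul (IsSelfAdjoint.all _)).sub hM
  refine hH.posSemidef_iff_eigenvalues_nonneg.2 fun i ↦ ?_
  obtain ⟨x, hx, hxi⟩ := hasEigenvalue_mulVecLin_iff.1 (hasEigenvalue_eigenvalues hH i)
  rw [sub_mulVec, smul_mulVec, one_mulVec] at hxi
  have hμ : M *ᵥ x = (largestEigenvalue M - hH.eigenvalues i) • x := by
    rw [sub_smul, ← hxi, sub_sub_cancel]
  exact sub_le_self_iff _ |>.1 (le_largestEigenvalue (hasEigenvalue_mulVecLin_iff.2 ⟨x, hx, hμ⟩))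

lemma dotProduct_largestEigenvalue_smul_one_sub_mulVec (x : ι → ℝ) :
    x ⬝ᵥ (largestEigenvalue M • (1 : Matrix ι ι ℝ) - M) *ᵥ x =
      largestEigenvalue M * x ⬝ᵥ x - x ⬝ᵥ M *ᵥ x := by
  rw [sub_mulVec, smul_mulVec, one_mulVec, dotProduct_sub, dotProduct_smul, smul_eq_mul]

lemma dotProduct_mulVec_le_largestEigenvalue_mul (hM : M.IsHermitian) (x : ι → ℝ) :
    x ⬝ᵥ M *ᵥ x ≤ largestEigenvalue M * x ⬝ᵥ x := by
  have h := (posSemidef_largestEigenvalue_smul_one_sub hM).dotProduct_mulVec_nonneg x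
  rwa [star_trivial, dotProduct_largestEigenvalue_smul_one_sub_mulVec, sub_nonneg] at h

lemma mulVec_eq_largestEigenvalue_smul_of_le (hM : M.IsHermitian) {x : ι → ℝ}
    (hx : largestEigenvalue M * x ⬝ᵥ x ≤ x ⬝ᵥ M *ᵥ x) : M *ᵥ x = largestEigenvalue M • x := by
  have h := (posSemidef_largestEigenvalue_smul_one_sub hM).dotProduct_mulVec_zero_iff x
  rw [star_trivial, dotProduct_largestEigenvalue_smul_one_sub_mulVec,
    sub_mulVec, smul_mulVec, one_mulVec, sub_eq_zero, sub_eq_zero] at h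
  exact (h.1 (hx.antisymm (dotProduct_mulVec_le_largestEigenvalue_mul hM x))).symm

lemma largestEigenvalue_reindex {κ : Type*} [Fintype κ] (e : ι ≃ κ) :
    largestEigenvalue (M.reindex e e) = largestEigenvalue M := by
  simp only [largestEigenvalue, ← toLin'_apply', Module.End.hasEigenvalue_iff_isRoot_charpoly,
    charpoly_toLin', charpoly_reindex]

end LargestEigenvalue

variable {V : Type*} [Fintype V] {G H : SimpleGraph V}

lemma qMat_mulVec (x : V → ℝ) (v : V) :
    (qMat G *ᵥ x) v = ∑ u ∈ G.neighborFinset v, (x v + x u) := by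
  simp only [mulVec, dotProduct, qMat, add_mul, sum_add_distrib, ite_mul, one_mul, zero_mul,
    sum_ite_eq, mem_univ, if_true, sum_const, nsmul_eq_mul, ← sum_filter,
    SimpleGraph.neighborFinset_eq_filter]

lemma qMat_mulVec_eq_degree_mul_add (x : V → ℝ) (v : V) :
    (qMat G *ᵥ x) v = G.degree v * x v + ∑ u ∈ G.neighborFinset v, x u := by
  rw [qMat_mulVec, sum_add_distrib, sum_const, nsmul_eq_mul,
    SimpleGraph.card_neighborFinset_eq_degree]

lemma qMat_isHermitian : (qMat G).IsHermitian :=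
  IsHermitian.ext fun u v ↦ by
    rcases eq_or_ne u v with rfl | huv
    · rfl
    · simp [qMat, huv, huv.symm, G.adj_comm]

lemma qMat_reindex {W : Type*} [Fintype W] {K : SimpleGraph W} (e : G ≃g K) :
    (qMat G).reindex e.toEquiv e.toEquiv = qMat K := by
  ext u v
  have hadj (w t : W) : G.Adj (e.symm w) (e.symm t) ↔ K.Adj w t := e.symm.map_adj_iff
  have hdeg (w : W) : #{t | G.Adj (e.symm w) t} = #{t | K.Adj w t} :=
    card_equiv e.toEquiv fun t ↦ by simp [← hadj]
  change (if e.symm u = e.symm v then (#{t | G.Adj (e.symm u) t} : ℝ) else 0) +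
    (if G.Adj (e.symm u) (e.symm v) then 1 else 0) = qMat K u v
  simp only [hdeg, hadj, e.symm.injective.eq_iff, qMat]

lemma qRad_congr {W : Type*} [Fintype W] {K : SimpleGraph W} (e : G ≃g K) : qRad G = qRad K := by
  have h := largestEigenvalue_reindex (M := qMat G) e.toEquiv
  rw [qMat_reindex] at h
  exact h.symm

lemma sum_sum_neighborFinset_comm (f : V → V → ℝ) :
    ∑ v, ∑ u ∈ G.neighborFinset v, f v u = ∑ v, ∑ u ∈ G.neighborFinset v, f u v :=
  sum_comm' fun u v ↦ by simp [G.adj_comm]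

lemma two_mul_dotProduct_qMat_mulVec (x : V → ℝ) :
    2 * x ⬝ᵥ qMat G *ᵥ x = ∑ v, ∑ u ∈ G.neighborFinset v, (x v + x u) ^ 2 := by
  have h : x ⬝ᵥ qMat G *ᵥ x = ∑ v, ∑ u ∈ G.neighborFinset v, x v * (x v + x u) := by
    simp only [dotProduct, qMat_mulVec, mul_sum]
  rw [two_mul]
  nth_rewrite 2 [h]
  rw [sum_sum_neighborFinset_comm, h, ← sum_add_distrib]
  refine sum_congr rfl fun v _ ↦ ?_
  rw [← sum_add_distrib]
  exact sum_congr rfl fun u _ ↦ by ring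

lemma neighborFinset_mono (hGH : G ≤ H) (v : V) : G.neighborFinset v ⊆ H.neighborFinset v :=
  fun u hu ↦ (H.mem_neighborFinset v u).2 (hGH ((G.mem_neighborFinset v u).1 hu))

lemma dotProduct_qMat_mulVec_le_abs (x : V → ℝ) :
    x ⬝ᵥ qMat G *ᵥ x ≤ |x| ⬝ᵥ qMat G *ᵥ |x| := by
  have h : 2 * x ⬝ᵥ qMat G *ᵥ x ≤ 2 * |x| ⬝ᵥ qMat G *ᵥ |x| := by
    rw [two_mul_dotProduct_qMat_mulVec, two_mul_dotProduct_qMat_mulVec]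
    exact sum_le_sum fun v _ ↦ sum_le_sum fun u _ ↦
      sq_le_sq.2 <| (abs_add_le _ _).trans (le_abs_self _)
  linarith

lemma dotProduct_qMat_mulVec_mono (hGH : G ≤ H) (x : V → ℝ) :
    x ⬝ᵥ qMat G *ᵥ x ≤ x ⬝ᵥ qMat H *ᵥ x := by
  have h : 2 * x ⬝ᵥ qMat G *ᵥ x ≤ 2 * x ⬝ᵥ qMat H *ᵥ x := by
    rw [two_mul_dotProduct_qMat_mulVec, two_mul_dotProduct_qMat_mulVec]
    exact sum_le_sum fun v _ ↦ sum_le_sum_of_subset_of_nonneg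
      (neighborFinset_mono hGH _) fun u _ _ ↦ sq_nonneg _
  linarith

lemma pos_of_qMat_mulVec_eq_smul (hG : G.Connected) {x : V → ℝ} {μ : ℝ} (hx : 0 ≤ x)
    (hx0 : x ≠ 0) (hμ : qMat G *ᵥ x = μ • x) (v : V) : 0 < x v := by
  refine (hx v).lt_of_ne' fun hv ↦ hx0 ?_
  have hzero : {v | x v = 0} = Set.univ := by
    by_contra hne
    obtain ⟨a, ha, b, hb, hab⟩ := LeafDegree.exists_adj_notMem hG ⟨v, hv⟩ hne
    have hsum := congrFun hμ a
    rw [qMat_mulVec_eq_degree_mul_add, Pi.smul_apply, ha, mul_zero, smul_zero, zero_add,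
      sum_eq_zero_iff_of_nonneg fun u _ ↦ hx u] at hsum
    exact hb (hsum b ((G.mem_neighborFinset a b).2 hab))
  exact funext fun u ↦ Set.eq_univ_iff_forall.1 hzero u

lemma le_of_qMat_mulVec_eq (hGH : G ≤ H) {x : V → ℝ} (hx : ∀ v, 0 < x v)
    (h : qMat G *ᵥ x = qMat H *ᵥ x) : H ≤ G := by
  by_contra hHG
  obtain ⟨u, v, hH, hG⟩ : ∃ u v, H.Adj u v ∧ ¬ G.Adj u v := by
    simpa [SimpleGraph.le_iff_adj] using hHG
  refine (congrFun h u).not_lt ?_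
  rw [qMat_mulVec, qMat_mulVec]
  exact sum_lt_sum_of_subset (neighborFinset_mono hGH _)
    ((H.mem_neighborFinset u v).2 hH) (by simpa using hG) (add_pos (hx u) (hx v))
    fun w _ _ ↦ (add_pos (hx u) (hx w)).le

theorem eq_of_le_of_qRad_le (hH : H.Connected) (hGH : G ≤ H) (hq : qRad H ≤ qRad G) : G = H := by
  have := hH.nonempty
  obtain ⟨x, hx0, hx⟩ := exists_mulVec_eq_largestEigenvalue_smul (qMat_isHermitian (G := G))
  have habs : |x| ⬝ᵥ |x| = x ⬝ᵥ x := sum_congr rfl fun v _ ↦ abs_mul_abs_self (x v)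
  have hxG : qRad G * |x| ⬝ᵥ |x| ≤ |x| ⬝ᵥ qMat G *ᵥ |x| := calc
    qRad G * |x| ⬝ᵥ |x| = x ⬝ᵥ qMat G *ᵥ x := by
      rw [hx, dotProduct_smul, habs, smul_eq_mul, qRad, largestEigenvalue]
    _ ≤ |x| ⬝ᵥ qMat G *ᵥ |x| := dotProduct_qMat_mulVec_le_abs x
  have hxH : qRad H * |x| ⬝ᵥ |x| ≤ |x| ⬝ᵥ qMat H *ᵥ |x| := calc
    qRad H * |x| ⬝ᵥ |x| ≤ qRad G * |x| ⬝ᵥ |x| :=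
      mul_le_mul_of_nonneg_right hq (dotProduct_self_star_nonneg |x|)
    _ ≤ |x| ⬝ᵥ qMat G *ᵥ |x| := hxG
    _ ≤ |x| ⬝ᵥ qMat H *ᵥ |x| := dotProduct_qMat_mulVec_mono hGH |x|
  have hG : qMat G *ᵥ |x| = qRad G • |x| :=
    mulVec_eq_largestEigenvalue_smul_of_le qMat_isHermitian hxG
  have hHx : qMat H *ᵥ |x| = qRad H • |x| :=
    mulVec_eq_largestEigenvalue_smul_of_le qMat_isHermitian hxH
  have hqeq : qRad G = qRad H := by
    have h := dotProduct_qMat_mulVec_mono hGH |x|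
    rw [hG, hHx, dotProduct_smul, dotProduct_smul, habs] at h
    exact (le_of_mul_le_mul_right h (dotProduct_self_star_pos_iff.2 hx0)).antisymm hq
  have habs0 : |x| ≠ 0 := fun h ↦ hx0 (funext fun v ↦ abs_eq_zero.1 (congrFun h v))
  have hpos := pos_of_qMat_mulVec_eq_smul hH (abs_nonneg x) habs0 hHx
  exact hGH.antisymm (le_of_qMat_mulVec_eq hGH hpos (by rw [hG, hHx, hqeq]))

lemma two_mul_card_sub_one_le_qRad {s : Finset V} (hs : G.IsClique s) (hs' : s.Nonempty) :
    2 * ((#s : ℝ) - 1) ≤ qRad G := by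
  set x : V → ℝ := fun v ↦ if v ∈ s then 1 else 0 with hx
  have hxx : x ⬝ᵥ x = #s := by simp [hx, dotProduct]
  have hrow (v : V) (hv : v ∈ s) : 2 * ((#s : ℝ) - 1) ≤ (qMat G *ᵥ x) v := calc
    2 * ((#s : ℝ) - 1) = ∑ u ∈ s.erase v, (x v + x u) := by
      have hadd (u : V) (hu : u ∈ s.erase v) : x v + x u = 2 := by
        simp only [hx, if_pos hv, if_pos (mem_of_mem_erase hu), one_add_one_eq_two]
      rw [sum_congr rfl hadd, sum_const, nsmul_eq_mul, cast_card_erase_of_mem hv, mul_comm]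
    _ ≤ ∑ u ∈ G.neighborFinset v, (x v + x u) := by
      refine sum_le_sum_of_subset_of_nonneg (fun u hu ↦ ?_) fun u _ _ ↦ ?_
      · rw [SimpleGraph.mem_neighborFinset]
        exact hs hv (mem_of_mem_erase hu) (ne_of_mem_erase hu).symm
      · simp only [hx]
        positivity
    _ = (qMat G *ᵥ x) v := (qMat_mulVec x v).symm
  have hquad : #s * (2 * ((#s : ℝ) - 1)) ≤ qRad G * #s := calc
    #s * (2 * ((#s : ℝ) - 1)) ≤ ∑ v ∈ s, (qMat G *ᵥ x) v := by
      simpa only [nsmul_eq_mul] using card_nsmul_le_sum s _ _ hrow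
    _ = x ⬝ᵥ qMat G *ᵥ x := by simp [hx, dotProduct]
    _ ≤ qRad G * #s := hxx ▸ dotProduct_mulVec_le_largestEigenvalue_mul qMat_isHermitian x
  rw [mul_comm] at hquad
  exact le_of_mul_le_mul_right hquad (by exact_mod_cast hs'.card_pos)

lemma degree_add_one_le_card (v : V) : G.degree v + 1 ≤ Fintype.card V := G.degree_lt_card_verts v

/-- Merris's bound: the vertex maximises `|x v| / d(v)` for an eigenvector `x` of `qRad G`. -/
lemma exists_qRad_mul_degree_le [Nonempty V] (hd : ∀ v, 0 < G.degree v) :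
    ∃ v, qRad G * G.degree v ≤ G.degree v ^ 2 + ∑ u ∈ G.neighborFinset v, (G.degree u : ℝ) := by
  obtain ⟨x, hx0, hx⟩ := exists_mulVec_eq_largestEigenvalue_smul (qMat_isHermitian (G := G))
  have hd' (v : V) : (0 : ℝ) < G.degree v := mod_cast hd v
  obtain ⟨v, hv⟩ := Finite.exists_max fun v ↦ |x v| / G.degree v
  have hxv : 0 < |x v| / G.degree v := by
    obtain ⟨u, hu⟩ := Function.ne_iff.1 hx0
    exact (div_pos (abs_pos.2 hu) (hd' u)).trans_le (hv u)
  refine ⟨v, ?_⟩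
  have hsum : (qRad G - G.degree v) * x v = ∑ u ∈ G.neighborFinset v, x u := by
    have h := congrFun hx v
    rw [qMat_mulVec_eq_degree_mul_add] at h
    rw [sub_mul, sub_eq_iff_eq_add']
    exact h.symm
  have hle : (qRad G - G.degree v) * |x v| ≤
      |x v| / G.degree v * ∑ u ∈ G.neighborFinset v, (G.degree u : ℝ) := calc
    (qRad G - G.degree v) * |x v| ≤ |(qRad G - G.degree v) * x v| := by
      rw [abs_mul]
      gcongr
      exact le_abs_self _
    _ ≤ ∑ u ∈ G.neighborFinset v, |x u| := hsum ▸ abs_sum_le_sum_abs _ _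
    _ ≤ ∑ u ∈ G.neighborFinset v, |x v| / G.degree v * G.degree u :=
      sum_le_sum fun u _ ↦ (div_le_iff₀ (hd' u)).1 (hv u)
    _ = |x v| / G.degree v * ∑ u ∈ G.neighborFinset v, (G.degree u : ℝ) := (mul_sum ..).symm
  have hscale : |x v| = |x v| / G.degree v * G.degree v := (div_mul_cancel₀ _ (hd' v).ne').symm
  have hle' : (qRad G - G.degree v) * G.degree v ≤ ∑ u ∈ G.neighborFinset v, (G.degree u : ℝ) := by
    refine le_of_mul_le_mul_left ?_ hxv
    rw [mul_left_comm, ← hscale]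
    exact hle
  linarith

lemma sum_neighborFinset_degree_add_card_le (hd : ∀ v, 0 < G.degree v) (v : V) :
    ∑ u ∈ G.neighborFinset v, G.degree u + Fintype.card V ≤ ∑ u, G.degree u + 1 := by
  have hv : v ∈ (G.neighborFinset v)ᶜ := by simp
  have hcard : G.degree v + #(G.neighborFinset v)ᶜ = Fintype.card V := by
    rw [← G.card_neighborFinset_eq_degree, card_add_card_compl]
  have hrest : #((G.neighborFinset v)ᶜ.erase v) • 1 ≤
      ∑ u ∈ (G.neighborFinset v)ᶜ.erase v, G.degree u :=
    card_nsmul_le_sum _ _ 1 fun u _ ↦ hd u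
  have herase := card_erase_add_one hv
  rw [← sum_add_sum_compl (G.neighborFinset v), ← add_sum_erase _ _ hv]
  rw [smul_eq_mul, mul_one] at hrest
  lia

theorem qRad_mul_card_sub_one_le [Nonempty V] (hd : ∀ v, 0 < G.degree v) :
    qRad G * (Fintype.card V - 1) ≤
      ∑ v, (G.degree v : ℝ) + (Fintype.card V - 1) * (Fintype.card V - 2) := by
  obtain ⟨v, hv⟩ := exists_qRad_mul_degree_le hd
  have hle (u : V) : (G.degree u : ℝ) ≤ Fintype.card V - 1 :=
    le_sub_iff_add_le.2 (mod_cast degree_add_one_le_card u)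
  have hpos : (0 : ℝ) < G.degree v := mod_cast hd v
  have hR : ∑ u ∈ G.neighborFinset v, (G.degree u : ℝ) ≤ G.degree v * (Fintype.card V - 1) := by
    simpa using sum_le_card_nsmul (G.neighborFinset v) (G.degree · : V → ℝ) _ fun u _ ↦ hle u
  have hR' : ∑ u ∈ G.neighborFinset v, (G.degree u : ℝ) + Fintype.card V ≤
      ∑ u, (G.degree u : ℝ) + 1 := mod_cast sum_neighborFinset_degree_add_card_le hd v
  have hdv := hle v
  generalize ∑ u ∈ G.neighborFinset v, (G.degree u : ℝ) = R at *
  generalize ∑ u, (G.degree u : ℝ) = D at *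
  generalize (G.degree v : ℝ) = d at *
  generalize (Fintype.card V : ℝ) = n at *
  refine le_of_mul_le_mul_left ?_ hpos
  rcases le_total (d * (n - 1)) (D - (n - 1)) with h | h
  · nlinarith [h]
  · nlinarith [mul_nonneg (sub_nonneg.2 hdv) (sub_nonneg.2 h)]

lemma sum_degree_le_of_nbhd_subset {I S : Finset V} (hIS : Disjoint I S)
    (hS : LeafDegree.nbhd G I ⊆ S) :
    ∑ v, (G.degree v : ℝ) ≤ #I * #S + #S * (Fintype.card V - 1) +
      (Fintype.card V - (#I + #S)) * (Fintype.card V - 1 - #I) := by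
  have hI (v : V) (hv : v ∈ I) : (G.degree v : ℝ) ≤ #S := by
    refine mod_cast card_le_card fun u hu ↦ hS ?_
    exact LeafDegree.mem_nbhd_of_adj hv ((G.mem_neighborFinset v u).1 hu)
  have hall (v : V) : (G.degree v : ℝ) ≤ Fintype.card V - 1 :=
    le_sub_iff_add_le.2 (mod_cast degree_add_one_le_card v)
  have hrest (v : V) (hv : v ∈ (I ∪ S)ᶜ) : (G.degree v : ℝ) ≤ Fintype.card V - 1 - #I := by
    rw [mem_compl, mem_union, not_or] at hv
    have hdisj : Disjoint (insert v (G.neighborFinset v)) I := by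
      refine disjoint_insert_left.2 ⟨hv.1, disjoint_left.2 fun u hu huI ↦ hv.2 (hS ?_)⟩
      exact LeafDegree.mem_nbhd_of_adj huI ((G.mem_neighborFinset v u).1 hu).symm
    have hcard := card_le_univ (insert v (G.neighborFinset v) ∪ I)
    rw [card_union_of_disjoint hdisj, card_insert_of_notMem (by simp),
      G.card_neighborFinset_eq_degree] at hcard
    rw [le_sub_iff_add_le, le_sub_iff_add_le, add_right_comm]
    exact_mod_cast hcard
  have hcompl : (#(I ∪ S)ᶜ : ℝ) = Fintype.card V - (#I + #S) := by
    rw [card_compl, card_union_of_disjoint hIS, Nat.cast_sub, Nat.cast_add]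
    exact card_union_of_disjoint hIS ▸ card_le_univ _
  rw [← sum_add_sum_compl (I ∪ S), sum_union hIS, ← hcompl]
  simpa only [nsmul_eq_mul] using add_le_add (add_le_add (sum_le_card_nsmul _ _ _ hI)
    (sum_le_card_nsmul _ _ _ fun v _ ↦ hall v)) (sum_le_card_nsmul _ _ _ hrest)

end SignlessLaplacian

namespace oneJoinCliquePlusIso'

variable {n k : ℕ}

lemma adj_iff {a b : Fin n} : (oneJoinCliquePlusIso' n k).Adj a b ↔
    a ≠ b ∧ (a.val = 0 ∨ b.val = 0 ∨ (a.val < n - (k + 1) ∧ b.val < n - (k + 1))) := by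
  rw [oneJoinCliquePlusIso', SimpleGraph.fromRel_adj]
  tauto

lemma connected (hn : 0 < n) : (oneJoinCliquePlusIso' n k).Connected := by
  have huniv : (oneJoinCliquePlusIso' n k).IsUniversal ⟨0, hn⟩ := fun a ha ↦
    adj_iff.2 ⟨ha, Or.inl rfl⟩
  exact .of_isUniversal huniv

lemma two_mul_le_qRad (hn : k + 1 < n) :
    2 * ((n : ℝ) - k - 2) ≤ qRad (oneJoinCliquePlusIso' n k) := by
  let s : Finset (Fin n) := Finset.Iio ⟨n - (k + 1), by lia⟩
  have hs : (oneJoinCliquePlusIso' n k).IsClique s := fun a ha b hb hab ↦ by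
    rw [mem_coe, Finset.mem_Iio] at ha hb
    exact adj_iff.2 ⟨hab, Or.inr (Or.inr ⟨ha, hb⟩)⟩
  have hcard : #s = n - (k + 1) := Fin.card_Iio _
  have h := SignlessLaplacian.two_mul_card_sub_one_le_qRad hs (card_pos.1 (by lia))
  rw [hcard, Nat.cast_sub hn.le] at h
  push_cast at h
  linarith

end oneJoinCliquePlusIso'

namespace SignlessLaplacian

theorem nonempty_iso_of_qRad_le {V W : Type*} [Fintype V] [Fintype W] {G : SimpleGraph V}
    {K : SimpleGraph W} (hK : K.Connected) (σ : V ≃ W) (hσ : G ≤ K.comap σ)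
    (hq : qRad K ≤ qRad G) : Nonempty (G ≃g K) := by
  let e : K.comap σ ≃g K := SimpleGraph.Iso.comap σ K
  obtain rfl : G = K.comap σ :=
    eq_of_le_of_qRad_le (e.connected_iff.2 hK) hσ ((qRad_congr e).trans_le hq)
  exact ⟨e⟩

lemma exists_equiv_mem_iff {α β : Type*} [Fintype α] [Fintype β]
    (hαβ : Fintype.card α = Fintype.card β) {s : Finset α} {t : Finset β} (hst : #s = #t)
    {a : α} {b : β} (ha : a ∉ s) (hb : b ∉ t) :
    ∃ σ : α ≃ β, σ a = b ∧ ∀ i, σ i ∈ t ↔ i ∈ s := by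
  let e : α ≃ β := Fintype.equivOfCardEq hαβ
  obtain ⟨τ, rfl⟩ := Equiv.Perm.exists_map_finset_eq (s.map e.toEmbedding) t (by simpa using hst)
  have hmem (i : α) : τ (e i) ∈ (s.map e.toEmbedding).map τ.toEmbedding ↔ i ∈ s := by simp
  refine ⟨(e.trans τ).trans (Equiv.swap (τ (e a)) b), by simp, fun i ↦ ?_⟩
  rw [Equiv.trans_apply, Equiv.trans_apply, Equiv.swap_apply_def]
  grind

theorem nonempty_iso_of_nbhd_subset_singleton {V : Type*} [Fintype V] {n k : ℕ}
    {G : SimpleGraph V} (hV : Fintype.card V = n)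
    (hq : qRad (oneJoinCliquePlusIso' n k) ≤ qRad G) {I : Finset V} {v : V} (hI : #I = k + 1)
    (hvI : v ∉ I) (hIv : LeafDegree.nbhd G I ⊆ {v}) :
    Nonempty (G ≃g oneJoinCliquePlusIso' n k) := by
  have hkn : k + 1 < n := by
    rw [← hI, ← hV]
    exact card_lt_univ_of_notMem hvI
  let T : Finset (Fin n) := Finset.Ici ⟨n - (k + 1), by lia⟩
  have hT : #T = k + 1 := (Fin.card_Ici _).trans (by lia)
  have hT0 : ⟨0, by lia⟩ ∉ T := by simp [T]; lia
  obtain ⟨σ, hσv, hσ⟩ :=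
    exists_equiv_mem_iff (by rw [hV, Fintype.card_fin]) (hI.trans hT.symm) hvI hT0
  have hv (i j : V) (hi : i ∈ I) (hij : G.Adj i j) : (σ j).val = 0 := by
    rw [mem_singleton.1 (hIv (LeafDegree.mem_nbhd_of_adj hi hij)), hσv]
  have hlt (i : V) (hi : i ∉ I) : (σ i).val < n - (k + 1) := by
    rw [← hσ, Finset.mem_Ici, not_le] at hi
    exact hi
  refine nonempty_iso_of_qRad_le (oneJoinCliquePlusIso'.connected (by lia)) σ (fun i j hij ↦ ?_) hq
  refine oneJoinCliquePlusIso'.adj_iff.2 ⟨σ.injective.ne hij.ne, ?_⟩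
  by_cases hi : i ∈ I
  · exact Or.inr (Or.inl (hv i j hi hij))
  by_cases hj : j ∈ I
  · exact Or.inl (hv j i hj hij.symm)
  · exact Or.inr (Or.inr ⟨hlt i hi, hlt j hj⟩)

lemma sq_mul_add_lt_of_two_le {n k s : ℕ} (hk : 1 ≤ k) (hn : 2 * k + 8 ≤ n) (hs : 2 ≤ s)
    (hsn : (k + 2) * s ≤ n) : (k + 3) * s ^ 2 + s < 2 * n * (s - 1) + 2 := by
  obtain rfl | rfl | hs4 : s = 2 ∨ s = 3 ∨ 4 ≤ s := by lia
  · lia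
  · lia
  · have hmul : 2 * ((k + 2) * s) * (s - 1) ≤ 2 * n * (s - 1) := by gcongr
    obtain ⟨r, rfl⟩ := Nat.exists_eq_add_of_le' hs4
    rw [show r + 4 - 1 = r + 3 from rfl] at hmul ⊢
    nlinarith [Nat.mul_le_mul hk (Nat.zero_le r)]

theorem qRad_lt_of_nbhd_subset {V : Type*} [Fintype V] {G : SimpleGraph V} {n k : ℕ} (hk : 1 ≤ k)
    (hn : 2 * k + 8 ≤ n) (hV : Fintype.card V = n) (hG : G.Connected) {I S : Finset V}
    (hIS : Disjoint I S) (hI : #I = (k + 1) * #S) (hS : LeafDegree.nbhd G I ⊆ S) (hS2 : 2 ≤ #S) :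
    qRad G < 2 * ((n : ℝ) - k - 2) := by
  subst hV
  have : Nontrivial V := Fintype.one_lt_card_iff_nontrivial.1 (by lia)
  have hfit : (k + 2) * #S ≤ Fintype.card V := by
    have h := card_union_of_disjoint hIS ▸ card_le_univ (I ∪ S)
    lia
  have hnum := sq_mul_add_lt_of_two_le hk hn hS2 hfit
  have hdeg := sum_degree_le_of_nbhd_subset hIS hS
  have hq := qRad_mul_card_sub_one_le fun v ↦ hG.preconnected.degree_pos_of_nontrivial v
  have hnum' : (0 : ℝ) < 2 * Fintype.card V * (#S - 1) + 2 - ((k + 3) * #S ^ 2 + #S) := by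
    rw [← @Nat.cast_lt ℝ] at hnum
    push_cast [Nat.cast_pred (zero_lt_two.trans_le hS2)] at hnum
    exact sub_pos.2 hnum
  have hcard : (0 : ℝ) < Fintype.card V - 1 := sub_pos.2 (mod_cast Fintype.one_lt_card)
  refine lt_of_mul_lt_mul_right (hq.trans_lt ?_) hcard.le
  rw [hI] at hdeg
  push_cast at hdeg
  -- The bound on `q (n - 1)` falls short of `2 (n - k - 2) (n - 1)` by `k + 1` times `hnum'`.
  have hgap := mul_pos (Nat.cast_add_one_pos (α := ℝ) k) hnum'
  linarith

theorem nonempty_iso_of_not_isExpanding {V : Type*} [Fintype V] {G : SimpleGraph V} {n k : ℕ}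
    (hk : 1 ≤ k) (hn : 2 * k + 8 ≤ n) (hV : Fintype.card V = n) (hG : G.Connected)
    (hq : qRad (oneJoinCliquePlusIso' n k) ≤ qRad G) (hE : ¬ LeafDegree.IsExpanding G k) :
    Nonempty (G ≃g oneJoinCliquePlusIso' n k) := by
  have : Nontrivial V := Fintype.one_lt_card_iff_nontrivial.1 (by lia)
  obtain ⟨I, S, hne, hI, hIS, hS⟩ :=
    LeafDegree.exists_card_eq_mul_card_of_not_isExpanding hk hG hE
  have hlow := (oneJoinCliquePlusIso'.two_mul_le_qRad (by lia)).trans hq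
  have hS1 : #S = 1 := by
    by_contra hne1
    have := hne.card_pos
    exact hlow.not_gt (qRad_lt_of_nbhd_subset hk hn hV hG hIS hI hS (by lia))
  obtain ⟨v, rfl⟩ := card_eq_one.1 hS1
  exact nonempty_iso_of_nbhd_subset_singleton hV hq (by simpa using hI)
    (disjoint_singleton_right.1 hIS) hS

end SignlessLaplacian

theorem signless_laplacian_spanning_tree_leaf_degree_general {V : Type*} [Fintype V] {n k : ℕ}
    (hk : 1 ≤ k) (hn : 2 * k + 8 ≤ n) (hV : Fintype.card V = n) (G : SimpleGraph V)
    (hG : G.Connected) (hq : qRad (oneJoinCliquePlusIso' n k) ≤ qRad G) :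
    HasSpanningTreeLeafDegLE G k ∨ Nonempty (G ≃g oneJoinCliquePlusIso' n k) := by
  by_cases hE : LeafDegree.IsExpanding G k
  · have hK : LeafDegree.IsKaneko G k := ⟨hk, hG, by lia, hE⟩
    exact Or.inl hK.hasSpanningTreeLeafDegLE
  · exact Or.inr (SignlessLaplacian.nonempty_iso_of_not_isExpanding hk hn hV hG hq hE)

/-- **Theorem (signless Laplacian spectral radius and spanning trees with
bounded leaf degree).**  Let `k ≥ 1` and let `G` be a connected graph of order
`n ≥ 2k + 12`.  If `q(G) ≥ q(K₁ ∨ (K_{n-k-2} + (k+1)K₁))`, then `G` has a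
spanning tree with leaf degree at most `k` unless
`G ≅ K₁ ∨ (K_{n-k-2} + (k+1)K₁)`. -/
theorem signless_laplacian_spanning_tree_leaf_degree {n k : ℕ} (hk : 1 ≤ k)
    (hn : 2 * k + 12 ≤ n) (G : SimpleGraph (Fin n)) (hG : G.Connected)
    (hq : qRad (oneJoinCliquePlusIso' n k) ≤ qRad G) :
    HasSpanningTreeLeafDegLE G k ∨ Nonempty (G ≃g oneJoinCliquePlusIso' n k) :=
  signless_laplacian_spanning_tree_leaf_degree_general hk (by lia)
    (Fintype.card_fin n) G hG hq
end

section
/- Let k ≥ 2 be an integer and let H be a connected graph of order n ≥ max{6k+5, k² + k + 2} that is (n−1)-closed, i.e., every pair of nonadjacent vertices u, v of H satisfies d(u) + d(v) ≤ n − 2. If e(H) ≥ C(n−k−1, 2) + k² + k + 1 and H has no spanning k-ended-tree, then H is isomorphic to K₁ ∨ (K_{n−k−1} + kK₁). -/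
open Finset
open scoped Classical

/-!
A spanning forest of a connected graph extends to a spanning tree without creating leaves, so a path
with at least `n - k + 2` vertices yields a spanning tree with at most `k` leaves. Hence every path
of `H` has at most `n - k` edges.

Let `C` be a maximum clique. Vertices of degree more than `(n - 2) / 2` form a clique, so the many
edges of `H` force `#C` to exceed `n / 3 + k`. By maximality and closedness, vertices outside `C`
have degree at most `n - 1 - #C`, and counting edges again gives `#Cᶜ ≤ k`. A Hamiltonian path of
`C` prolonged by one outside vertex has `#C` edges, so `#C = n - k`, and no path can leave `C` any
further: every outside vertex has exactly one neighbour, the same vertex of `C` for all of them.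
-/

section Paths

variable {V : Type*} {G : SimpleGraph V} {u v : V}

lemma isAcyclic_spanningCoe_toSubgraph_of_isPath {p : G.Walk u v} (hp : p.IsPath) :
    p.toSubgraph.spanningCoe.IsAcyclic := by
  induction p with
  | nil => exact SimpleGraph.isAcyclic_bot.anti fun _ _ h => by simp at h
  | @cons u w v huw p ih =>
    obtain ⟨hp, hu⟩ := SimpleGraph.Walk.cons_isPath_iff _ _ |>.mp hp
    have isolated : p.toSubgraph.spanningCoe.neighborSet u = ∅ :=
      Set.eq_empty_of_forall_notMem fun x hux =>
        hu (p.mem_verts_toSubgraph.mp (p.toSubgraph.edge_vert hux))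
    have not_reachable : ¬ p.toSubgraph.spanningCoe.Reachable u w :=
      SimpleGraph.not_reachable_of_neighborSet_left_eq_empty huw.ne isolated
    have decomposition : (SimpleGraph.Walk.cons huw p).toSubgraph.spanningCoe =
        p.toSubgraph.spanningCoe ⊔ SimpleGraph.edge u w := by
      rw [SimpleGraph.Walk.toSubgraph, SimpleGraph.Subgraph.sup_spanningCoe,
        SimpleGraph.Subgraph.spanningCoe_subgraphOfAdj, sup_comm]
      rfl
    rw [decomposition]
    exact (ih hp).sup_edge_of_not_reachable not_reachable

lemma degree_spanningCoe_toSubgraph_of_isPath {p : G.Walk u v} (hp : p.IsPath) {x : V}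
    [Fintype (p.toSubgraph.spanningCoe.neighborSet x)]
    (hx : x ∈ p.support) (hxu : x ≠ u) (hxv : x ≠ v) :
    p.toSubgraph.spanningCoe.degree x = 2 := by
  obtain ⟨i, rfl, hi⟩ := SimpleGraph.Walk.mem_support_iff_exists_getVert.mp hx
  have hi₀ : i ≠ 0 := fun h => hxu (by simp [h])
  have hi_length : i ≠ p.length := fun h => hxv (by simp [h])
  rw [← SimpleGraph.card_neighborSet_eq_degree, ← Nat.card_eq_fintype_card]
  exact hp.ncard_neighborSet_toSubgraph_internal_eq_two hi₀ (by lia)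

lemma exists_isPath_of_isClique {C : Finset V} (hC : G.IsClique (C : Set V))
    (hu : u ∈ C) (hv : v ∈ C) (huv : u ≠ v) :
    ∃ p : G.Walk u v, p.IsPath ∧ p.length + 1 = #C ∧ ∀ x ∈ p.support, x ∈ C := by
  induction hn : #C generalizing C u with
  | zero => simp_all
  | succ n ih =>
    by_cases hC' : C = {u, v}
    · have hn : n = 1 := by rw [hC', card_pair huv] at hn; lia
      exact ⟨(hC hu hv huv).toWalk, by simp [huv], by simp [hn], by simp [hu, hv]⟩
    obtain ⟨w, hw, hwuv⟩ : ∃ w ∈ C, w ∉ ({u, v} : Finset V) := by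
      by_contra! h
      exact hC' (Subset.antisymm h (by simp [insert_subset_iff, hu, hv]))
    simp only [mem_insert, mem_singleton, not_or] at hwuv
    obtain ⟨p, hp, hlen, hsupp⟩ := ih (C := C.erase u) (hC.subset (by simp))
      (mem_erase.mpr ⟨hwuv.1, hw⟩) (mem_erase.mpr ⟨huv.symm, hv⟩) hwuv.2
      (by rw [card_erase_of_mem hu]; lia)
    exact ⟨.cons (hC hu hw (Ne.symm hwuv.1)) p,
      hp.cons fun h => (mem_erase.mp (hsupp u h)).1 rfl, by simpa using hlen,
      by simpa [hu] using fun x hx => mem_of_mem_erase (hsupp x hx)⟩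

end Paths

section SpanningTrees

variable {V : Type*} [Fintype V] {G : SimpleGraph V} {k : ℕ}

lemma hasSpanningKEndedTree_of_isAcyclic_le (hG : G.Connected) {F : SimpleGraph V} (hFG : F ≤ G)
    (hF : F.IsAcyclic) (hk : #{v | F.degree v ≤ 1} ≤ k) : HasSpanningKEndedTree G k := by
  obtain ⟨T, hFT, hTG, hT⟩ := hG.exists_isTree_le_of_le_of_isAcyclic hFG hF
  refine ⟨T, hTG, hT, (card_le_card ?_).trans hk⟩
  exact monotone_filter_right _ fun v _ hv => (SimpleGraph.degree_le_of_le hFT).trans_eq hv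

lemma hasSpanningKEndedTree_of_isPath (hG : G.Connected) {u v : V} {p : G.Walk u v}
    (hp : p.IsPath) (hk : Fintype.card V + 1 ≤ p.length + k) : HasSpanningKEndedTree G k := by
  refine hasSpanningKEndedTree_of_isAcyclic_le hG p.toSubgraph.spanningCoe_le
    (isAcyclic_spanningCoe_toSubgraph_of_isPath hp) ?_
  have leaves_subset : ({x | p.toSubgraph.spanningCoe.degree x ≤ 1} : Finset V) ⊆
      p.support.toFinsetᶜ ∪ {u, v} := by
    intro x hx
    by_contra! h
    simp only [mem_union, mem_compl, List.mem_toFinset, mem_insert, mem_singleton, not_or,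
      not_not] at h
    rw [mem_filter_univ, degree_spanningCoe_toSubgraph_of_isPath hp h.1 h.2.1 h.2.2] at hx
    lia
  have card_support : #p.support.toFinset = p.length + 1 := by
    rw [List.toFinset_card_of_nodup hp.support_nodup, SimpleGraph.Walk.length_support]
  have := card_add_card_compl p.support.toFinset
  calc #{x | p.toSubgraph.spanningCoe.degree x ≤ 1}
      ≤ #(p.support.toFinsetᶜ ∪ {u, v}) := card_le_card leaves_subset
    _ ≤ #p.support.toFinsetᶜ + 2 := (card_union_le _ _).trans (by grw [card_le_two])
    _ ≤ k := by lia

end SpanningTrees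

section PathsThroughCliques

variable {V : Type*} {G : SimpleGraph V} {C : Finset V} {a a' b c : V}

lemma exists_isPath_of_isClique_of_adj (hC : G.IsClique (C : Set V)) (ha : a ∉ C)
    (hb : b ∈ C) (hc : c ∈ C) (hbc : b ≠ c) (hab : G.Adj a b) :
    ∃ p : G.Walk a c, p.IsPath ∧ p.length = #C ∧ ∀ x ∈ p.support, x ∈ insert a C := by
  obtain ⟨p, hp, hlen, hsupp⟩ := exists_isPath_of_isClique hC hb hc hbc
  exact ⟨.cons hab p, hp.cons fun h => ha (hsupp a h), by simpa using hlen,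
    by simpa using fun x hx => Or.inr (hsupp x hx)⟩

lemma exists_isPath_length_eq_card_of_isClique (hG : G.Connected) (hC : G.IsClique (C : Set V))
    (hC₂ : C.Nontrivial) (ha : a ∉ C) : ∃ u v, ∃ p : G.Walk u v, p.IsPath ∧ p.length = #C := by
  obtain ⟨c, hc⟩ := hC₂.nonempty
  obtain ⟨p⟩ := hG c a
  obtain ⟨⟨⟨b, a'⟩, hba'⟩, -, hb, ha'⟩ := p.exists_boundary_dart C hc ha
  obtain ⟨d, hd, hdb⟩ := hC₂.exists_ne b
  obtain ⟨p, hp, hp_length, -⟩ := exists_isPath_of_isClique_of_adj hC ha' hb hd hdb.symm hba'.symm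
  exact ⟨a', d, p, hp, hp_length⟩

lemma mem_clique_of_adj_of_path_length_le (hC : G.IsClique (C : Set V)) (hC₂ : C.Nontrivial)
    (hlen : ∀ ⦃u v⦄ (p : G.Walk u v), p.IsPath → p.length ≤ #C)
    (ha : a ∉ C) (hb : b ∈ C) (hab : G.Adj a b) (haa' : G.Adj a a') : a' ∈ C := by
  by_contra ha'
  obtain ⟨c, hc, hcb⟩ := hC₂.exists_ne b
  obtain ⟨p, hp, hp_length, hsupp⟩ := exists_isPath_of_isClique_of_adj hC ha hb hc hcb.symm hab
  have ha'_support : a' ∉ p.support := fun h => by simpa [ha', haa'.ne'] using hsupp a' h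
  have := hlen _ (hp.cons (h := haa'.symm) ha'_support)
  simp [hp_length] at this

lemma eq_of_adj_clique_of_path_length_le (hC : G.IsClique (C : Set V))
    (hlen : ∀ ⦃u v⦄ (p : G.Walk u v), p.IsPath → p.length ≤ #C)
    (ha : a ∉ C) (ha' : a' ∉ C) (haa' : a ≠ a') (hb : b ∈ C) (hc : c ∈ C)
    (hab : G.Adj a b) (ha'c : G.Adj a' c) : b = c := by
  by_contra hbc
  obtain ⟨p, hp, hp_length, hsupp⟩ := exists_isPath_of_isClique_of_adj hC ha hb hc hbc hab
  have ha'_support : a' ∉ p.reverse.support := fun h => by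
    simpa [ha', haa'.symm] using hsupp a' (by simpa using h)
  have := hlen _ (hp.reverse.cons (h := ha'c) ha'_support)
  simp [hp_length] at this

lemma exists_adj_clique_of_path_length_le (hG : G.Connected) (hC : G.IsClique (C : Set V))
    (hC₂ : C.Nontrivial) (hlen : ∀ ⦃u v⦄ (p : G.Walk u v), p.IsPath → p.length ≤ #C)
    (ha : a ∉ C) : ∃ b ∈ C, G.Adj a b := by
  by_contra! ha_far
  let far : Set V := {x | x ∉ C ∧ ∀ b ∈ C, ¬ G.Adj x b}
  obtain ⟨c, hc⟩ := hC₂.nonempty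
  obtain ⟨p⟩ := hG a c
  obtain ⟨⟨⟨x, y⟩, hxy⟩, -, ⟨hx, hx_far⟩, hy⟩ :=
    p.exists_boundary_dart far ⟨ha, ha_far⟩ fun h => h.1 hc
  obtain ⟨hyC, b, hb, hyb⟩ : y ∉ C ∧ ∃ b ∈ C, G.Adj y b := by
    have hyC : y ∉ C := fun h => hx_far y h hxy
    exact ⟨hyC, by simpa [far, hyC] using hy⟩
  exact hx (mem_clique_of_adj_of_path_length_le hC hC₂ hlen hyC hb hyb hxy.symm)

lemma exists_forall_adj_iff_of_path_length_le (hG : G.Connected) (hC : G.IsClique (C : Set V))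
    (hC₂ : C.Nontrivial) (hlen : ∀ ⦃u v⦄ (p : G.Walk u v), p.IsPath → p.length ≤ #C)
    (hC_compl : (C : Set V)ᶜ.Nontrivial) :
    ∃ w ∈ C, ∀ a b, G.Adj a b ↔ a ≠ b ∧ (a = w ∨ b = w ∨ (a ∈ C ∧ b ∈ C)) := by
  obtain ⟨a₀, ha₀, a₁, ha₁, ha₀₁⟩ := hC_compl
  obtain ⟨w, hw, ha₀w⟩ := exists_adj_clique_of_path_length_le hG hC hC₂ hlen ha₀
  have adj_w {a : V} (ha : a ∉ C) : G.Adj a w := by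
    obtain ⟨b, hb, hab⟩ := exists_adj_clique_of_path_length_le hG hC hC₂ hlen ha
    by_cases haa₀ : a = a₀
    · rwa [haa₀]
    · rwa [eq_of_adj_clique_of_path_length_le hC hlen ha₀ ha (Ne.symm haa₀) hw hb ha₀w hab]
  have adj_iff {a b : V} (ha : a ∉ C) : G.Adj a b ↔ b = w := by
    refine ⟨fun hab => ?_, fun h => h ▸ adj_w ha⟩
    have hb := mem_clique_of_adj_of_path_length_le hC hC₂ hlen ha hw (adj_w ha) hab
    obtain ⟨a', ha', haa'⟩ : ∃ a' ∉ C, a ≠ a' := by grind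
    exact eq_of_adj_clique_of_path_length_le hC hlen ha ha' haa' hb hw hab (adj_w ha')
  refine ⟨w, hw, fun a b => ?_⟩
  by_cases ha : a ∈ C
  · by_cases hb : b ∈ C
    · simpa [ha, hb] using ⟨SimpleGraph.Adj.ne, hC ha hb⟩
    · rw [G.adj_comm, adj_iff hb]
      grind
  · rw [adj_iff ha]
    grind

end PathsThroughCliques

section Extremal

variable {V : Type*} [Fintype V] {n k : ℕ}

lemma oneJoinCliquePlusIso_adj {i j : Fin n} : (oneJoinCliquePlusIso n k).Adj i j ↔
    i ≠ j ∧ (i.val = 0 ∨ j.val = 0 ∨ (i.val < n - k ∧ j.val < n - k)) := by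
  rw [oneJoinCliquePlusIso, SimpleGraph.fromRel_adj]
  tauto

lemma exists_equiv_fin_lt_card_iff (hV : Fintype.card V = n) (C : Finset V) :
    ∃ e : V ≃ Fin n, ∀ v, (e v).val < #C ↔ v ∈ C := by
  let e := Fintype.equivFinOfCardEq hV
  have card_le : #C ≤ n := hV ▸ card_le_univ C
  have card_eq : Fintype.card {i // e.symm i ∈ C} = Fintype.card {i : Fin n // i.val < #C} := by
    rw [Fintype.card_congr (e.symm.subtypeEquivOfSubtype (p := (· ∈ C))), Fintype.card_coe,
      Fintype.card_subtype, Fin.card_filter_val_lt, min_eq_right card_le]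
  let σ := (Fintype.equivOfCardEq card_eq).extendSubtype
  refine ⟨e.trans σ, fun v => ⟨fun hv => ?_, fun hv => ?_⟩⟩
  · by_contra hvC
    exact Equiv.extendSubtype_not_mem (Fintype.equivOfCardEq card_eq) (e v)
      (by simpa using hvC) hv
  · exact Equiv.extendSubtype_mem (Fintype.equivOfCardEq card_eq) (e v) (by simpa using hv)

lemma exists_equiv_fin_of_mem (hV : Fintype.card V = n) {C : Finset V} {w : V} (hw : w ∈ C) :
    ∃ e : V ≃ Fin n, (∀ v, (e v).val = 0 ↔ v = w) ∧ ∀ v, (e v).val < #C ↔ v ∈ C := by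
  obtain ⟨e, he⟩ := exists_equiv_fin_lt_card_iff hV C
  have hw_lt : (e w).val < #C := (he w).mpr hw
  let zero : Fin n := ⟨0, by have := (e w).isLt; lia⟩
  refine ⟨e.trans (Equiv.swap (e w) zero), fun v => ?_, fun v => ?_⟩
  · rw [← e.injective.eq_iff, Equiv.trans_apply, Equiv.swap_apply_def]
    split_ifs <;> grind
  · rw [← he, Equiv.trans_apply, Equiv.swap_apply_def]
    split_ifs <;> grind

lemma nonempty_iso_oneJoinCliquePlusIso {G : SimpleGraph V} (hV : Fintype.card V = n)
    {C : Finset V} (hC : #C = n - k) {w : V} (hw : w ∈ C)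
    (hG : ∀ a b, G.Adj a b ↔ a ≠ b ∧ (a = w ∨ b = w ∨ (a ∈ C ∧ b ∈ C))) :
    Nonempty (G ≃g oneJoinCliquePlusIso n k) := by
  obtain ⟨e, he_zero, he_lt⟩ := exists_equiv_fin_of_mem hV hw
  refine ⟨e, fun {a b} => ?_⟩
  rw [hG, oneJoinCliquePlusIso_adj, ← hC, he_zero, he_zero, he_lt, he_lt, e.injective.ne_iff]

theorem nonempty_iso_oneJoinCliquePlusIso_of_isClique (hk : 2 ≤ k) (hV : Fintype.card V = n)
    {G : SimpleGraph V} (hG : G.Connected) {C : Finset V} (hC : G.IsClique (C : Set V))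
    (hC₂ : C.Nontrivial) (hC_compl : #Cᶜ ≤ k) (hno : ¬ HasSpanningKEndedTree G k) :
    Nonempty (G ≃g oneJoinCliquePlusIso n k) := by
  have path_length_le : ∀ ⦃u v⦄ (p : G.Walk u v), p.IsPath → p.length + k ≤ n := by
    intro u v p hp
    by_contra! h
    exact hno (hasSpanningKEndedTree_of_isPath hG hp (by lia))
  have card_add_card_compl : #C + #Cᶜ = n := by rw [card_add_card_compl, hV]
  have le_card_compl : k ≤ #Cᶜ := by
    obtain hC_univ | ⟨a, ha⟩ := Cᶜ.eq_empty_or_nonempty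
    · obtain ⟨b, hb, c, hc, hbc⟩ := hC₂
      obtain ⟨p, hp, hp_length, -⟩ := exists_isPath_of_isClique hC hb hc hbc
      have := path_length_le p hp
      rw [hC_univ, card_empty] at card_add_card_compl
      lia
    · obtain ⟨u, v, p, hp, hp_length⟩ :=
        exists_isPath_length_eq_card_of_isClique hG hC hC₂ (mem_compl.mp ha)
      have := path_length_le p hp
      lia
  have compl_nontrivial : (C : Set V)ᶜ.Nontrivial := by
    rw [← coe_compl]
    exact one_lt_card_iff_nontrivial.mp (hk.trans le_card_compl)
  obtain ⟨w, hw, adj_iff⟩ := exists_forall_adj_iff_of_path_length_le hG hC hC₂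
    (fun u v p hp => by have := path_length_le p hp; lia) compl_nontrivial
  exact nonempty_iso_oneJoinCliquePlusIso hV (by lia) hw adj_iff

end Extremal

section Counting

lemma add_le_three_mul_of_choose_two_le {n k s t e : ℕ} (hn : 6 * k + 5 ≤ n)
    (ht : 2 * t + 2 ≤ n) (he : (n - k - 1).choose 2 + k ^ 2 + k + 1 ≤ e)
    (hs : 2 * e ≤ n * t + s * (n - 1 - t)) : n + 3 * k + 2 ≤ 3 * s := by
  by_contra! h
  obtain ⟨r, rfl⟩ : ∃ r, n = t + 1 + r := Nat.exists_eq_add_of_le (by lia)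
  obtain ⟨d, hd⟩ : ∃ d, t + r = k + 1 + d := Nat.exists_eq_add_of_le (by lia)
  have two_mul_choose : 2 * (t + 1 + r - k - 1).choose 2 = (d + 1) * d := by
    rw [show t + 1 + r - k - 1 = d + 1 by lia, Nat.choose_two_right,
      Nat.mul_div_cancel' (Nat.even_mul_pred_self _).two_dvd, Nat.add_sub_cancel]
  have six_mul_le : 6 * e ≤ 3 * (t + 1 + r) * t + (t + r + 3 * k + 2) * r := by
    have : 3 * s * r ≤ (t + r + 3 * k + 2) * r := Nat.mul_le_mul_right _ (by lia)
    rw [show t + 1 + r - 1 - t = r by lia] at hs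
    lia
  obtain hr | hr : r = t + 1 ∨ t + 2 ≤ r := by lia
  · -- Now `n = 2 * t + 2` is even, so `6 * k + 6 ≤ n`.
    subst hr
    obtain ⟨q, rfl⟩ : ∃ q, t = 3 * k + 2 + q := Nat.exists_eq_add_of_le (by lia)
    obtain rfl : d = 5 * k + 4 + 2 * q := by lia
    nlinarith
  · obtain ⟨p, rfl⟩ : ∃ p, r = t + 2 + p := Nat.exists_eq_add_of_le hr
    obtain ⟨q, hq⟩ : ∃ q, 2 * t + p = 6 * k + 2 + q := Nat.exists_eq_add_of_le (by lia)
    obtain rfl : d = 5 * k + 3 + q := by lia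
    nlinarith

/- With `n = s + c`, the two sides are the values at `x = c` and `x = k + 1` of the convex
function `x ↦ C(n - x, 2) + x (x - 1)`. -/
lemma choose_two_add_mul_le {k s c : ℕ} (hkc : k < c) (hsc : c + 3 * k + 2 ≤ 2 * s) :
    s.choose 2 + c * (c - 1) ≤ (s + c - k - 1).choose 2 + k ^ 2 + k := by
  obtain ⟨d, rfl⟩ := Nat.exists_eq_add_of_lt hkc
  rw [show s + (k + d + 1) - k - 1 = s + d by lia, Nat.add_sub_cancel]
  have := Nat.mul_le_mul_left d hsc
  qify at *
  simp only [Nat.cast_choose_two]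
  push_cast
  nlinarith

variable {V : Type*} [Fintype V]

/-- `G` is *`m`-closed*: it equals its Bondy–Chvátal `m`-closure, in which one repeatedly joins
nonadjacent vertices with degree sum at least `m`. -/
def IsDegreeSumClosed (G : SimpleGraph V) (m : ℕ) : Prop :=
  ∀ ⦃u v⦄, u ≠ v → ¬ G.Adj u v → G.degree u + G.degree v < m

variable {G : SimpleGraph V} {m : ℕ}

lemma IsDegreeSumClosed.isClique_setOf_lt_degree (hG : IsDegreeSumClosed G m) {t : ℕ}
    (ht : m ≤ 2 * (t + 1)) : G.IsClique {v | t < G.degree v} := by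
  intro u (hu : t < _) v (hv : t < _) huv
  by_contra h
  have := hG huv h
  lia

lemma IsDegreeSumClosed.degree_add_card_le (hG : IsDegreeSumClosed G m) {C : Finset V}
    (hC : Maximal G.IsClique (C : Set V)) {a : V} (ha : a ∉ C) : G.degree a + #C ≤ m := by
  obtain ⟨u, hu, hau⟩ : ∃ u ∈ C, ¬ G.Adj a u := by
    by_contra! h
    exact ha (hC.le_of_ge (hC.prop.insert fun b hb _ => h b hb) (Set.subset_insert a C)
      (Set.mem_insert a C))
  have card_le_degree : #C - 1 ≤ G.degree u := by
    rw [← card_erase_of_mem hu, ← G.card_neighborFinset_eq_degree]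
    refine card_le_card fun v hv => ?_
    rw [mem_erase] at hv
    exact (G.mem_neighborFinset u v).mpr (hC.prop hu hv.2 hv.1.symm)
  have := hG (ne_of_mem_of_not_mem hu ha).symm hau
  lia

lemma card_edgeFinset_le_choose_two_add_sum_degree (G : SimpleGraph V) (C : Finset V) :
    #G.edgeFinset ≤ (#C).choose 2 + ∑ v ∈ Cᶜ, G.degree v := by
  have edges_subset : G.edgeFinset ⊆
      C.offDiag.image Sym2.mk.uncurry ∪ Cᶜ.biUnion fun v => G.incidenceFinset v := by
    intro e he
    induction e with | _ a b
    have hab : G.Adj a b := by simpa using he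
    by_cases h : a ∈ C ∧ b ∈ C
    · exact mem_union_left _ (mem_image.mpr ⟨(a, b), by simp [h, hab.ne], rfl⟩)
    · refine mem_union_right _ ?_
      obtain ha | hb := not_and_or.mp h
      · exact mem_biUnion.mpr ⟨a, mem_compl.mpr ha, by simpa [SimpleGraph.incidenceSet] using hab⟩
      · exact mem_biUnion.mpr ⟨b, mem_compl.mpr hb, by simpa [SimpleGraph.incidenceSet] using hab⟩
  calc #G.edgeFinset
      ≤ #(C.offDiag.image Sym2.mk.uncurry) + #(Cᶜ.biUnion fun v => G.incidenceFinset v) :=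
        (card_le_card edges_subset).trans (card_union_le _ _)
    _ ≤ (#C).choose 2 + ∑ v ∈ Cᶜ, G.degree v := by
        rw [Sym2.card_image_offDiag]
        gcongr
        exact card_biUnion_le.trans_eq (sum_congr rfl fun v _ => G.card_incidenceFinset_eq_degree v)

lemma two_mul_card_edgeFinset_le (G : SimpleGraph V) (t : ℕ) :
    2 * #G.edgeFinset ≤
      Fintype.card V * t + #{v | t < G.degree v} * (Fintype.card V - 1 - t) := by
  have degree_le (v : V) :
      G.degree v ≤ t + if t < G.degree v then Fintype.card V - 1 - t else 0 := by
    have := G.degree_lt_card_verts v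
    split_ifs <;> lia
  calc 2 * #G.edgeFinset
      = ∑ v, G.degree v := G.sum_degrees_eq_twice_card_edges.symm
    _ ≤ ∑ v, (t + if t < G.degree v then Fintype.card V - 1 - t else 0) :=
        sum_le_sum fun v _ => degree_le v
    _ = Fintype.card V * t + #{v | t < G.degree v} * (Fintype.card V - 1 - t) := by
        rw [sum_add_distrib, ← sum_filter]
        simp

theorem IsDegreeSumClosed.card_compl_le {k : ℕ} (hG : IsDegreeSumClosed G (Fintype.card V - 1))
    (hn : 6 * k + 5 ≤ Fintype.card V)
    (he : (Fintype.card V - k - 1).choose 2 + k ^ 2 + k + 1 ≤ #G.edgeFinset)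
    {C : Finset V} (hC : G.IsMaximumClique C) : #Cᶜ ≤ k := by
  set n := Fintype.card V
  set t := (n - 2) / 2
  have card_lt_degree_le : #{v | t < G.degree v} ≤ #C := by
    refine hC.maximum _ ?_
    rw [coe_filter_univ]
    exact hG.isClique_setOf_lt_degree (by lia)
  have le_three_mul_card : n + 3 * k + 2 ≤ 3 * #C :=
    add_le_three_mul_of_choose_two_le (t := t) hn (by lia) he
      ((two_mul_card_edgeFinset_le G t).trans (by gcongr _ + ?_ * _))
  have card_add_card_compl : #C + #Cᶜ = n := card_add_card_compl C
  by_contra! hk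
  have sum_degree_le : ∑ v ∈ Cᶜ, G.degree v ≤ #Cᶜ * (#Cᶜ - 1) := by
    refine sum_le_card_nsmul _ _ _ fun v hv => ?_
    have := hG.degree_add_card_le hC.isMaximalClique (mem_compl.mp hv)
    lia
  have edges_le : #G.edgeFinset ≤ (n - k - 1).choose 2 + k ^ 2 + k :=
    calc #G.edgeFinset
        ≤ (#C).choose 2 + ∑ v ∈ Cᶜ, G.degree v := card_edgeFinset_le_choose_two_add_sum_degree G C
      _ ≤ (#C).choose 2 + #Cᶜ * (#Cᶜ - 1) := by gcongr
      _ ≤ (#C + #Cᶜ - k - 1).choose 2 + k ^ 2 + k := choose_two_add_mul_le hk (by lia)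
      _ = (n - k - 1).choose 2 + k ^ 2 + k := by rw [card_add_card_compl]
  lia

end Counting

theorem closed_graph_no_spanning_tree_structure_general {V : Type*} [Fintype V] {n k : ℕ}
    (hk : 2 ≤ k) (hn : 6 * k + 5 ≤ n) (hV : Fintype.card V = n) (H : SimpleGraph V)
    (hH : H.Connected) (hclosed : IsDegreeSumClosed H (n - 1))
    (he : (n - k - 1).choose 2 + k ^ 2 + k + 1 ≤ #H.edgeFinset)
    (hno : ¬ HasSpanningKEndedTree H k) : Nonempty (H ≃g oneJoinCliquePlusIso n k) := by
  subst hV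
  obtain ⟨C, hC⟩ := H.maximumClique_exists
  have card_compl_le : #Cᶜ ≤ k := hclosed.card_compl_le hn he hC
  have nontrivial : C.Nontrivial := by
    have := card_add_card_compl C
    exact one_lt_card_iff_nontrivial.mp (by lia)
  exact nonempty_iso_oneJoinCliquePlusIso_of_isClique hk rfl hH hC.isClique nontrivial
    card_compl_le hno

/-- **Lemma (structure of `(n-1)`-closed graphs with many edges and no spanning
`k`-ended-tree).**  Let `k ≥ 2` and let `H` be a connected `(n-1)`-closed graph
of order `n ≥ max {6k+5, k² + k + 2}` (i.e. every pair of distinct nonadjacent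
vertices has degree sum at most `n - 2`).  If `e(H) ≥ C(n-k-1, 2) + k² + k + 1`
and `H` has no spanning `k`-ended-tree, then `H ≅ K₁ ∨ (K_{n-k-1} + kK₁)`. -/
theorem closed_graph_no_spanning_tree_structure {n k : ℕ} (hk : 2 ≤ k)
    (hn1 : 6 * k + 5 ≤ n) (hn2 : k ^ 2 + k + 2 ≤ n)
    (H : SimpleGraph (Fin n)) (hH : H.Connected)
    (hclosed : ∀ u v : Fin n, u ≠ v → ¬ H.Adj u v →
      (H.degree u : ℤ) + (H.degree v : ℤ) ≤ (n : ℤ) - 2)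
    (he : Nat.choose (n - k - 1) 2 + k ^ 2 + k + 1 ≤ H.edgeFinset.card)
    (hno : ¬ HasSpanningKEndedTree H k) :
    Nonempty (H ≃g oneJoinCliquePlusIso n k) := by
  refine closed_graph_no_spanning_tree_structure_general hk hn1 (Fintype.card_fin n) H hH
    (fun u v huv h => ?_) (by convert he) hno
  have := hclosed u v huv h
  lia
end

section
/- Let k ≥ 2 be an integer and let G be a connected graph of order n. If d(u) + d(v) ≥ n − k + 1 for every two nonadjacent vertices u and v of G, then G has a spanning k-ended-tree. -/
/-!
Choose a spanning tree `T` with the fewest leaves and suppose it has at least three. Exchanging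
edges along a fundamental cycle shows that the leaves of `T` are pairwise nonadjacent in `G`:
adding an edge between two leaves and deleting a cycle edge at a branch vertex would lose a leaf.

Now root `T` at a leaf `u` and, for a neighbour `w` of `u` in `G`, replace the edge from `w` to its
parent `w⁻` by `uw`. If `w⁻ ≠ u`, minimality forces `w⁻` to have degree 2 in `T` and to replace `u`
as a leaf of another minimal tree, so `w⁻` is adjacent in `G` to no other leaf. Hence `w ↦ w⁻` is
injective on `N(u)`, and for a second leaf `v` the sets `N(u)⁻`, `N(v)` and the leaves other than
`u` are disjoint, which gives `d(u) + d(v) + #leaves ≤ n + 1`.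
-/

open Finset
open scoped Classical

section EdgeExchange

variable {V : Type*} {G T : SimpleGraph V} {u w z : V}

lemma subsingleton_neighborSet_of_degree_le_one [Fintype (G.neighborSet z)]
    (hz : G.degree z ≤ 1) : (G.neighborSet z).Subsingleton := by
  intro a ha b hb
  exact Finset.card_le_one.1 hz a (by simpa using ha) b (by simpa using hb)

lemma degree_lt_degree_of_le_of_adj_of_not_adj {H : SimpleGraph V} [Fintype (G.neighborSet u)]
    [Fintype (H.neighborSet u)] (hle : G ≤ H) (hH : H.Adj u w) (hG : ¬ G.Adj u w) :
    G.degree u < H.degree u := by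
  refine Finset.card_lt_card ((Finset.ssubset_iff_of_subset fun z hz => ?_).2 ⟨w, ?_, ?_⟩)
  · simpa using hle (by simpa using hz)
  · simpa using hH
  · simpa using hG

lemma degree_lt_degree_sup_edge_left [Fintype (G.neighborSet u)]
    [Fintype ((G ⊔ SimpleGraph.edge u w).neighborSet u)] (hne : u ≠ w) (hadj : ¬ G.Adj u w) :
    G.degree u < (G ⊔ SimpleGraph.edge u w).degree u :=
  degree_lt_degree_of_le_of_adj_of_not_adj le_sup_left (by simp [SimpleGraph.edge_adj, hne]) hadj

lemma degree_lt_degree_sup_edge_right [Fintype (G.neighborSet w)]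
    [Fintype ((G ⊔ SimpleGraph.edge u w).neighborSet w)] (hne : u ≠ w) (hadj : ¬ G.Adj u w) :
    G.degree w < (G ⊔ SimpleGraph.edge u w).degree w :=
  degree_lt_degree_of_le_of_adj_of_not_adj le_sup_left
    (by simp [SimpleGraph.edge_adj, hne.symm]) (mt SimpleGraph.Adj.symm hadj)

lemma degree_deleteEdges_singleton_of_notMem {e : Sym2 V} [Fintype (G.neighborSet z)]
    [Fintype ((G.deleteEdges {e}).neighborSet z)] (hz : z ∉ e) :
    (G.deleteEdges {e}).degree z = G.degree z := by
  refine congrArg Finset.card (Finset.ext fun a => ?_)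
  have hza : s(z, a) ≠ e := fun h => hz (h ▸ Sym2.mem_mk_left z a)
  simp [SimpleGraph.deleteEdges_adj, hza]

lemma degree_le_degree_deleteEdges_singleton_add_one (e : Sym2 V) [Fintype (G.neighborSet z)]
    [Fintype ((G.deleteEdges {e}).neighborSet z)] :
    G.degree z ≤ (G.deleteEdges {e}).degree z + 1 := by
  by_cases hz : z ∈ e
  · obtain ⟨y, rfl⟩ := Sym2.mem_iff_exists.1 hz
    refine (Finset.card_le_card fun a ha => ?_).trans (Finset.card_insert_le y _)
    simp only [SimpleGraph.mem_neighborFinset, mem_insert, SimpleGraph.deleteEdges_adj,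
      Set.mem_singleton_iff, Sym2.congr_right] at ha ⊢
    tauto
  · exact (degree_deleteEdges_singleton_of_notMem hz).ge.trans (Nat.le_succ _)

lemma exists_isCycle_sup_edge (hne : u ≠ w) (hadj : ¬ T.Adj u w) {p : T.Walk w u}
    (hp : p.IsPath) :
    ∃ c : (T ⊔ SimpleGraph.edge u w).Walk u u, c.IsCycle ∧ p.edges ⊆ c.edges := by
  have huw : (T ⊔ SimpleGraph.edge u w).Adj u w := by simp [SimpleGraph.edge_adj, hne]
  refine ⟨.cons huw (p.mapLe le_sup_left), ?_, by simp⟩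
  rw [SimpleGraph.Walk.cons_isCycle_iff, SimpleGraph.Walk.edges_mapLe_eq_edges]
  exact ⟨by simpa using hp, fun h => hadj (p.adj_of_mem_edges h)⟩

lemma isTree_sup_edge_deleteEdges [Finite V] (hT : T.IsTree) (hne : u ≠ w)
    (hadj : ¬ T.Adj u w) {c : (T ⊔ SimpleGraph.edge u w).Walk z z} (hc : c.IsCycle)
    {e : Sym2 V} (he : e ∈ c.edges) :
    ((T ⊔ SimpleGraph.edge u w).deleteEdges {e}).IsTree := by
  have hcard := (SimpleGraph.isTree_iff_connected_and_card.1 hT).2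
  refine SimpleGraph.isTree_iff_connected_and_card.2 ⟨?_, ?_⟩
  · induction e with | h x y =>
    exact (hT.1.mono le_sup_left).connected_delete_edge_of_not_isBridge
      fun h => h.notMem_edges_of_isCycle hc he
  · have hedges : (T ⊔ SimpleGraph.edge u w).edgeSet = insert s(u, w) T.edgeSet := by
      rw [SimpleGraph.edgeSet_sup, SimpleGraph.edgeSet_edge_of_ne hne, Set.union_singleton]
    rw [Nat.card_coe_set_eq] at hcard ⊢
    rw [SimpleGraph.edgeSet_deleteEdges, Set.ncard_sdiff_singleton_add_one
      (c.edges_subset_edgeSet he), hedges, Set.ncard_insert_of_notMem (by simpa using hadj), hcard]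

lemma exists_mem_edges_three_le_degree_of_isCycle [G.LocallyFinite] (hG : G.Connected)
    {c : G.Walk u u} (hc : c.IsCycle) (hz : z ∉ c.support) :
    ∃ x y, s(x, y) ∈ c.edges ∧ 3 ≤ G.degree x := by
  obtain ⟨q⟩ := hG.preconnected u z
  obtain ⟨d, -, hfst, hsnd⟩ := q.exists_boundary_dart {x | x ∈ c.support} (by simp) hz
  have hcard := hc.ncard_neighborSet_toSubgraph_eq_two hfst
  obtain ⟨y, hy⟩ : (c.toSubgraph.neighborSet d.fst).Nonempty :=
    Set.nonempty_of_ncard_ne_zero (by omega)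
  refine ⟨d.fst, y, SimpleGraph.Walk.adj_toSubgraph_iff_mem_edges.1 hy, ?_⟩
  have hnotMem : d.snd ∉ c.toSubgraph.neighborSet d.fst := fun h =>
    hsnd (SimpleGraph.Walk.mem_support_of_adj_toSubgraph h.symm)
  have hsub : insert d.snd (c.toSubgraph.neighborSet d.fst) ⊆ G.neighborFinset d.fst := by
    rw [SimpleGraph.coe_neighborFinset]
    exact Set.insert_subset d.adj (c.toSubgraph.neighborSet_subset d.fst)
  calc 3 = (insert d.snd (c.toSubgraph.neighborSet d.fst)).ncard := by
        rw [Set.ncard_insert_of_notMem hnotMem (Set.finite_of_ncard_ne_zero (by omega)), hcard]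
    _ ≤ (G.neighborFinset d.fst : Set V).ncard := Set.ncard_le_ncard hsub
    _ = G.degree d.fst := Set.ncard_coe_finset _

end EdgeExchange

section Parent

variable {V : Type*} {T : SimpleGraph V} (hT : T.Connected) {u w : V}

/-- The parent `w⁻` of `w` when `T` is rooted at `u`: the vertex following `w` on a shortest walk
from `w` to `u`. The root is its own parent. -/
noncomputable def parent (u w : V) : V :=
  (hT.exists_walk_length_eq_dist w u).choose.snd

lemma adj_parent (hw : w ≠ u) : T.Adj w (parent hT u w) :=
  SimpleGraph.Walk.adj_snd (SimpleGraph.Walk.not_nil_of_ne hw)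

lemma exists_isPath_mem_edges_parent (hw : w ≠ u) :
    ∃ p : T.Walk w u, p.IsPath ∧ s(w, parent hT u w) ∈ p.edges := by
  have hp := (hT.exists_walk_length_eq_dist w u).choose_spec
  exact ⟨_, SimpleGraph.Walk.isPath_of_length_eq_dist _ hp,
    SimpleGraph.Walk.mk_start_snd_mem_edges (SimpleGraph.Walk.not_nil_of_ne hw)⟩

lemma dist_parent_add_one (hw : w ≠ u) :
    T.dist (parent hT u w) u + 1 = T.dist w u := by
  have hp := (hT.exists_walk_length_eq_dist w u).choose_spec
  set p := (hT.exists_walk_length_eq_dist w u).choose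
  refine le_antisymm ?_ ?_
  · calc T.dist p.snd u + 1 ≤ p.tail.length + 1 := by gcongr; exact SimpleGraph.dist_le _
      _ = T.dist w u := by
        rw [SimpleGraph.Walk.length_tail_add_one (SimpleGraph.Walk.not_nil_of_ne hw), hp]
  · calc T.dist w u ≤ T.dist w (parent hT u w) + T.dist (parent hT u w) u := hT.dist_triangle
      _ = T.dist (parent hT u w) u + 1 := by
        rw [SimpleGraph.dist_eq_one_iff_adj.2 (adj_parent hT hw), add_comm]

lemma parent_eq_of_adj (hw : T.Adj w u) : parent hT u w = u := by
  have hdist := dist_parent_add_one hT hw.ne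
  rw [SimpleGraph.dist_eq_one_iff_adj.2 hw, Nat.add_eq_right] at hdist
  exact hT.dist_eq_zero_iff.1 hdist

lemma injOn_parent [T.LocallyFinite] {s : Set V} (hu : u ∉ s) (hroot : T.degree u ≤ 1)
    (hs : ∀ w ∈ s, parent hT u w ≠ u → T.degree (parent hT u w) ≤ 2) :
    s.InjOn (parent hT u) := by
  intro a ha b hb hab
  have hau : a ≠ u := ne_of_mem_of_not_mem ha hu
  have hbu : b ≠ u := ne_of_mem_of_not_mem hb hu
  have hadj_a : T.Adj (parent hT u a) a := (adj_parent hT hau).symm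
  have hadj_b : T.Adj (parent hT u a) b := hab ▸ (adj_parent hT hbu).symm
  by_cases hroot_eq : parent hT u a = u
  · rw [hroot_eq] at hadj_a hadj_b
    exact subsingleton_neighborSet_of_degree_le_one hroot hadj_a hadj_b
  by_contra hne
  have hdist_a := dist_parent_add_one hT hau
  have hdist_b := hab ▸ dist_parent_add_one hT hbu
  have hdist := dist_parent_add_one hT hroot_eq
  have ha' : parent hT u (parent hT u a) ≠ a := by rintro h; rw [h] at hdist; omega
  have hb' : parent hT u (parent hT u a) ≠ b := by rintro h; rw [h] at hdist; omega
  have hthree : 2 < T.degree (parent hT u a) := Finset.two_lt_card.2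
    ⟨a, by simpa, b, by simpa, _, by simpa using adj_parent hT hroot_eq, hne, ha'.symm, hb'.symm⟩
  exact hthree.not_ge (hs a ha hroot_eq)

end Parent

section Leaves

variable {V : Type*} [Fintype V] {G T : SimpleGraph V} {u v w x y z : V}

/-- The leaves of `T`: its vertices of degree one. -/
noncomputable def leaves (T : SimpleGraph V) : Finset V :=
  univ.filter fun v => T.degree v = 1

lemma mem_leaves [Fintype (T.neighborSet v)] : v ∈ leaves T ↔ T.degree v = 1 := by
  simp only [leaves, mem_filter_univ]
  congr!

lemma subsingleton_neighborSet_of_mem_leaves (hv : v ∈ leaves T) :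
    (T.neighborSet v).Subsingleton :=
  subsingleton_neighborSet_of_degree_le_one (mem_leaves.1 hv).le

lemma leaves_sup_edge_subset (hT : ∀ v, 0 < T.degree v) (hne : u ≠ w) (hadj : ¬ T.Adj u w) :
    leaves (T ⊔ SimpleGraph.edge u w) ⊆ leaves T \ {u, w} := by
  intro z hz
  rw [mem_leaves] at hz
  have hpos := hT z
  have hle : T.degree z ≤ (T ⊔ SimpleGraph.edge u w).degree z :=
    SimpleGraph.degree_le_of_le le_sup_left
  simp only [mem_sdiff, mem_leaves, mem_insert, mem_singleton]
  refine ⟨by omega, ?_⟩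
  rintro (rfl | rfl)
  · have hlt := degree_lt_degree_sup_edge_left hne hadj
    omega
  · have hlt := degree_lt_degree_sup_edge_right hne hadj
    omega

lemma leaves_deleteEdges_subset [Fintype (G.neighborSet x)] (hx : 3 ≤ G.degree x) :
    leaves (G.deleteEdges {s(x, y)}) ⊆ insert y (leaves G) := by
  intro z hz
  rw [mem_leaves] at hz
  rw [mem_insert, mem_leaves]
  refine or_iff_not_imp_left.2 fun hzy => ?_
  have hzx : z ≠ x := by
    rintro rfl
    have hle := degree_le_degree_deleteEdges_singleton_add_one (G := G) (z := z) s(z, y)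
    omega
  rwa [degree_deleteEdges_singleton_of_notMem (by simp [hzx, hzy])] at hz

lemma not_adj_of_mem_leaves (hT : T.Connected) (hu : u ∈ leaves T) (hv : v ∈ leaves T)
    (hzu : z ≠ u) (hzv : z ≠ v) : ¬ T.Adj u v := by
  intro huv
  obtain ⟨p, hp⟩ := hT.exists_isPath u z
  have hsnd : p.snd = v := subsingleton_neighborSet_of_mem_leaves hu
    (p.adj_snd (SimpleGraph.Walk.not_nil_of_ne hzu.symm)) huv
  exact hp.isTrail.not_mem_support_of_subsingleton_neighborSet huv.ne.symm hzv.symm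
    (subsingleton_neighborSet_of_mem_leaves hv) (hsnd ▸ p.getVert_mem_support 1)

/-- `T` is a spanning tree of `G` with the fewest leaves. -/
structure IsMinLeafSpanningTree (G T : SimpleGraph V) : Prop where
  le : T ≤ G
  isTree : T.IsTree
  card_leaves_le : ∀ T' ≤ G, T'.IsTree → #(leaves T) ≤ #(leaves T')

lemma exists_isMinLeafSpanningTree (hG : G.Connected) : ∃ T, IsMinLeafSpanningTree G T := by
  obtain ⟨T, ⟨hle, hT⟩, hmin⟩ := Set.exists_min_image {T | T ≤ G ∧ T.IsTree}
    (fun T => #(leaves T)) (Set.toFinite _) hG.exists_isTree_le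
  exact ⟨T, hle, hT, fun T' hle' hT' => hmin T' ⟨hle', hT'⟩⟩

namespace IsMinLeafSpanningTree

lemma degree_pos (h : IsMinLeafSpanningTree G T) (huw : G.Adj u w) (z : V) : 0 < T.degree z :=
  have : Nontrivial V := ⟨u, w, huw.ne⟩
  h.isTree.1.preconnected.degree_pos_of_nontrivial z

lemma sup_edge_deleteEdges_le (h : IsMinLeafSpanningTree G T) (huw : G.Adj u w)
    (s : Set (Sym2 V)) : (T ⊔ SimpleGraph.edge u w).deleteEdges s ≤ G :=
  (SimpleGraph.deleteEdges_le s).trans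
    (sup_le h.le ((SimpleGraph.edge_le_iff _).2 (.inr huw)))

lemma leaves_exchange_subset (h : IsMinLeafSpanningTree G T) (huw : G.Adj u w)
    (hadj : ¬ T.Adj u w) [Fintype ((T ⊔ SimpleGraph.edge u w).neighborSet x)]
    (hx : 3 ≤ (T ⊔ SimpleGraph.edge u w).degree x) :
    leaves ((T ⊔ SimpleGraph.edge u w).deleteEdges {s(x, y)}) ⊆
      insert y (leaves T \ {u, w}) :=
  (leaves_deleteEdges_subset hx).trans
    (insert_subset_insert y (leaves_sup_edge_subset (h.degree_pos huw) huw.ne hadj))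

lemma isIndepSet_leaves (h : IsMinLeafSpanningTree G T) (hthree : 3 ≤ #(leaves T)) :
    G.IsIndepSet (leaves T) := by
  intro u hu v hv hne huv
  have hpair : ({u, v} : Finset V) ⊆ leaves T := by
    simpa [insert_subset_iff] using And.intro hu hv
  obtain ⟨z, hz, hzuv⟩ := exists_mem_notMem_of_card_lt_card
    (card_le_two.trans_lt hthree : #{u, v} < #(leaves T))
  have hzu : z ≠ u := by rintro rfl; simp at hzuv
  have hzv : z ≠ v := by rintro rfl; simp at hzuv
  have hadj : ¬ T.Adj u v := not_adj_of_mem_leaves h.isTree.1 hu hv hzu hzv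
  obtain ⟨p, hp⟩ := h.isTree.1.exists_isPath v u
  obtain ⟨c, hc, -⟩ := exists_isCycle_sup_edge hne hadj hp
  have hz_nbr : ((T ⊔ SimpleGraph.edge u v).neighborSet z).Subsingleton := by
    refine (subsingleton_neighborSet_of_mem_leaves hz).anti fun a ha => ?_
    simpa [SimpleGraph.edge_adj, hzu, hzv] using ha
  have hzc : z ∉ c.support :=
    hc.isTrail.not_mem_support_of_subsingleton_neighborSet hzu hzu hz_nbr
  obtain ⟨x, y, hxy, hx⟩ := exists_mem_edges_three_le_degree_of_isCycle
    (h.isTree.1.mono le_sup_left) hc hzc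
  have hmin := h.card_leaves_le _ (h.sup_edge_deleteEdges_le huv {s(x, y)})
    (isTree_sup_edge_deleteEdges h.isTree hne hadj hc hxy)
  have hfewer : #(leaves ((T ⊔ SimpleGraph.edge u v).deleteEdges {s(x, y)})) ≤
      #(leaves T) - 2 + 1 := by
    rw [← card_pair hne, ← card_sdiff_of_subset hpair]
    exact (card_le_card (h.leaves_exchange_subset huv hadj hx)).trans (card_insert_le y _)
  omega

lemma of_leaves_subset_insert_erase {T' : SimpleGraph V} (h : IsMinLeafSpanningTree G T)
    (hu : u ∈ leaves T) (hle : T' ≤ G) (hT' : T'.IsTree)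
    (hsub : leaves T' ⊆ insert x ((leaves T).erase u)) :
    IsMinLeafSpanningTree G T' ∧ leaves T' = insert x ((leaves T).erase u) ∧
      x ∉ (leaves T).erase u := by
  have hmin : #(leaves T) ≤ #(leaves T') := h.card_leaves_le T' hle hT'
  have herase : #((leaves T).erase u) + 1 = #(leaves T) := card_erase_add_one hu
  have hinsert : #(insert x ((leaves T).erase u)) ≤ #(leaves T) :=
    (card_insert_le _ _).trans herase.le
  refine ⟨⟨hle, hT', fun S hS hS' => ?_⟩,
    eq_of_subset_of_card_le hsub (hinsert.trans hmin), fun hx => ?_⟩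
  · exact ((card_le_card hsub).trans hinsert).trans (h.card_leaves_le S hS hS')
  · rw [insert_eq_of_mem hx] at hsub
    have hcard := card_le_card hsub
    omega

lemma exists_leaves_eq_insert_erase (h : IsMinLeafSpanningTree G T) (hthree : 3 ≤ #(leaves T))
    (hu : u ∈ leaves T) (huw : G.Adj u w) (hadj : ¬ T.Adj u w) {p : T.Walk w u}
    (hp : p.IsPath) (hx : s(w, x) ∈ p.edges) :
    ∃ T', IsMinLeafSpanningTree G T' ∧ leaves T' = insert x ((leaves T).erase u) ∧
      x ∉ (leaves T).erase u ∧ T.degree x ≤ 2 := by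
  obtain ⟨c, hc, hpc⟩ := exists_isCycle_sup_edge huw.ne hadj hp
  have htree := isTree_sup_edge_deleteEdges h.isTree huw.ne hadj hc (hpc hx)
  have hw : 3 ≤ (T ⊔ SimpleGraph.edge u w).degree w := by
    have hw_leaf : T.degree w ≠ 1 := fun hw =>
      h.isIndepSet_leaves hthree hu (mem_leaves.2 hw) huw.ne huw
    have hpos := h.degree_pos huw w
    have hlt := degree_lt_degree_sup_edge_right huw.ne hadj
    omega
  have hsub : leaves ((T ⊔ SimpleGraph.edge u w).deleteEdges {s(w, x)}) ⊆
      insert x ((leaves T).erase u) :=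
    (h.leaves_exchange_subset huw hadj hw).trans <| insert_subset_insert x <| by
      rw [erase_eq]
      exact sdiff_subset_sdiff subset_rfl (by simp)
  obtain ⟨hmin, hleaves, hnotMem⟩ :=
    h.of_leaves_subset_insert_erase hu (h.sup_edge_deleteEdges_le huw _) htree hsub
  refine ⟨_, hmin, hleaves, hnotMem, ?_⟩
  have hx_leaf := mem_leaves.1 (hleaves.ge (mem_insert_self x _))
  calc T.degree x ≤ (T ⊔ SimpleGraph.edge u w).degree x :=
        SimpleGraph.degree_le_of_le le_sup_left
    _ ≤ ((T ⊔ SimpleGraph.edge u w).deleteEdges {s(w, x)}).degree x + 1 :=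
        degree_le_degree_deleteEdges_singleton_add_one _
    _ = 2 := by rw [hx_leaf]

lemma parent_spec_of_adj_leaf (h : IsMinLeafSpanningTree G T) (hthree : 3 ≤ #(leaves T))
    (hu : u ∈ leaves T) (huw : G.Adj u w) :
    parent h.isTree.1 u w ∉ (leaves T).erase u ∧
      (∀ v ∈ (leaves T).erase u, ¬ G.Adj v (parent h.isTree.1 u w)) ∧
      (parent h.isTree.1 u w ≠ u → T.degree (parent h.isTree.1 u w) ≤ 2) := by
  by_cases hadj : T.Adj u w
  · rw [parent_eq_of_adj _ hadj.symm]
    refine ⟨notMem_erase u _, fun v hv => ?_, fun hne => absurd rfl hne⟩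
    exact h.isIndepSet_leaves hthree (mem_of_mem_erase hv) hu (ne_of_mem_erase hv)
  · obtain ⟨p, hp, hmem⟩ := exists_isPath_mem_edges_parent h.isTree.1 huw.ne.symm
    obtain ⟨T', h', hleaves, hnotMem, hdeg⟩ :=
      h.exists_leaves_eq_insert_erase hthree hu huw hadj hp hmem
    have hthree' : 3 ≤ #(leaves T') := hthree.trans (h.card_leaves_le T' h'.le h'.isTree)
    refine ⟨hnotMem, fun v hv => ?_, fun _ => hdeg⟩
    have hindep := h'.isIndepSet_leaves hthree'
    rw [hleaves] at hindep
    exact hindep (mem_insert_of_mem hv) (mem_insert_self _ _) (ne_of_mem_of_not_mem hv hnotMem)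

lemma degree_add_degree_add_card_leaves_le (h : IsMinLeafSpanningTree G T)
    (hthree : 3 ≤ #(leaves T)) (hu : u ∈ leaves T) (hv : v ∈ leaves T) (hne : u ≠ v) :
    G.degree u + G.degree v + #(leaves T) ≤ Fintype.card V + 1 := by
  set P := (G.neighborFinset u).image (parent h.isTree.1 u)
  have hparent : ∀ w ∈ G.neighborFinset u, _ := fun w hw =>
    h.parent_spec_of_adj_leaf hthree hu ((G.mem_neighborFinset u w).1 hw)
  have hP : #P = G.degree u := card_image_of_injOn <|
    injOn_parent _ (by simp) (mem_leaves.1 hu).le fun w hw => (hparent w hw).2.2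
  have hP_nbr : Disjoint P (G.neighborFinset v) := by
    rw [disjoint_left, forall_mem_image]
    intro w hw hvw
    exact (hparent w hw).2.1 v (mem_erase.2 ⟨hne.symm, hv⟩) (by simpa using hvw)
  have hP_leaves : Disjoint P ((leaves T).erase u) := by
    rw [disjoint_left, forall_mem_image]
    exact fun w hw => (hparent w hw).1
  have hnbr_leaves : Disjoint (G.neighborFinset v) ((leaves T).erase u) := by
    rw [disjoint_left]
    intro w hw hw_leaf
    rw [SimpleGraph.mem_neighborFinset] at hw
    exact h.isIndepSet_leaves hthree hv (mem_of_mem_erase hw_leaf) hw.ne hw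
  have herase : #((leaves T).erase u) + 1 = #(leaves T) := card_erase_add_one hu
  calc G.degree u + G.degree v + #(leaves T)
      = #(P ∪ G.neighborFinset v ∪ (leaves T).erase u) + 1 := by
        rw [card_union_of_disjoint (disjoint_union_left.2 ⟨hP_leaves, hnbr_leaves⟩),
          card_union_of_disjoint hP_nbr, hP, G.card_neighborFinset_eq_degree, add_assoc _ _ 1,
          herase]
    _ ≤ Fintype.card V + 1 := by gcongr; exact card_le_univ _

end IsMinLeafSpanningTree

end Leaves

theorem degree_sum_spanning_k_ended_tree_general {V : Type*} [Fintype V] {k : ℕ} (hk : 2 ≤ k)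
    (G : SimpleGraph V) (hG : G.Connected)
    (hdeg : ∀ u v : V, u ≠ v → ¬ G.Adj u v →
      Fintype.card V + 1 ≤ G.degree u + G.degree v + k) :
    HasSpanningKEndedTree G k := by
  obtain ⟨T, hT⟩ := exists_isMinLeafSpanningTree hG
  refine ⟨T, hT.le, hT.isTree, ?_⟩
  change #(leaves T) ≤ k
  by_contra! hlt
  have hthree : 3 ≤ #(leaves T) := by omega
  obtain ⟨u, hu, v, hv, hne⟩ := one_lt_card.1 (show 1 < #(leaves T) by omega)
  have hle := hT.degree_add_degree_add_card_leaves_le hthree hu hv hne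
  have hge := hdeg u v hne (hT.isIndepSet_leaves hthree hu hv hne)
  omega

/-- **Theorem (Broersma–Tuinstra).**  Let `k ≥ 2` and let `G` be a connected
graph of order `n`.  If `d(u) + d(v) ≥ n - k + 1` for every two distinct
nonadjacent vertices `u` and `v`, then `G` has a spanning `k`-ended-tree. -/
theorem degree_sum_spanning_k_ended_tree {n k : ℕ} (hk : 2 ≤ k)
    (G : SimpleGraph (Fin n)) (hG : G.Connected)
    (hdeg : ∀ u v : Fin n, u ≠ v → ¬ G.Adj u v →
      (n : ℤ) - (k : ℤ) + 1 ≤ (G.degree u : ℤ) + (G.degree v : ℤ)) :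
    HasSpanningKEndedTree G k := by
  refine degree_sum_spanning_k_ended_tree_general hk G hG fun u v hne hadj => ?_
  have hsum := hdeg u v hne hadj
  rw [Fintype.card_fin]
  omega
end
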